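/- arXiv:1208.5225 — 3 statements merged into one kernel-verified Lean document; each statement's English description precedes it below -/
import Mathlib

section
/- Suppose the GI/G/1-type Markov chain is irreducible, aperiodic and positive recurrent with stationary distribution π, and the phase matrix A is stochastic. Then the chain is geometrically ergodic if and only if min(φ_{A+}, φ_{B+}) > 1, equivalently, if and only if both matrix sequences {A_k}_{k≥1} and {B_k}_{k≥1} are light-tailed. -/
open Filter Topology
open scoped ENNReal NNReal BigOperators

namespace GIG1

/-- The state space of a `GI/G/1`-type Markov chain: level `i : ℕ`, phase `j : Fin m`. -/
abbrev S (m : ℕ) := ℕ × Fin m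

/-- The transition kernel of the `GI/G/1`-type Markov chain with matrix blocks `A, B`. -/
noncomputable def P {m : ℕ} (A B : ℤ → Matrix (Fin m) (Fin m) ℝ) : S m → S m → ℝ
  | (0, j), (k, s) => B (k : ℤ) j s
  | (i + 1, j), (0, s) => B (-(i + 1 : ℤ)) j s
  | (i + 1, j), (k + 1, s) => A ((k : ℤ) - (i : ℤ)) j s

/-- `n`-step transition probabilities. -/
noncomputable def Pn {m : ℕ} (P : S m → S m → ℝ) : ℕ → S m → S m → ℝ
  | 0, x, y => if x = y then 1 else 0
  | n + 1, x, y => ∑' z : S m, P x z * Pn P n z y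

def Stochastic {m : ℕ} (P : S m → S m → ℝ) : Prop :=
  (∀ x y, 0 ≤ P x y) ∧ ∀ x, HasSum (P x) 1

def ChainIrreducible {m : ℕ} (P : S m → S m → ℝ) : Prop :=
  ∀ x y, ∃ n, 1 ≤ n ∧ 0 < Pn P n x y

def ChainAperiodic {m : ℕ} (P : S m → S m → ℝ) : Prop :=
  ∀ x, ∃ N, ∀ n ≥ N, 0 < Pn P n x x

/-- `pd` is a stationary probability distribution of `P`; for an irreducible aperiodic chain
this is equivalent to positive recurrence. -/
def IsStationary {m : ℕ} (P : S m → S m → ℝ) (pd : S m → ℝ) : Prop :=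
  (∀ x, 0 ≤ pd x) ∧ HasSum pd 1 ∧ ∀ y, HasSum (fun x => pd x * P x y) (pd y)

/-- The phase matrix `A = ∑ₖ Aₖ`. -/
noncomputable def matA {m : ℕ} (A : ℤ → Matrix (Fin m) (Fin m) ℝ) : Matrix (Fin m) (Fin m) ℝ :=
  Matrix.of fun r s => ∑' k : ℤ, A k r s

/-- The phase matrix `A = ∑ₖ Aₖ` is stochastic. -/
def PhaseStochastic {m : ℕ} (A : ℤ → Matrix (Fin m) (Fin m) ℝ) : Prop :=
  ∀ r, HasSum (fun p : ℤ × Fin m => A p.1 r p.2) 1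

/-- Irreducibility of a nonnegative matrix. -/
def MatIrreducible {m : ℕ} (M : Matrix (Fin m) (Fin m) ℝ) : Prop :=
  ∀ r s, ∃ n, 1 ≤ n ∧ 0 < (M ^ n) r s

/-- Radius of convergence of a power series with nonnegative coefficients. -/
noncomputable def radius (c : ℕ → ℝ) : ℝ≥0∞ :=
  ⨆ (r : ℝ≥0) (_ : Summable fun k => c k * (r : ℝ) ^ k), (r : ℝ≥0∞)

/-- `φ_{A+}`: the minimum over entries of the radii of convergence of `∑_{k ≥ 1} A_k(r,s) z^k`. -/
noncomputable def phiA {m : ℕ} (A : ℤ → Matrix (Fin m) (Fin m) ℝ) : ℝ≥0∞ :=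
  ⨅ (r : Fin m) (s : Fin m), radius fun k => A ((k : ℤ) + 1) r s

/-- `φ_{B+}`. -/
noncomputable def phiB {m : ℕ} (B : ℤ → Matrix (Fin m) (Fin m) ℝ) : ℝ≥0∞ :=
  ⨅ (r : Fin m) (s : Fin m), radius fun k => B ((k : ℤ) + 1) r s

/-- The matrix sequence `{C_k}_{k ≥ 1}` is light-tailed. -/
def LightMat {m : ℕ} (C : ℤ → Matrix (Fin m) (Fin m) ℝ) : Prop :=
  ∀ r s, ∃ ε > (0 : ℝ),
    Summable fun k : ℕ => C ((k : ℤ) + 1) r s * Real.exp (ε * ((k : ℝ) + 1))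

/-- `A^*(z) = ∑_{k ∈ ℤ} z^k A_k` for complex `z`. -/
noncomputable def AstarC {m : ℕ} (A : ℤ → Matrix (Fin m) (Fin m) ℝ) (z : ℂ) :
    Matrix (Fin m) (Fin m) ℂ :=
  Matrix.of fun r s => ∑' k : ℤ, (A k r s : ℂ) * z ^ k

/-- `A^*(z) = ∑_{k ∈ ℤ} z^k A_k` for real `z`. -/
noncomputable def AstarR {m : ℕ} (A : ℤ → Matrix (Fin m) (Fin m) ℝ) (z : ℝ) :
    Matrix (Fin m) (Fin m) ℝ :=
  Matrix.of fun r s => ∑' k : ℤ, A k r s * z ^ k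

/-- The set `Ω = {z ∈ ℂ : 1 < |z| < φ_{A+}, det(I - A^*(z)) = 0}`. -/
def Omega {m : ℕ} (A : ℤ → Matrix (Fin m) (Fin m) ℝ) : Set ℂ :=
  {z | 1 < ‖z‖ ∧ ENNReal.ofReal ‖z‖ < phiA A ∧ (1 - AstarC A z).det = 0}

/-- `η`: the minimal modulus of an element of `Ω`, or `∞` when `Ω = ∅`. -/
noncomputable def eta {m : ℕ} (A : ℤ → Matrix (Fin m) (Fin m) ℝ) : ℝ≥0∞ :=
  sInf ((fun z : ℂ => ENNReal.ofReal ‖z‖) '' Omega A)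

/-- The largest (Perron–Frobenius) eigenvalue of a nonnegative matrix. -/
noncomputable def chi {m : ℕ} (M : Matrix (Fin m) (Fin m) ℝ) : ℝ :=
  sSup {r : ℝ | ∃ v : Fin m → ℝ, v ≠ 0 ∧ M.mulVec v = r • v}


/-! ### General facts on stochastic kernels -/

/-- The transition operator acting on functions. -/
noncomputable def T {m : ℕ} (Q : S m → S m → ℝ) (f : S m → ℝ) (x : S m) : ℝ :=
  ∑' z, Q x z * f z

/-- The function `f` is integrable against each row of `Q`. -/
def Ok {m : ℕ} (Q : S m → S m → ℝ) (f : S m → ℝ) : Prop :=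
  ∀ x, Summable fun z => Q x z * f z

section general

variable {m : ℕ} {Q : S m → S m → ℝ}

lemma Ok.of_abs_le (hQ : Stochastic Q) {f g : S m → ℝ} (hg : Ok Q g) (h : ∀ x, |f x| ≤ g x) :
    Ok Q f := by
  intro x
  refine Summable.of_norm_bounded (hg x) ?_
  intro z
  rw [Real.norm_eq_abs, abs_mul, abs_of_nonneg (hQ.1 x z)]
  exact mul_le_mul_of_nonneg_left (h z) (hQ.1 x z)

lemma ok_const (hQ : Stochastic Q) (c : ℝ) : Ok Q (fun _ => c) :=
  fun x => (hQ.2 x).summable.mul_right c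

lemma T_const (hQ : Stochastic Q) (c : ℝ) (x : S m) : T Q (fun _ => c) x = c := by
  unfold T
  rw [tsum_mul_right, (hQ.2 x).tsum_eq, one_mul]

lemma ok_bdd (hQ : Stochastic Q) {f : S m → ℝ} {c : ℝ} (h : ∀ x, |f x| ≤ c) : Ok Q f :=
  Ok.of_abs_le hQ (ok_const hQ c) h

lemma Ok.add {f g : S m → ℝ} (hf : Ok Q f) (hg : Ok Q g) : Ok Q (fun z => f z + g z) := by
  intro x
  simpa [mul_add] using (hf x).add (hg x)

lemma Ok.sub {f g : S m → ℝ} (hf : Ok Q f) (hg : Ok Q g) : Ok Q (fun z => f z - g z) := by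
  intro x
  simpa [mul_sub] using (hf x).sub (hg x)

lemma Ok.smul {f : S m → ℝ} (hf : Ok Q f) (c : ℝ) : Ok Q (fun z => c * f z) := by
  intro x
  simpa [mul_left_comm] using (hf x).mul_left c

lemma T_add {f g : S m → ℝ} (hf : Ok Q f) (hg : Ok Q g) (x : S m) :
    T Q (fun z => f z + g z) x = T Q f x + T Q g x := by
  unfold T
  rw [← (hf x).tsum_add (hg x)]
  simp [mul_add]

lemma T_sub {f g : S m → ℝ} (hf : Ok Q f) (hg : Ok Q g) (x : S m) :
    T Q (fun z => f z - g z) x = T Q f x - T Q g x := by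
  unfold T
  rw [← (hf x).tsum_sub (hg x)]
  simp [mul_sub]

lemma T_smul (f : S m → ℝ) (c : ℝ) (x : S m) :
    T Q (fun z => c * f z) x = c * T Q f x := by
  unfold T
  rw [← tsum_mul_left]
  simp [mul_left_comm]

lemma T_mono (hQ : Stochastic Q) {f g : S m → ℝ} (hf : Ok Q f) (hg : Ok Q g)
    (h : ∀ x, f x ≤ g x) (x : S m) : T Q f x ≤ T Q g x :=
  (hf x).tsum_le_tsum (fun z => mul_le_mul_of_nonneg_left (h z) (hQ.1 x z)) (hg x)

lemma T_nonneg (hQ : Stochastic Q) {f : S m → ℝ} (h : ∀ x, 0 ≤ f x) (x : S m) : 0 ≤ T Q f x :=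
  tsum_nonneg fun z => mul_nonneg (hQ.1 x z) (h z)

lemma T_abs_le (hQ : Stochastic Q) {f : S m → ℝ} {c : ℝ} (h : ∀ x, |f x| ≤ c) (x : S m) :
    |T Q f x| ≤ c := by
  have hf := ok_bdd hQ h
  rw [abs_le]
  constructor
  · have := T_mono hQ (ok_const hQ (-c)) hf (fun x => (abs_le.1 (h x)).1) x
    rwa [T_const hQ] at this
  · have := T_mono hQ hf (ok_const hQ c) (fun x => (abs_le.1 (h x)).2) x
    rwa [T_const hQ] at this

lemma Pn_succ (n : ℕ) (x y : S m) : Pn Q (n + 1) x y = T Q (fun z => Pn Q n z y) x := rfl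

lemma Pn_bounds (hQ : Stochastic Q) (n : ℕ) (y : S m) :
    ∀ x, 0 ≤ Pn Q n x y ∧ Pn Q n x y ≤ 1 := by
  induction n with
  | zero => intro x; simp only [Pn]; split_ifs <;> norm_num
  | succ n ih =>
    intro x
    rw [Pn_succ]
    have hb : ∀ z, |Pn Q n z y| ≤ 1 := fun z => by
      rw [abs_of_nonneg (ih z).1]; exact (ih z).2
    exact ⟨T_nonneg hQ (fun z => (ih z).1) x, (abs_le.1 (T_abs_le hQ hb x)).2⟩

lemma Pn_abs (hQ : Stochastic Q) (n : ℕ) (y : S m) (x : S m) : |Pn Q n x y| ≤ 1 := by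
  rw [abs_of_nonneg (Pn_bounds hQ n y x).1]; exact (Pn_bounds hQ n y x).2

lemma Pn_ok (hQ : Stochastic Q) (n : ℕ) (y : S m) : Ok Q (fun x => Pn Q n x y) :=
  ok_bdd hQ (Pn_abs hQ n y)

/-- Excessive functions dominate multiples of hitting probabilities. -/
lemma Pn_le_of_super (hQ : Stochastic Q) {f : S m → ℝ} (hf : Ok Q f) (h0 : ∀ x, 0 ≤ f x)
    (hT : ∀ x, T Q f x ≤ f x) (y : S m) (n : ℕ) : ∀ x, f y * Pn Q n x y ≤ f x := by
  induction n with
  | zero =>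
    intro x
    simp only [Pn]
    split_ifs with h
    · rw [h]; simp
    · simpa using h0 x
  | succ n ih =>
    intro x
    rw [Pn_succ, ← T_smul]
    exact (T_mono hQ ((Pn_ok hQ n y).smul _) hf ih x).trans (hT x)

lemma Pn_CK (hQ : Stochastic Q) (a b : ℕ) (z y : S m) :
    ∀ x, Pn Q a x z * Pn Q b z y ≤ Pn Q (a + b) x y := by
  induction a with
  | zero =>
    intro x
    simp only [Pn]
    split_ifs with h
    · rw [h]; simp
    · simpa using (Pn_bounds hQ b y x).1
  | succ a ih =>
    intro x
    rw [show a + 1 + b = (a + b) + 1 by ring, Pn_succ, Pn_succ, mul_comm, ← T_smul]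
    refine T_mono hQ ((Pn_ok hQ a z).smul _) (Pn_ok hQ _ y) (fun x => ?_) x
    rw [mul_comm]; exact ih x

lemma stat_bdd (hQ : Stochastic Q) {pd : S m → ℝ} (hpd : IsStationary Q pd)
    {f : S m → ℝ} {c : ℝ} (h : ∀ x, |f x| ≤ c) :
    Summable (fun x => pd x * f x) ∧ HasSum (fun x => pd x * T Q f x) (∑' x, pd x * f x) := by
  obtain ⟨h0, h1, h2⟩ := hpd
  have hs : Summable (fun x => pd x * f x) := by
    refine Summable.of_norm_bounded (h1.summable.mul_right c) (fun x => ?_)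
    rw [Real.norm_eq_abs, abs_mul, abs_of_nonneg (h0 x)]
    exact mul_le_mul_of_nonneg_left (h x) (h0 x)
  have hpp : Summable (fun p : S m × S m => pd p.1 * Q p.1 p.2) := by
    have hnn : 0 ≤ (fun p : S m × S m => pd p.1 * Q p.1 p.2) :=
      fun p => mul_nonneg (h0 _) (hQ.1 _ _)
    have hrow : ∀ x, Summable fun y => pd x * Q x y := fun x => by
      have := (hQ.2 x).summable
      exact this.mul_left (pd x)
    refine (summable_prod_of_nonneg hnn).2 ⟨hrow, ?_⟩
    refine h1.summable.congr (fun x => ?_)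
    show pd x = ∑' y, pd x * Q x y
    rw [tsum_mul_left, (hQ.2 x).tsum_eq, mul_one]
  have hpf : Summable (fun p : S m × S m => pd p.1 * Q p.1 p.2 * f p.2) := by
    refine Summable.of_norm_bounded (hpp.mul_right c) (fun p => ?_)
    have hn : 0 ≤ pd p.1 * Q p.1 p.2 := mul_nonneg (h0 _) (hQ.1 _ _)
    rw [Real.norm_eq_abs, abs_mul, abs_of_nonneg hn]
    exact mul_le_mul_of_nonneg_left (h _) hn
  refine ⟨hs, ?_⟩
  have hok := ok_bdd hQ h
  have e1 : ∑' x, pd x * f x = ∑' p : S m × S m, pd p.1 * Q p.1 p.2 * f p.2 := by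
    rw [hpf.tsum_prod]
    have hc := Summable.tsum_comm (f := fun x y : S m => pd x * Q x y * f y) hpf
    refine Eq.trans ?_ hc
    refine tsum_congr fun y => ?_
    rw [tsum_mul_right, (h2 y).tsum_eq]
  rw [e1]
  refine hpf.hasSum.prod_fiberwise (fun x => ?_)
  simp only [mul_assoc]
  exact (hok x).hasSum.mul_left _

lemma stat_Pn (hQ : Stochastic Q) {pd : S m → ℝ} (hpd : IsStationary Q pd) (y : S m) (n : ℕ) :
    HasSum (fun x => pd x * Pn Q n x y) (pd y) := by
  induction n with
  | zero =>
    have h : (fun x => pd x * Pn Q 0 x y) = fun x => if x = y then pd y else 0 := by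
      funext x
      simp only [Pn]
      split_ifs with h
      · rw [h, mul_one]
      · rw [mul_zero]
    rw [h]
    exact hasSum_ite_eq y (pd y)
  | succ n ih =>
    have := (stat_bdd hQ hpd (Pn_abs hQ n y)).2
    rw [ih.tsum_eq] at this
    exact this

lemma pd_pos (hQ : Stochastic Q) (hirr : ChainIrreducible Q) {pd : S m → ℝ}
    (hpd : IsStationary Q pd) (y : S m) : 0 < pd y := by
  obtain ⟨x, hx⟩ : ∃ x, 0 < pd x := by
    by_contra hcon
    push Not at hcon
    have : pd = fun _ => 0 := funext fun x => le_antisymm (hcon x) (hpd.1 x)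
    have h1 := hpd.2.1
    rw [this] at h1
    exact zero_ne_one (hasSum_zero.unique h1)
  obtain ⟨n, -, hn⟩ := hirr x y
  refine lt_of_lt_of_le (mul_pos hx hn) ?_
  exact le_hasSum (stat_Pn hQ hpd y n) x
    (fun z _ => mul_nonneg (hpd.1 z) (Pn_bounds hQ n y z).1)

end general


/-! ### The Harris theorem in the form of Hairer and Mattingly -/

/-- Functions dominated by a multiple of `V`. -/
def Cls {m : ℕ} (V f : S m → ℝ) : Prop := ∃ c, ∀ x, |f x| ≤ c * V x

section harris

variable {m : ℕ} {Q : S m → S m → ℝ}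

lemma Cls.lin {V f g : S m → ℝ} (hf : Cls V f) (hg : Cls V g) (c d : ℝ) :
    Cls V (fun z => c * f z + d * g z) := by
  obtain ⟨a, ha⟩ := hf
  obtain ⟨b, hb⟩ := hg
  refine ⟨|c| * a + |d| * b, fun x => ?_⟩
  calc |c * f x + d * g x| ≤ |c * f x| + |d * g x| := abs_add_le _ _
    _ = |c| * |f x| + |d| * |g x| := by rw [abs_mul, abs_mul]
    _ ≤ |c| * (a * V x) + |d| * (b * V x) := by
        gcongr
        · exact ha x
        · exact hb x
    _ = _ := by ring

lemma Cls.of_bdd {V f : S m → ℝ} (hV : ∀ x, 1 ≤ V x) {c : ℝ} (h : ∀ x, |f x| ≤ c) : Cls V f := by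
  refine ⟨c, fun x => (h x).trans ?_⟩
  have hc : 0 ≤ c := (abs_nonneg _).trans (h x)
  nlinarith [hV x]

lemma Cls.self {V : S m → ℝ} (hV : ∀ x, 1 ≤ V x) : Cls V V :=
  ⟨1, fun x => by rw [abs_of_nonneg (by linarith [hV x]), one_mul]⟩

lemma Cls.ok (hQ : Stochastic Q) {V f : S m → ℝ} (hV : Ok Q V) (hf : Cls V f) : Ok Q f := by
  obtain ⟨c, hc⟩ := hf
  exact Ok.of_abs_le hQ (hV.smul c) hc

lemma Cls.T (hQ : Stochastic Q) {V f : S m → ℝ} (hV1 : ∀ x, 1 ≤ V x) (hV : Ok Q V)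
    {l b : ℝ} (hb : 0 ≤ b) (hd : ∀ x, T Q V x ≤ l * V x + b) (hf : Cls V f) :
    Cls V (GIG1.T Q f) := by
  have hok := hf.ok hQ hV
  obtain ⟨c, hc⟩ := hf
  have hmain : ∀ x, |GIG1.T Q f x| ≤ c * GIG1.T Q V x := by
    intro x
    rw [← T_smul, abs_le]
    constructor
    · have := T_mono hQ ((hV.smul c).smul (-1)) hok
        (fun x => by have := (abs_le.1 (hc x)).1; linarith) x
      rw [T_smul] at this
      linarith
    · exact T_mono hQ hok (hV.smul c) (fun x => (abs_le.1 (hc x)).2) x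
  refine ⟨|c| * (|l| + b), fun x => (hmain x).trans ?_⟩
  have h0 : 0 ≤ GIG1.T Q V x := T_nonneg hQ (fun z => by linarith [hV1 z]) x
  calc c * GIG1.T Q V x ≤ |c| * GIG1.T Q V x := by gcongr; exact le_abs_self c
    _ ≤ |c| * (l * V x + b) := by gcongr; exact hd x
    _ ≤ |c| * ((|l| + b) * V x) := by
        gcongr
        nlinarith [le_abs_self l, hV1 x]
    _ = _ := by ring

lemma Cls.iter (hQ : Stochastic Q) {V f : S m → ℝ} (hV1 : ∀ x, 1 ≤ V x) (hV : Ok Q V)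
    {l b : ℝ} (hb : 0 ≤ b) (hd : ∀ x, GIG1.T Q V x ≤ l * V x + b) (hf : Cls V f) (n : ℕ) :
    Cls V ((GIG1.T Q)^[n] f) := by
  induction n with
  | zero => exact hf
  | succ n ih =>
    rw [Function.iterate_succ_apply']
    exact ih.T hQ hV1 hV hb hd

lemma iter_lin (hQ : Stochastic Q) {V : S m → ℝ} (hV1 : ∀ x, 1 ≤ V x) (hV : Ok Q V)
    {l b : ℝ} (hb : 0 ≤ b) (hd : ∀ x, T Q V x ≤ l * V x + b) (n : ℕ)
    (f g : S m → ℝ) (hf : Cls V f) (hg : Cls V g) (c d : ℝ) :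
    ∀ x, (T Q)^[n] (fun z => c * f z + d * g z) x
      = c * (T Q)^[n] f x + d * (T Q)^[n] g x := by
  induction n with
  | zero => intro x; rfl
  | succ n ih =>
    intro x
    rw [Function.iterate_succ_apply', Function.iterate_succ_apply', Function.iterate_succ_apply',
      funext ih]
    have h1 := (hf.iter hQ hV1 hV hb hd n).ok hQ hV
    have h2 := (hg.iter hQ hV1 hV hb hd n).ok hQ hV
    rw [T_add (h1.smul c) (h2.smul d), T_smul, T_smul]

lemma iter_mono (hQ : Stochastic Q) {V : S m → ℝ} (hV1 : ∀ x, 1 ≤ V x) (hV : Ok Q V)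
    {l b : ℝ} (hb : 0 ≤ b) (hd : ∀ x, T Q V x ≤ l * V x + b) (n : ℕ)
    (f g : S m → ℝ) (hf : Cls V f) (hg : Cls V g) (h : ∀ x, f x ≤ g x) :
    ∀ x, (T Q)^[n] f x ≤ (T Q)^[n] g x := by
  induction n with
  | zero => exact h
  | succ n ih =>
    intro x
    rw [Function.iterate_succ_apply', Function.iterate_succ_apply']
    exact T_mono hQ ((hf.iter hQ hV1 hV hb hd n).ok hQ hV)
      ((hg.iter hQ hV1 hV hb hd n).ok hQ hV) ih x

lemma iter_const (hQ : Stochastic Q) (n : ℕ) (c : ℝ) :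
    (T Q)^[n] (fun _ => c) = fun _ => c := by
  induction n with
  | zero => rfl
  | succ n ih =>
    rw [Function.iterate_succ_apply', ih]
    exact funext fun x => T_const hQ c x

lemma iter_Pn (n k : ℕ) (y : S m) :
    (T Q)^[n] (fun z => Pn Q k z y) = fun z => Pn Q (n + k) z y := by
  induction n with
  | zero => simp
  | succ n ih =>
    rw [Function.iterate_succ_apply', ih, show n + 1 + k = (n + k) + 1 by ring]
    rfl

lemma iter_drift (hQ : Stochastic Q) {V : S m → ℝ} (hV1 : ∀ x, 1 ≤ V x) (hV : Ok Q V)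
    {l b : ℝ} (hl0 : 0 ≤ l) (hl : l < 1) (hb : 0 ≤ b) (hd : ∀ x, T Q V x ≤ l * V x + b) (n : ℕ) :
    ∀ x, (T Q)^[n] V x ≤ l ^ n * V x + b * (1 - l ^ n) / (1 - l) := by
  have h1l : 0 < 1 - l := by linarith
  induction n with
  | zero => intro x; simp
  | succ n ih =>
    intro x
    rw [Function.iterate_succ_apply']
    have hok := ((Cls.self hV1).iter hQ hV1 hV hb hd n).ok hQ hV
    refine (T_mono hQ hok ((hV.smul (l ^ n)).add (ok_const hQ _)) ih x).trans ?_
    rw [T_add (hV.smul _) (ok_const hQ _), T_smul, T_const hQ]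
    have := mul_le_mul_of_nonneg_left (hd x) (pow_nonneg hl0 n)
    have e : b * (1 - l ^ (n + 1)) / (1 - l) = l ^ n * b + b * (1 - l ^ n) / (1 - l) := by
      field_simp
      ring
    rw [e, pow_succ]
    linarith

/-- The contraction estimate for a positive operator with drift and minorization. -/
lemma contraction {V : S m → ℝ} (hV1 : ∀ x, 1 ≤ V x) (L : (S m → ℝ) → S m → ℝ)
    (hlin : ∀ f g, Cls V f → Cls V g → ∀ c d : ℝ, ∀ x,
      L (fun z => c * f z + d * g z) x = c * L f x + d * L g x)
    (hmono : ∀ f g, Cls V f → Cls V g → (∀ x, f x ≤ g x) → ∀ x, L f x ≤ L g x)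
    (hone : L (fun _ => 1) = fun _ => 1)
    {l K R a : ℝ} (hl0 : 0 ≤ l) (hl : l < 1) (hK : 0 < K) (hd : ∀ x, L V x ≤ l * V x + K)
    (hR : 2 * K < (1 - l) * R) (ha : 0 < a) (ha1 : a ≤ 1) (al : S m)
    (hmin : ∀ x, V x ≤ R → a ≤ L (fun z => Pn Q 0 z al) x) :
    ∃ β κ : ℝ, 0 < β ∧ 0 < κ ∧ κ < 1 ∧ ∀ φ, Cls V φ → ∀ D, 0 ≤ D →
      (∀ x y, |φ x - φ y| ≤ D * (2 + β * V x + β * V y)) →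
      ∀ x y, |L φ x - L φ y| ≤ κ * D * (2 + β * V x + β * V y) := by
  have hRpos : 0 < R := by
    by_contra hcon
    push Not at hcon
    nlinarith
  set β := a / (2 * K) with hβ
  have hβpos : 0 < β := by positivity
  have hβK : 2 * (β * K) = a := by rw [hβ]; field_simp
  set κ1 := (2 + β * (2 * K + l * R)) / (2 + β * R) with hκ1
  have hden : 0 < 2 + β * R := by positivity
  have hκ1lt : κ1 < 1 := by
    rw [hκ1, div_lt_one hden]
    nlinarith
  have hκ1eq : κ1 * (2 + β * R) = 2 + β * (2 * K + l * R) := by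
    rw [hκ1]; field_simp
  have hκ1l : l ≤ κ1 := by
    rw [hκ1, le_div_iff₀ hden]
    nlinarith [mul_pos hβpos hK]
  set κ := max κ1 (1 - a / 2) with hκ
  have hκ0 : κ1 ≤ κ := le_max_left _ _
  have hκa : 1 - a / 2 ≤ κ := le_max_right _ _
  have hκpos : 0 < κ := by linarith
  refine ⟨β, κ, hβpos, hκpos, ?_, ?_⟩
  · exact max_lt hκ1lt (by linarith)
  intro φ hφ D hD hosc
  have c1 : Cls V (fun _ => (1 : ℝ)) := Cls.of_bdd hV1 (c := 1) (fun x => by simp)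
  have cV : Cls V V := Cls.self hV1
  have c0 : Cls V (fun z => Pn Q 0 z al) := Cls.of_bdd hV1 (c := 1) (fun x => by
    simp only [Pn]; split_ifs <;> simp)
  -- recentering
  obtain ⟨c, hc⟩ : ∃ c, ∀ x, |φ x - c| ≤ D * (1 + β * V x) := by
    have hb : BddBelow (Set.range fun x => φ x + D * (1 + β * V x)) := by
      refine ⟨φ al - D * (1 + β * V al), ?_⟩
      rintro _ ⟨x, rfl⟩
      have := (abs_le.1 (hosc al x)).2
      simp only
      linarith
    have : Nonempty (S m) := ⟨al⟩
    refine ⟨⨅ x, (φ x + D * (1 + β * V x)), fun x => ?_⟩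
    rw [abs_le]
    constructor
    · have := ciInf_le hb x
      linarith
    · have : φ x - D * (1 + β * V x) ≤ ⨅ x, (φ x + D * (1 + β * V x)) := by
        refine le_ciInf fun y => ?_
        have := (abs_le.1 (hosc x y)).2
        linarith
      linarith
  set U : S m → ℝ := fun z => D * 1 + (D * β) * V z with hU
  have cU : Cls V U := c1.lin cV D (D * β)
  have hLU : ∀ x, L U x = D + D * β * L V x := by
    intro x
    rw [hU, hlin _ _ c1 cV, hone]; ring
  set ψ : S m → ℝ := fun z => 1 * φ z + (-c) * 1 with hψ
  have cψ : Cls V ψ := hφ.lin c1 1 (-c)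
  have hLψ : ∀ x, L ψ x = L φ x - c := by
    intro x
    rw [hψ, hlin _ _ hφ c1, hone]; ring
  have hψU : ∀ x, |ψ x| ≤ U x := by
    intro x
    have h := hc x
    have e1 : ψ x = φ x - c := by simp only [hψ]; ring
    have e2 : U x = D * (1 + β * V x) := by simp only [hU]; ring
    rw [e1, e2]; exact h
  -- key bounds
  have key : ∀ χ, Cls V χ → (∀ x, χ x ≤ U x) → ∀ x,
      L χ x ≤ L U x - (U al - χ al) * L (fun z => Pn Q 0 z al) x := by
    intro χ hχ hle x
    have h := hmono _ _ (c0.lin c0 (U al - χ al) 0) (cU.lin hχ 1 (-1)) (fun z => by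
      simp only [Pn]
      split_ifs with hz
      · rw [hz]; linarith
      · linarith [hle z]) x
    rw [hlin _ _ c0 c0, hlin _ _ cU hχ] at h
    linarith
  have L0nn : ∀ x, 0 ≤ L (fun z => Pn Q 0 z al) x := by
    intro x
    have h := hmono _ _ (c1.lin c1 0 0) c0 (fun z => by
      simp only [Pn]; split_ifs <;> norm_num) x
    rw [hlin _ _ c1 c1] at h
    linarith
  have cnψ : Cls V (fun z => (-1) * ψ z + 0 * ψ z) := cψ.lin cψ (-1) 0
  have hLn : ∀ x, L (fun z => (-1) * ψ z + 0 * ψ z) x = - L ψ x := by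
    intro x; rw [hlin _ _ cψ cψ]; ring
  have kp : ∀ x, L ψ x ≤ L U x - (U al - ψ al) * L (fun z => Pn Q 0 z al) x :=
    key ψ cψ (fun x => (abs_le.1 (hψU x)).2)
  have kn : ∀ x, - L ψ x ≤ L U x - (U al + ψ al) * L (fun z => Pn Q 0 z al) x := by
    intro x
    have := key _ cnψ (fun x => by have := (abs_le.1 (hψU x)).1; linarith) x
    rw [hLn] at this
    have e : U al - ((-1) * ψ al + 0 * ψ al) = U al + ψ al := by ring
    rw [e] at this
    exact this
  have hUal : D ≤ U al := by
    simp only [hU]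
    have : 0 ≤ D * β * V al := by
      have := hV1 al
      positivity
    linarith
  have hal1 := (abs_le.1 (hψU al)).1
  have hal2 := (abs_le.1 (hψU al)).2
  have one_sided : ∀ x y, L φ x - L φ y ≤ κ * D * (2 + β * V x + β * V y) := by
    intro x y
    have e : L φ x - L φ y = L ψ x - L ψ y := by rw [hLψ, hLψ]; ring
    rw [e]
    have hx := kp x
    have hy := kn y
    have hUx := hLU x
    have hUy := hLU y
    have hDβ : 0 ≤ D * β := by positivity
    have dx := mul_le_mul_of_nonneg_left (hd x) hDβ
    have dy := mul_le_mul_of_nonneg_left (hd y) hDβ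
    have hx1 := hV1 x
    have hy1 := hV1 y
    rcases le_or_gt R (V x + V y) with hs | hs
    · have p1 : 0 ≤ (U al - ψ al) * L (fun z => Pn Q 0 z al) x :=
        mul_nonneg (by linarith) (L0nn x)
      have p2 : 0 ≤ (U al + ψ al) * L (fun z => Pn Q 0 z al) y :=
        mul_nonneg (by linarith) (L0nn y)
      have b1 : L ψ x - L ψ y ≤ D * (2 + β * (l * (V x + V y) + 2 * K)) := by linarith
      have b2 : 2 + β * (l * (V x + V y) + 2 * K) ≤ κ1 * (2 + β * (V x + V y)) := by
        have : 0 ≤ (κ1 - l) * β * (V x + V y - R) := by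
          have h1 : 0 ≤ κ1 - l := by linarith
          have h2 : 0 ≤ V x + V y - R := by linarith
          positivity
        linarith
      have b3 : κ1 * (2 + β * (V x + V y)) ≤ κ * (2 + β * (V x + V y)) :=
        mul_le_mul_of_nonneg_right hκ0 (by positivity)
      calc _ ≤ _ := b1
        _ ≤ D * (κ * (2 + β * (V x + V y))) :=
            mul_le_mul_of_nonneg_left (b2.trans b3) hD
        _ = _ := by ring
    · have p1 : (U al - ψ al) * a ≤ (U al - ψ al) * L (fun z => Pn Q 0 z al) x :=
        mul_le_mul_of_nonneg_left (hmin x (by linarith)) (by linarith)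
      have p2 : (U al + ψ al) * a ≤ (U al + ψ al) * L (fun z => Pn Q 0 z al) y :=
        mul_le_mul_of_nonneg_left (hmin y (by linarith)) (by linarith)
      have p3 : D * a ≤ U al * a := mul_le_mul_of_nonneg_right hUal ha.le
      have b1 : L ψ x - L ψ y ≤ D * (2 - a + l * (β * (V x + V y))) := by
        have : D * (2 * (β * K)) = D * a := by rw [hβK]
        linarith
      have b2 : 2 - a + l * (β * (V x + V y)) ≤ κ * (2 + β * (V x + V y)) := by
        have h2 : 0 ≤ β * (V x + V y) := by positivity
        have := mul_le_mul_of_nonneg_right (hκ1l.trans hκ0) h2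
        linarith
      calc _ ≤ _ := b1
        _ ≤ D * (κ * (2 + β * (V x + V y))) := mul_le_mul_of_nonneg_left b2 hD
        _ = _ := by ring
  intro x y
  rw [abs_le]
  constructor
  · have := one_sided y x
    linarith
  · exact one_sided x y

theorem harris (hQ : Stochastic Q) (hirr : ChainIrreducible Q) (hap : ChainAperiodic Q)
    {pd : S m → ℝ} (hpd : IsStationary Q pd) (al : S m)
    {V : S m → ℝ} (hV1 : ∀ x, 1 ≤ V x) (hV : Ok Q V) {l b : ℝ} (hl0 : 0 ≤ l) (hl : l < 1)
    (hb : 0 ≤ b) (hd : ∀ x, T Q V x ≤ l * V x + b) (hfin : ∀ R, {x | V x ≤ R}.Finite) :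
    ∃ ρ : ℝ, 0 ≤ ρ ∧ ρ < 1 ∧ ∃ M : S m → S m → ℝ,
        ∀ (x y : S m) (n : ℕ), |Pn Q n x y - pd y| ≤ M x y * ρ ^ n := by
  have h1l : 0 < 1 - l := by linarith
  set K := b / (1 - l) + 1 with hK
  have hKpos : 0 < K := by positivity
  set R := 2 * K / (1 - l) + 1 with hR
  have hRK : 2 * K < (1 - l) * R := by
    have : (1 - l) * R = 2 * K + (1 - l) := by
      rw [hR]; field_simp
    linarith
  -- the skeleton
  obtain ⟨N0, hN0⟩ := hap al
  choose k hk1 hk using fun x => hirr x al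
  obtain ⟨N1, hN1⟩ : ∃ N1, ∀ x ∈ {x | V x ≤ R}, k x ≤ N1 := by
    obtain ⟨N1, h⟩ := ((hfin R).image k).bddAbove
    exact ⟨N1, fun x hx => h ⟨x, hx, rfl⟩⟩
  set N := N0 + N1 + 1 with hN
  have hpos : ∀ x, V x ≤ R → 0 < Pn Q N x al := by
    intro x hx
    have h1 := hN1 x hx
    have h2 := Pn_CK hQ (k x) (N - k x) al al x
    rw [show k x + (N - k x) = N by omega] at h2
    exact lt_of_lt_of_le (mul_pos (hk x) (hN0 _ (by omega))) h2
  obtain ⟨a, ha, ha1, hamin⟩ : ∃ a : ℝ, 0 < a ∧ a ≤ 1 ∧ ∀ x, V x ≤ R → a ≤ Pn Q N x al := by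
    rcases Set.eq_empty_or_nonempty {x | V x ≤ R} with he | hne
    · refine ⟨1, one_pos, le_rfl, fun x hx => ?_⟩
      have : x ∈ {x | V x ≤ R} := hx
      rw [he] at this
      exact absurd this (Set.notMem_empty x)
    · obtain ⟨x0, hx0, hmin⟩ := Set.exists_min_image _ (fun x => Pn Q N x al) (hfin R) hne
      exact ⟨Pn Q N x0 al, hpos x0 hx0, (Pn_bounds hQ N al x0).2, fun x hx => hmin x hx⟩
  have hdN : ∀ x, (T Q)^[N] V x ≤ l * V x + K := by
    intro x
    have h1 := iter_drift hQ hV1 hV hl0 hl hb hd N x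
    have h2 : l ^ N ≤ l := by
      rw [hN, pow_succ]
      have := pow_le_one₀ (n := N0 + N1) hl0 hl.le
      nlinarith
    have h3 : b * (1 - l ^ N) / (1 - l) ≤ b / (1 - l) := by
      gcongr
      have := pow_nonneg hl0 N
      nlinarith
    have h4 : l ^ N * V x ≤ l * V x := mul_le_mul_of_nonneg_right h2 (by linarith [hV1 x])
    linarith
  obtain ⟨β, κ, hβ, hκ0, hκ1, hcon⟩ := contraction (Q := Q) hV1 ((T Q)^[N])
    (iter_lin hQ hV1 hV hb hd N) (iter_mono hQ hV1 hV hb hd N) (iter_const hQ N 1)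
    hl0 hl hKpos hdN hRK ha ha1 al (fun x hx => by
      rw [iter_Pn]; exact hamin x hx)
  have hNpos : (N : ℝ) ≠ 0 := by positivity
  set ρ := κ ^ ((N : ℝ)⁻¹) with hρ
  have hρN : ρ ^ N = κ := by
    rw [hρ]; exact Real.rpow_inv_natCast_pow hκ0.le (by omega)
  have hρ0 : 0 < ρ := Real.rpow_pos_of_pos hκ0 _
  have hρ1 : ρ < 1 := Real.rpow_lt_one hκ0.le hκ1 (by positivity)
  have hdiff : ∀ (y : S m) (n : ℕ) (x x' : S m),
      |Pn Q n x y - Pn Q n x' y| ≤ (κ⁻¹ * ρ ^ n) * (2 + β * V x + β * V x') := by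
    intro y n
    induction n using Nat.strong_induction_on with
    | _ n ih =>
      rcases lt_or_ge n N with hn | hn
      · intro x x'
        have h1 : ρ ^ N ≤ ρ ^ n := pow_le_pow_of_le_one hρ0.le hρ1.le hn.le
        rw [hρN] at h1
        have h2 : 1 ≤ κ⁻¹ * ρ ^ n := by
          rw [inv_mul_eq_div, le_div_iff₀ hκ0]; linarith
        have h3 := Pn_bounds hQ n y x
        have h4 := Pn_bounds hQ n y x'
        have h5 : |Pn Q n x y - Pn Q n x' y| ≤ 1 := by
          rw [abs_le]; constructor <;> linarith
        have h6 : 0 ≤ β * V x := mul_nonneg hβ.le (by linarith [hV1 x])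
        have h7 : 0 ≤ β * V x' := mul_nonneg hβ.le (by linarith [hV1 x'])
        nlinarith
      · intro x x'
        have h := hcon (fun z => Pn Q (n - N) z y) (Cls.of_bdd hV1 (Pn_abs hQ (n - N) y))
          (κ⁻¹ * ρ ^ (n - N)) (by positivity) (ih (n - N) (by omega)) x x'
        rw [iter_Pn, show N + (n - N) = n by omega] at h
        have e : κ * (κ⁻¹ * ρ ^ (n - N)) = κ⁻¹ * ρ ^ n := by
          conv_rhs => rw [show n = N + (n - N) by omega, pow_add, hρN]
          ring
        rw [e] at h
        exact h
  have hlim : ∀ x y, Tendsto (fun n => Pn Q n x y) atTop (𝓝 (pd y)) := by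
    intro x y
    have hgeo : Tendsto (fun n : ℕ => ρ ^ n) atTop (𝓝 0) :=
      tendsto_pow_atTop_nhds_zero_of_lt_one hρ0.le hρ1
    have hz : Tendsto (fun n => ∑' x', pd x' * (Pn Q n x' y - Pn Q n x y)) atTop
        (𝓝 (∑' x' : S m, pd x' * 0)) := by
      refine tendsto_tsum_of_dominated_convergence (bound := fun x' => pd x')
        hpd.2.1.summable (fun x' => ?_) (Eventually.of_forall fun n x' => ?_)
      · refine Tendsto.const_mul _ ?_
        refine squeeze_zero_norm (fun n => hdiff y n x' x) ?_
        have := (hgeo.const_mul κ⁻¹).mul_const (2 + β * V x' + β * V x)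
        simpa using this
      · have h3 := Pn_bounds hQ n y x
        have h4 := Pn_bounds hQ n y x'
        have h5 : |Pn Q n x' y - Pn Q n x y| ≤ 1 := by
          rw [abs_le]; constructor <;> linarith
        rw [Real.norm_eq_abs, abs_mul, abs_of_nonneg (hpd.1 x')]
        have := mul_le_mul_of_nonneg_left h5 (hpd.1 x')
        linarith
    have he : ∀ n, ∑' x', pd x' * (Pn Q n x' y - Pn Q n x y) = pd y - Pn Q n x y := by
      intro n
      have h1 := (stat_Pn hQ hpd y n).sub (hpd.2.1.mul_right (Pn Q n x y))
      rw [one_mul] at h1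
      rw [← h1.tsum_eq]
      exact tsum_congr fun z => by ring
    simp only [he, mul_zero, tsum_zero] at hz
    have := hz.const_sub (pd y)
    simpa using this
  refine ⟨ρ, hρ0.le, hρ1, fun x _ => κ⁻¹ * (2 + β * V x + β * T Q V x) / (1 - ρ), ?_⟩
  intro x y n
  have hstep : ∀ n, dist (Pn Q n x y) (Pn Q (n + 1) x y)
      ≤ κ⁻¹ * (2 + β * V x + β * T Q V x) * ρ ^ n := by
    intro n
    rw [dist_comm, Real.dist_eq, Pn_succ]
    have hPok := Pn_ok hQ n y
    have e1 : T Q (fun z => Pn Q n z y) x - Pn Q n x y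
        = T Q (fun z => Pn Q n z y - Pn Q n x y) x := by
      rw [T_sub hPok (ok_const hQ _), T_const hQ]
    have hdok : Ok Q (fun z => Pn Q n z y - Pn Q n x y) := hPok.sub (ok_const hQ _)
    set G : S m → ℝ := fun z => (κ⁻¹ * ρ ^ n) * β * V z + (κ⁻¹ * ρ ^ n) * (2 + β * V x) with hG
    have hGok : Ok Q G := (hV.smul _).add (ok_const hQ _)
    have hGT : T Q G x = (κ⁻¹ * ρ ^ n) * β * T Q V x + (κ⁻¹ * ρ ^ n) * (2 + β * V x) := by
      rw [hG, T_add (hV.smul _) (ok_const hQ _), T_smul, T_const hQ]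
    have hle : ∀ z, |Pn Q n z y - Pn Q n x y| ≤ G z := by
      intro z
      refine (hdiff y n z x).trans (le_of_eq ?_)
      simp only [hG]; ring
    have e2 : κ⁻¹ * (2 + β * V x + β * T Q V x) * ρ ^ n = T Q G x := by
      rw [hGT]; ring
    rw [e1, e2, abs_le]
    constructor
    · have := T_mono hQ (hGok.smul (-1)) hdok
        (fun z => by have := (abs_le.1 (hle z)).1; linarith) x
      rw [T_smul] at this
      linarith
    · exact T_mono hQ hdok hGok (fun z => (abs_le.1 (hle z)).2) x
  have := dist_le_of_le_geometric_of_tendsto ρ _ hρ1 hstep (hlim x y) n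
  rw [Real.dist_eq] at this
  refine this.trans (le_of_eq ?_)
  ring

end harris


/-! ### Taboo probabilities and exponential moments of return times -/

/-- Probability of avoiding `al` at times `0, …, n`. -/
noncomputable def tq {m : ℕ} (Q : S m → S m → ℝ) (al : S m) : ℕ → S m → ℝ
  | 0, x => if x = al then 0 else 1
  | n + 1, x => if x = al then 0 else T Q (tq Q al n) x

/-- Probability that the return time to `al` exceeds `n`. -/
noncomputable def tr {m : ℕ} (Q : S m → S m → ℝ) (al : S m) : ℕ → ℝ
  | 0 => 1
  | n + 1 => T Q (tq Q al n) al

section taboo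

variable {m : ℕ} {Q : S m → S m → ℝ}

lemma tq_bounds (hQ : Stochastic Q) (al : S m) (n : ℕ) : ∀ x, 0 ≤ tq Q al n x ∧ tq Q al n x ≤ 1 := by
  induction n with
  | zero => intro x; simp only [tq]; split_ifs <;> norm_num
  | succ n ih =>
    intro x
    simp only [tq]
    have hb : ∀ z, |tq Q al n z| ≤ 1 := fun z => by
      rw [abs_of_nonneg (ih z).1]; exact (ih z).2
    split_ifs
    · norm_num
    · exact ⟨T_nonneg hQ (fun z => (ih z).1) x, (abs_le.1 (T_abs_le hQ hb x)).2⟩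

lemma tq_abs (hQ : Stochastic Q) (al : S m) (n : ℕ) (x : S m) : |tq Q al n x| ≤ 1 := by
  rw [abs_of_nonneg (tq_bounds hQ al n x).1]; exact (tq_bounds hQ al n x).2

lemma tq_ok (hQ : Stochastic Q) (al : S m) (n : ℕ) : Ok Q (tq Q al n) :=
  ok_bdd hQ (tq_abs hQ al n)

lemma tr_nonneg (hQ : Stochastic Q) (al : S m) (n : ℕ) : 0 ≤ tr Q al n := by
  cases n with
  | zero => simp [tr]
  | succ n => exact T_nonneg hQ (fun z => (tq_bounds hQ al n z).1) al

lemma Ok.sum {f : ℕ → S m → ℝ} (hf : ∀ k, Ok Q (f k)) (s : Finset ℕ) :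
    Ok Q (fun z => ∑ k ∈ s, f k z) := by
  intro x
  simp only [Finset.mul_sum]
  exact summable_sum fun k _ => hf k x

lemma T_sum {f : ℕ → S m → ℝ} (hf : ∀ k, Ok Q (f k)) (s : Finset ℕ) (x : S m) :
    T Q (fun z => ∑ k ∈ s, f k z) x = ∑ k ∈ s, T Q (f k) x := by
  unfold T
  simp only [Finset.mul_sum]
  exact Summable.tsum_finsetSum fun k _ => hf k x

lemma taboo_id (hQ : Stochastic Q) (al : S m) (n : ℕ) : ∀ x,
    ∑ k ∈ Finset.range (n + 1), Pn Q k x al * tr Q al (n - k) + tq Q al n x = 1 := by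
  induction n with
  | zero =>
    intro x
    simp only [zero_add, Finset.range_one, Finset.sum_singleton, Pn, tr, tq]
    split_ifs <;> norm_num
  | succ n ih =>
    intro x
    rw [Finset.sum_range_succ']
    have e : ∑ k ∈ Finset.range (n + 1), Pn Q (k + 1) x al * tr Q al (n + 1 - (k + 1))
        = 1 - T Q (tq Q al n) x := by
      have h1 : ∀ k ∈ Finset.range (n + 1), Pn Q (k + 1) x al * tr Q al (n + 1 - (k + 1))
          = T Q (fun z => tr Q al (n - k) * Pn Q k z al) x := by
        intro k _
        rw [T_smul, ← Pn_succ, Nat.add_sub_add_right, mul_comm]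
      rw [Finset.sum_congr rfl h1, ← T_sum (fun k => (Pn_ok hQ k al).smul _)]
      have h2 : (fun z => ∑ k ∈ Finset.range (n + 1), tr Q al (n - k) * Pn Q k z al)
          = fun z => 1 - tq Q al n z := by
        funext z
        rw [← ih z]
        simp [mul_comm]
      rw [h2, T_sub (ok_const hQ 1) (tq_ok hQ al n), T_const hQ]
    rw [e]
    simp only [Pn, tr, tq, Nat.sub_zero]
    split_ifs with h
    · rw [h]; ring
    · ring

lemma taboo_decay (hQ : Stochastic Q) {pd : S m → ℝ} (hpd : IsStationary Q pd) (al : S m)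
    (hpos : 0 < pd al) {ρ : ℝ} (hρ0 : 0 < ρ) (hρ1 : ρ < 1) {M : S m → ℝ}
    (hM : ∀ x n, |Pn Q n x al - pd al| ≤ M x * ρ ^ n) :
    ∃ κ : ℝ, 0 < κ ∧ κ < 1 ∧ ∃ C : S m → ℝ, (∀ x, 0 ≤ C x) ∧
      ∀ x n, T Q (tq Q al n) x ≤ C x * κ ^ n := by
  have hM0 : ∀ x, 0 ≤ M x := fun x => by
    have := (abs_nonneg _).trans (hM x 0); simpa using this
  set r := tr Q al with hr
  have hr0 : ∀ n, 0 ≤ r n := tr_nonneg hQ al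
  set w : ℕ → ℝ := fun n => ∑ k ∈ Finset.range (n + 1), ρ ^ k * r (n - k) with hw
  have hwsucc : ∀ n, w (n + 1) = ρ * w n + r (n + 1) := by
    intro n
    simp only [hw]
    rw [Finset.sum_range_succ', Finset.mul_sum]
    simp only [pow_zero, one_mul, Nat.sub_zero, Nat.add_sub_add_right]
    congr 1
    refine Finset.sum_congr rfl fun k _ => by ring
  have hwr : ∀ n, r n ≤ w n := by
    intro n
    have := Finset.single_le_sum (f := fun k => ρ ^ k * r (n - k))
      (fun k _ => mul_nonneg (pow_nonneg hρ0.le k) (hr0 _)) (Finset.mem_range.2 (Nat.succ_pos n))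
    simpa using this
  have hw0 : ∀ n, 0 ≤ w n := fun n => (hr0 n).trans (hwr n)
  set t : ℕ → ℝ := fun n => 1 / pd al - ∑ k ∈ Finset.range (n + 1), r k with ht
  have hrefl : ∀ n, ∑ k ∈ Finset.range (n + 1), r (n - k) = ∑ k ∈ Finset.range (n + 1), r k := by
    intro n
    have := Finset.sum_range_reflect r (n + 1)
    simpa using this
  have htsucc : ∀ n, t (n + 1) = t n - r (n + 1) := by
    intro n
    simp only [ht]
    rw [Finset.sum_range_succ _ (n + 1)]; ring
  have hconv : ∀ n, pd al * t n = ∑ k ∈ Finset.range (n + 1), (Pn Q k al al - pd al) * r (n - k) := by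
    intro n
    have h := taboo_id hQ al n al
    have hq : tq Q al n al = 0 := by cases n <;> simp [tq]
    rw [hq, add_zero] at h
    simp only [sub_mul, Finset.sum_sub_distrib]
    rw [h, ← Finset.mul_sum, hrefl]
    simp only [ht]
    field_simp
  have htw : ∀ n, pd al * t n ≤ M al * w n := by
    intro n
    rw [hconv]
    simp only [hw]
    rw [Finset.mul_sum]
    refine Finset.sum_le_sum fun k _ => ?_
    rw [← mul_assoc]
    exact mul_le_mul_of_nonneg_right ((le_abs_self _).trans (hM al k)) (hr0 _)
  have ht0 : ∀ n, 0 ≤ t n := by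
    intro n
    have h1 : HasSum (fun x => ∑ k ∈ Finset.range (n + 1), pd x * Pn Q k x al * r (n - k))
        (∑ k ∈ Finset.range (n + 1), pd al * r (n - k)) :=
      hasSum_sum fun k _ => (stat_Pn hQ hpd al k).mul_right _
    have h2 := hasSum_le (fun x => ?_) h1 hpd.2.1
    · rw [← Finset.mul_sum, hrefl] at h2
      simp only [ht]
      rw [sub_nonneg, le_div_iff₀ hpos]
      linarith
    · have h := taboo_id hQ al n x
      have hq := (tq_bounds hQ al n x).1
      have : ∑ k ∈ Finset.range (n + 1), pd x * Pn Q k x al * r (n - k)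
          = pd x * ∑ k ∈ Finset.range (n + 1), Pn Q k x al * r (n - k) := by
        rw [Finset.mul_sum]
        exact Finset.sum_congr rfl fun k _ => by ring
      rw [this]
      have h3 : ∑ k ∈ Finset.range (n + 1), Pn Q k x al * r (n - k) ≤ 1 := by linarith
      have := mul_le_mul_of_nonneg_left h3 (hpd.1 x)
      linarith
  set c := M al / pd al with hc
  have hc0 : 0 ≤ c := div_nonneg (hM0 al) hpos.le
  have htc : ∀ n, t n ≤ c * w n := by
    intro n
    rw [hc, div_mul_eq_mul_div, le_div_iff₀ hpos]
    linarith [htw n]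
  set κ := (ρ + c) / (1 + c) with hκ
  have h1c : 0 < 1 + c := by linarith
  have hκ0 : 0 < κ := by positivity
  have hκ1 : κ < 1 := by rw [hκ, div_lt_one h1c]; linarith
  have hκe : κ * (1 + c) = ρ + c := by rw [hκ]; field_simp
  have hE : ∀ n, w n + t n ≤ (w 0 + t 0) * κ ^ n := by
    intro n
    induction n with
    | zero => simp
    | succ n ih =>
      have h1 : ρ * w n + t n ≤ κ * (w n + t n) := by
        have h2 : 0 ≤ (1 - κ) * (c * w n - t n) :=
          mul_nonneg (by linarith) (by linarith [htc n])
        have h3 : κ * (1 + c) * w n = (ρ + c) * w n := by rw [hκe]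
        linarith
      have h4 := mul_le_mul_of_nonneg_left ih hκ0.le
      rw [hwsucc, htsucc, pow_succ]
      linarith
  have hE0 : 0 ≤ w 0 + t 0 := add_nonneg (hw0 0) (ht0 0)
  have hwk : ∀ n, w n ≤ (w 0 + t 0) * κ ^ n := fun n => by linarith [hE n, ht0 n]
  have hq : ∀ x n, tq Q al n x ≤ (M al + M x) * w n := by
    intro x n
    have h1 := taboo_id hQ al n x
    have h2 := taboo_id hQ al n al
    have hq : tq Q al n al = 0 := by cases n <;> simp [tq]
    rw [hq, add_zero] at h2
    have e : tq Q al n x = ∑ k ∈ Finset.range (n + 1), (Pn Q k al al - Pn Q k x al) * r (n - k) := by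
      simp only [sub_mul, Finset.sum_sub_distrib]
      rw [h2]; linarith
    rw [e]
    simp only [hw]
    rw [Finset.mul_sum]
    refine Finset.sum_le_sum fun k _ => ?_
    rw [← mul_assoc]
    refine mul_le_mul_of_nonneg_right ?_ (hr0 _)
    have a1 := (abs_le.1 (hM al k)).2
    have a2 := (abs_le.1 (hM x k)).1
    linarith
  refine ⟨κ, hκ0, hκ1, fun x => (M al + M x + 1) * (w 0 + t 0), fun x => ?_, fun x n => ?_⟩
  · have := hM0 al; have := hM0 x; positivity
  have hle : T Q (tq Q al n) x ≤ (M al + M x + 1) * w (n + 1) := by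
    have hn := hw0 (n + 1)
    by_cases h : x = al
    · have h1 : T Q (tq Q al n) x = r (n + 1) := by rw [h]; rfl
      have h2 : 0 ≤ (M al + M x) * w (n + 1) :=
        mul_nonneg (add_nonneg (hM0 _) (hM0 _)) hn
      rw [h1]
      linarith [hwr (n + 1)]
    · have h1 : T Q (tq Q al n) x = tq Q al (n + 1) x := by simp only [tq, if_neg h]
      rw [h1]
      linarith [hq x (n + 1)]
  have hk : w (n + 1) ≤ (w 0 + t 0) * κ ^ n := by
    refine (hwk (n + 1)).trans ?_
    refine mul_le_mul_of_nonneg_left ?_ hE0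
    exact pow_le_pow_of_le_one hκ0.le hκ1.le (Nat.le_succ n)
  calc _ ≤ _ := hle
    _ ≤ (M al + M x + 1) * ((w 0 + t 0) * κ ^ n) :=
        mul_le_mul_of_nonneg_left hk (by have := hM0 al; have := hM0 x; positivity)
    _ = _ := by ring

lemma bounded_TW (hQ : Stochastic Q) (al : S m) {κ : ℝ} (hκ0 : 0 < κ) {C : S m → ℝ}
    (hC0 : ∀ x, 0 ≤ C x) (hC : ∀ x n, T Q (tq Q al n) x ≤ C x * κ ^ n)
    {E : ℝ} (hE0 : 0 < E) (hE : E * κ < 1) {W : S m → ℝ} {b : ℝ} (hW0 : ∀ x, 0 ≤ W x)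
    (hWb : ∀ x, W x ≤ b) (hW : ∀ x, W x ≤ E * T Q W x) (x : S m) :
    T Q W x ≤ W al * (1 + C x * E / (1 - E * κ)) := by
  have hWok : Ok Q W := ok_bdd hQ (fun x => by rw [abs_of_nonneg (hW0 x)]; exact hWb x)
  set W' : S m → ℝ := fun z => if z = al then 0 else W z with hW'
  have hb0 : 0 ≤ b := (hW0 al).trans (hWb al)
  have hW'b : ∀ z, |W' z| ≤ b := by
    intro z
    simp only [hW']
    split_ifs
    · simpa using hb0
    · rw [abs_of_nonneg (hW0 z)]; exact hWb z
  have hW'ok : Ok Q W' := ok_bdd hQ hW'b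
  have hWW' : ∀ z, W z ≤ W' z + W al := by
    intro z
    simp only [hW']
    split_ifs with h
    · rw [h]; linarith
    · linarith [hW0 al]
  have hT1 : ∀ x, T Q W x ≤ T Q W' x + W al := by
    intro x
    have := T_mono hQ hWok (hW'ok.add (ok_const hQ (W al))) hWW' x
    rwa [T_add hW'ok (ok_const hQ _), T_const hQ] at this
  have hGok : ∀ n, Ok Q (fun z => E ^ n * b * tq Q al n z
      + ∑ k ∈ Finset.range n, (W al * E ^ (k + 1)) * tq Q al k z) := fun n =>
    ((tq_ok hQ al n).smul _).add (Ok.sum (fun k => (tq_ok hQ al k).smul _) _)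
  have hTG : ∀ n x, T Q (fun z => E ^ n * b * tq Q al n z
      + ∑ k ∈ Finset.range n, (W al * E ^ (k + 1)) * tq Q al k z) x
      = E ^ n * b * T Q (tq Q al n) x
      + ∑ k ∈ Finset.range n, (W al * E ^ (k + 1)) * T Q (tq Q al k) x := by
    intro n x
    rw [T_add ((tq_ok hQ al n).smul _) (Ok.sum (fun k => (tq_ok hQ al k).smul _) _), T_smul,
      T_sum (fun k => (tq_ok hQ al k).smul _)]
    simp only [T_smul]
  have hiter : ∀ n z, W' z ≤ E ^ n * b * tq Q al n z
      + ∑ k ∈ Finset.range n, (W al * E ^ (k + 1)) * tq Q al k z := by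
    intro n
    induction n with
    | zero =>
      intro z
      simp only [hW', tq]
      split_ifs
      · simp
      · simpa using hWb z
    | succ n ih =>
      intro z
      by_cases h : z = al
      · have h1 : W' z = 0 := by simp only [hW', if_pos h]
        rw [h1]
        refine add_nonneg ?_ (Finset.sum_nonneg fun k _ => ?_)
        · exact mul_nonneg (by positivity) (tq_bounds hQ al _ z).1
        · exact mul_nonneg (mul_nonneg (hW0 _) (by positivity)) (tq_bounds hQ al _ z).1
      · have h1 : W' z = W z := by simp only [hW', if_neg h]
        have h2 := T_mono hQ hW'ok (hGok n) ih z
        rw [hTG] at h2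
        have h3 : ∀ k, T Q (tq Q al k) z = tq Q al (k + 1) z := fun k => by
          simp only [tq, if_neg h]
        have h4 : tq Q al 0 z = 1 := by simp only [tq, if_neg h]
        simp only [h3] at h2
        rw [h1, Finset.sum_range_succ', h4]
        have h5 := mul_le_mul_of_nonneg_left ((hT1 z).trans (add_le_add_left h2 _)) hE0.le
        refine (hW z).trans (h5.trans (le_of_eq ?_))
        rw [mul_add, mul_add, Finset.mul_sum]
        have : ∀ k ∈ Finset.range n, E * ((W al * E ^ (k + 1)) * tq Q al (k + 1) z)
            = (W al * E ^ (k + 1 + 1)) * tq Q al (k + 1) z := fun k _ => by ring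
        rw [Finset.sum_congr rfl this]
        ring
  have hEκ0 : 0 ≤ E * κ := by positivity
  have hfinal : ∀ n, T Q W' x ≤ b * C x * (E * κ) ^ n + W al * (C x * E / (1 - E * κ)) := by
    intro n
    have h2 := T_mono hQ hW'ok (hGok n) (hiter n) x
    rw [hTG] at h2
    refine h2.trans (add_le_add ?_ ?_)
    · calc _ ≤ E ^ n * b * (C x * κ ^ n) := by
            refine mul_le_mul_of_nonneg_left (hC x n) (by positivity)
        _ = _ := by rw [mul_pow]; ring
    · calc _ ≤ ∑ k ∈ Finset.range n, (W al * C x * E) * (E * κ) ^ k := by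
            refine Finset.sum_le_sum fun k _ => ?_
            calc _ ≤ W al * E ^ (k + 1) * (C x * κ ^ k) :=
                  mul_le_mul_of_nonneg_left (hC x k) (mul_nonneg (hW0 _) (by positivity))
              _ = _ := by rw [mul_pow, pow_succ]; ring
        _ = (W al * C x * E) * ∑ k ∈ Finset.range n, (E * κ) ^ k := by rw [Finset.mul_sum]
        _ ≤ (W al * C x * E) * (1 - E * κ)⁻¹ := by
            refine mul_le_mul_of_nonneg_left ?_
              (mul_nonneg (mul_nonneg (hW0 _) (hC0 x)) hE0.le)
            rw [← tsum_geometric_of_lt_one hEκ0 hE]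
            exact (summable_geometric_of_lt_one hEκ0 hE).sum_le_tsum _ (fun k _ => by positivity)
        _ = _ := by rw [div_eq_mul_inv]; ring
  have hlim : Tendsto (fun n : ℕ => b * C x * (E * κ) ^ n + W al * (C x * E / (1 - E * κ))) atTop
      (𝓝 (b * C x * 0 + W al * (C x * E / (1 - E * κ)))) :=
    ((tendsto_pow_atTop_nhds_zero_of_lt_one hEκ0 hE).const_mul _).add_const _
  have h6 := ge_of_tendsto' hlim hfinal
  have h7 := hT1 x
  rw [mul_zero, zero_add] at h6
  rw [mul_add, mul_one]
  linarith

end taboo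


/-! ### Rows of the GI/G/1-type transition matrix -/

section rows

variable {m : ℕ} {A B : ℤ → Matrix (Fin m) (Fin m) ℝ}

lemma P_zero (j s : Fin m) (k : ℕ) : P A B (0, j) (k, s) = B (k : ℤ) j s := by
  cases k <;> rfl

lemma P_succ_zero (i : ℕ) (j s : Fin m) : P A B (i + 1, j) (0, s) = B (-(i + 1 : ℤ)) j s := rfl

lemma P_succ_succ (i k : ℕ) (j s : Fin m) :
    P A B (i + 1, j) (k + 1, s) = A ((k : ℤ) - (i : ℤ)) j s := rfl

lemma inj_up (m : ℕ) : Function.Injective (fun p : ℕ × Fin m => ((p.1 + 1, p.2) : S m)) := by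
  rintro ⟨a, b⟩ ⟨c, d⟩ h
  simp only [Prod.mk.injEq] at h ⊢
  omega

lemma inj_shift (m i : ℕ) :
    Function.Injective (fun p : ℕ × Fin m => (((p.1 : ℤ) - (i : ℤ), p.2) : ℤ × Fin m)) := by
  rintro ⟨a, b⟩ ⟨c, d⟩ h
  simp only [Prod.mk.injEq] at h ⊢
  omega

lemma row_hasSum (F : S m → ℝ) (i : ℕ) (j : Fin m) {t : ℝ}
    (h : HasSum (fun p : ℕ × Fin m => A ((p.1 : ℤ) - (i : ℤ)) j p.2 * F (p.1 + 1, p.2)) t) :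
    HasSum (fun y => P A B (i + 1, j) y * F y)
      (∑ s, B (-(i + 1 : ℤ)) j s * F (0, s) + t) := by
  classical
  set f : S m → ℝ := fun y => P A B (i + 1, j) y * F y with hf
  set f0 : S m → ℝ := fun y => if y.1 = 0 then f y else 0 with hf0
  set f1 : S m → ℝ := fun y => if y.1 = 0 then 0 else f y with hf1
  have e : f = fun y => f0 y + f1 y := by
    funext y; simp only [hf0, hf1]; split_ifs <;> simp
  rw [e]
  refine HasSum.add ?_ ?_
  · have inj0 : Function.Injective (fun s : Fin m => ((0, s) : S m)) := by
      intro a b h; simpa using h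
    refine (inj0.hasSum_iff ?_).1 ?_
    · rintro ⟨k, s⟩ hy
      cases k with
      | zero => exact absurd ⟨s, rfl⟩ hy
      | succ k => simp [hf0]
    · exact hasSum_fintype _
  · refine ((inj_up m).hasSum_iff ?_).1 ?_
    · rintro ⟨k, s⟩ hy
      cases k with
      | zero => simp [hf1]
      | succ k => exact absurd ⟨(k, s), rfl⟩ hy
    · exact h

lemma row_summable_iff (F : S m → ℝ) (i : ℕ) (j : Fin m) :
    Summable (fun y => P A B (i + 1, j) y * F y) ↔
    Summable (fun p : ℕ × Fin m => A ((p.1 : ℤ) - (i : ℤ)) j p.2 * F (p.1 + 1, p.2)) := by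
  constructor
  · intro h
    have h' := h.comp_injective (inj_up m)
    simp only [Function.comp_def, P_succ_succ] at h'
    exact h'
  · intro h
    exact (row_hasSum F i j h.hasSum).summable

/-- Splitting sums over `ℤ × Fin m`. -/
lemma split_sum (i : ℕ) {f : ℤ × Fin m → ℝ} (hf : Summable f) :
    ∑' p, f p = ∑' p : ℕ × Fin m, f ((p.1 : ℤ) - (i : ℤ), p.2)
      + ∑' p : {p : ℤ × Fin m | p.1 < -(i : ℤ)}, f p := by
  have e : Set.range (fun p : ℕ × Fin m => (((p.1 : ℤ) - (i : ℤ), p.2) : ℤ × Fin m))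
      = {p : ℤ × Fin m | p.1 < -(i : ℤ)}ᶜ := by
    ext ⟨k, s⟩
    simp only [Set.mem_range, Set.mem_compl_iff, Set.mem_ofPred_eq, not_lt, Prod.exists,
      Prod.mk.injEq]
    constructor
    · rintro ⟨a, b, h1, -⟩; omega
    · intro h
      exact ⟨(k + i).toNat, s, by omega, rfl⟩
  rw [← tsum_range (fun p => f p) (inj_shift m i), e, add_comm]
  exact (hf.tsum_subtype_add_tsum_subtype_compl _).symm

lemma mass (hP : Stochastic (P A B)) (hphase : PhaseStochastic A) (i : ℕ) (j : Fin m) :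
    ∑ s, B (-(i + 1 : ℤ)) j s
      = ∑' p : {p : ℤ × Fin m | p.1 < -(i : ℤ)}, A p.1.1 j p.1.2 := by
  have hs : Summable (fun p : ℕ × Fin m => A ((p.1 : ℤ) - (i : ℤ)) j p.2 * 1) := by
    have h' := (hphase j).summable.comp_injective (inj_shift m i)
    simp only [Function.comp_def] at h'
    simpa only [mul_one] using h'
  have h1 := row_hasSum (B := B) (fun _ => (1 : ℝ)) i j hs.hasSum
  have h2 := hP.2 (i + 1, j)
  simp only [mul_one] at h1
  have h3 := h1.unique h2
  have h4 := split_sum i (hphase j).summable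
  rw [(hphase j).tsum_eq] at h4
  linarith

lemma row_le (hA0 : ∀ k r s, 0 ≤ A k r s) (hB0 : ∀ k r s, 0 ≤ B k r s)
    (hP : Stochastic (P A B)) (hphase : PhaseStochastic A) (i : ℕ) (j : Fin m)
    {F : S m → ℝ} {G : ℤ × Fin m → ℝ} {c : ℝ}
    (hF : Summable (fun y => P A B (i + 1, j) y * F y))
    (hG : Summable (fun p : ℤ × Fin m => A p.1 j p.2 * G p))
    (h1 : ∀ (k : ℕ) s, F (k + 1, s) ≤ G ((k : ℤ) - (i : ℤ), s))
    (h0 : ∀ s, F (0, s) ≤ c) (hc : ∀ p : ℤ × Fin m, p.1 < -(i : ℤ) → c ≤ G p) :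
    T (P A B) F (i + 1, j) ≤ ∑' p : ℤ × Fin m, A p.1 j p.2 * G p := by
  have hF' := (row_summable_iff F i j).1 hF
  unfold T
  rw [(row_hasSum F i j hF'.hasSum).tsum_eq, split_sum i hG, add_comm]
  refine add_le_add ?_ ?_
  · refine hF'.tsum_le_tsum (fun p => ?_) (hG.comp_injective (inj_shift m i))
    exact mul_le_mul_of_nonneg_left (h1 p.1 p.2) (hA0 _ _ _)
  · calc ∑ s, B (-(i + 1 : ℤ)) j s * F (0, s) ≤ ∑ s, B (-(i + 1 : ℤ)) j s * c :=
          Finset.sum_le_sum fun s _ => mul_le_mul_of_nonneg_left (h0 s) (hB0 _ _ _)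
      _ = ∑' p : {p : ℤ × Fin m | p.1 < -(i : ℤ)}, A p.1.1 j p.1.2 * c := by
          rw [← Finset.sum_mul, mass hP hphase, tsum_mul_right]
      _ ≤ _ := by
          refine Summable.tsum_le_tsum (fun p => ?_) ?_ ?_
          · exact mul_le_mul_of_nonneg_left (hc p.1 p.2) (hA0 _ _ _)
          · exact ((hphase j).summable.subtype _).mul_right c
          · exact hG.subtype _

lemma row_ge (hA0 : ∀ k r s, 0 ≤ A k r s) (hB0 : ∀ k r s, 0 ≤ B k r s)
    (hP : Stochastic (P A B)) (hphase : PhaseStochastic A) (i : ℕ) (j : Fin m)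
    {F : S m → ℝ} {G : ℤ × Fin m → ℝ} {c : ℝ}
    (hF : Summable (fun y => P A B (i + 1, j) y * F y))
    (hG : Summable (fun p : ℤ × Fin m => A p.1 j p.2 * G p))
    (h1 : ∀ (k : ℕ) s, G ((k : ℤ) - (i : ℤ), s) ≤ F (k + 1, s))
    (h0 : ∀ s, c ≤ F (0, s)) (hc : ∀ p : ℤ × Fin m, p.1 < -(i : ℤ) → G p ≤ c) :
    ∑' p : ℤ × Fin m, A p.1 j p.2 * G p ≤ T (P A B) F (i + 1, j) := by
  have h := row_le (F := fun y => - F y) (G := fun p => - G p) (c := -c) hA0 hB0 hP hphase i j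
    (by simpa using hF.neg) (by simpa using hG.neg) (fun k s => neg_le_neg (h1 k s))
    (fun s => neg_le_neg (h0 s)) (fun p hp => neg_le_neg (hc p hp))
  unfold T at h ⊢
  simp only [mul_neg, tsum_neg] at h
  linarith

end rows


/-! ### Geometric ergodicity implies light tails -/

section forward

variable {m : ℕ} {A B : ℤ → Matrix (Fin m) (Fin m) ℝ}

lemma exists_gamma (hA0 : ∀ k r s, 0 ≤ A k r s) (hphase : PhaseStochastic A) {E : ℝ}
    (hE : 1 < E) : ∃ γ > (0 : ℝ), ∀ j,
      Summable (fun p : ℤ × Fin m => A p.1 j p.2 * Real.exp (γ * min (p.1 : ℝ) 0)) ∧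
      1 ≤ E * ∑' p : ℤ × Fin m, A p.1 j p.2 * Real.exp (γ * min (p.1 : ℝ) 0) := by
  have hE0 : 0 < E := by linarith
  have hle : ∀ (γ : ℝ), 0 ≤ γ → ∀ p : ℤ × Fin m, Real.exp (γ * min (p.1 : ℝ) 0) ≤ 1 := by
    intro γ hγ p
    rw [Real.exp_le_one_iff]
    exact mul_nonpos_of_nonneg_of_nonpos hγ (min_le_right _ _)
  have hb : ∀ (γ : ℝ), 0 ≤ γ → ∀ j (p : ℤ × Fin m),
      ‖A p.1 j p.2 * Real.exp (γ * min (p.1 : ℝ) 0)‖ ≤ A p.1 j p.2 := by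
    intro γ hγ j p
    rw [Real.norm_eq_abs, abs_of_nonneg (mul_nonneg (hA0 _ _ _) (Real.exp_pos _).le)]
    exact mul_le_of_le_one_right (hA0 _ _ _) (hle γ hγ p)
  have hlim0 : Tendsto (fun n : ℕ => 1 / ((n : ℝ) + 1)) atTop (𝓝 0) :=
    tendsto_one_div_add_atTop_nhds_zero_nat
  have hlim : ∀ j, Tendsto (fun n : ℕ => ∑' p : ℤ × Fin m,
      A p.1 j p.2 * Real.exp (1 / ((n : ℝ) + 1) * min (p.1 : ℝ) 0)) atTop (𝓝 1) := by
    intro j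
    suffices h : Tendsto (fun n : ℕ => ∑' p : ℤ × Fin m,
        A p.1 j p.2 * Real.exp (1 / ((n : ℝ) + 1) * min (p.1 : ℝ) 0)) atTop
        (𝓝 (∑' p : ℤ × Fin m, A p.1 j p.2)) by
      have e := (hphase j).tsum_eq
      exact e ▸ h
    refine tendsto_tsum_of_dominated_convergence (bound := fun p : ℤ × Fin m => A p.1 j p.2)
      (hphase j).summable (fun p => ?_) (Eventually.of_forall fun n p => hb _ (by positivity) j p)
    have h1 : Tendsto (fun n : ℕ => Real.exp (1 / ((n : ℝ) + 1) * min (p.1 : ℝ) 0)) atTop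
        (𝓝 (Real.exp (0 * min (p.1 : ℝ) 0))) :=
      (Real.continuous_exp.tendsto _).comp (hlim0.mul_const _)
    have h2 := h1.const_mul (A p.1 j p.2)
    simpa using h2
  have hev : ∀ᶠ n : ℕ in atTop, ∀ j, E⁻¹ < ∑' p : ℤ × Fin m,
      A p.1 j p.2 * Real.exp (1 / ((n : ℝ) + 1) * min (p.1 : ℝ) 0) := by
    rw [eventually_all]
    intro j
    exact (hlim j).eventually (lt_mem_nhds (inv_lt_one_of_one_lt₀ hE))
  obtain ⟨n, hn⟩ := hev.exists
  refine ⟨1 / ((n : ℝ) + 1), by positivity, fun j => ⟨?_, ?_⟩⟩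
  · exact Summable.of_norm_bounded (hphase j).summable (hb _ (by positivity) j)
  · have := mul_le_mul_of_nonneg_left (hn j).le hE0.le
    rwa [mul_inv_cancel₀ hE0.ne'] at this

theorem light_of_geometric (hm : 0 < m)
    (hA0 : ∀ k r s, 0 ≤ A k r s) (hB0 : ∀ k r s, 0 ≤ B k r s)
    (hP : Stochastic (P A B)) (hirr : ChainIrreducible (P A B)) (hphase : PhaseStochastic A)
    (pd : S m → ℝ) (hpd : IsStationary (P A B) pd)
    (hgeo : ∃ ρ : ℝ, 0 ≤ ρ ∧ ρ < 1 ∧ ∃ M : S m → S m → ℝ,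
        ∀ (x y : S m) (n : ℕ), |Pn (P A B) n x y - pd y| ≤ M x y * ρ ^ n) :
    LightMat A ∧ LightMat B := by
  obtain ⟨ρ, hρ0, hρ1, M, hM⟩ := hgeo
  set al : S m := (0, ⟨0, hm⟩) with hal
  obtain ⟨κ, hκ0, hκ1, C, hC0, hC⟩ := taboo_decay hP hpd al (pd_pos hP hirr hpd al)
    (ρ := max ρ (1 / 2)) (lt_max_of_lt_right (by norm_num)) (max_lt hρ1 (by norm_num))
    (M := fun x => M x al) (fun x n => by
      refine (hM x al n).trans ?_
      have h0 : 0 ≤ M x al := by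
        have := (abs_nonneg _).trans (hM x al 0); simpa using this
      refine mul_le_mul_of_nonneg_left ?_ h0
      exact pow_le_pow_left₀ hρ0 (le_max_left _ _) n)
  obtain ⟨E, hE1, hE⟩ : ∃ E : ℝ, 1 < E ∧ E * κ < 1 := by
    refine ⟨2 / (1 + κ), ?_, ?_⟩
    · rw [lt_div_iff₀ (by linarith)]; linarith
    · rw [div_mul_eq_mul_div, div_lt_one (by linarith)]; linarith
  obtain ⟨γ, hγ, hγE⟩ := exists_gamma hA0 hphase hE1
  set W : ℕ → S m → ℝ := fun N y => Real.exp (γ * min (y.1 : ℝ) (N : ℝ)) with hW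
  have hW0 : ∀ N y, 0 ≤ W N y := fun N y => (Real.exp_pos _).le
  have hW1 : ∀ N y, 1 ≤ W N y := fun N y => by
    simp only [hW]
    exact Real.one_le_exp (by positivity)
  have hWb : ∀ N y, W N y ≤ Real.exp (γ * N) := fun N y => by
    simp only [hW]
    rw [Real.exp_le_exp]
    exact mul_le_mul_of_nonneg_left (min_le_right _ _) hγ.le
  have hWok : ∀ N, Ok (P A B) (W N) := fun N =>
    ok_bdd hP (fun y => by rw [abs_of_nonneg (hW0 N y)]; exact hWb N y)
  have hsub : ∀ N y, W N y ≤ E * T (P A B) (W N) y := by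
    rintro N ⟨i, j⟩
    cases i with
    | zero =>
      have h1 : W N (0, j) = 1 := by simp [hW]
      have h2 := T_mono hP (ok_const hP 1) (hWok N) (hW1 N) (0, j)
      rw [T_const hP] at h2
      rw [h1]
      nlinarith
    | succ i =>
      obtain ⟨hs, h1⟩ := hγE j
      have hge := row_ge hA0 hB0 hP hphase i j (F := W N)
        (G := fun p => W N (i + 1, j) * Real.exp (γ * min (p.1 : ℝ) 0)) (c := 1)
        (hWok N _) (by
          refine (hs.mul_left (W N (i + 1, j))).congr (fun p => by ring))
        (fun k s => by
          simp only [hW]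
          rw [← Real.exp_add, Real.exp_le_exp, ← mul_add]
          refine mul_le_mul_of_nonneg_left ?_ hγ.le
          push_cast
          have a1 := min_le_left ((i : ℝ) + 1) (N : ℝ)
          have a2 := min_le_right ((i : ℝ) + 1) (N : ℝ)
          have a3 := min_le_left ((k : ℝ) - (i : ℝ)) 0
          have a4 := min_le_right ((k : ℝ) - (i : ℝ)) 0
          refine le_min ?_ ?_ <;> linarith)
        (fun s => hW1 N _)
        (fun p hp => by
          simp only [hW]
          rw [← Real.exp_add, Real.exp_le_one_iff, ← mul_add]
          refine mul_nonpos_of_nonneg_of_nonpos hγ.le ?_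
          have a1 := min_le_left (((i + 1 : ℕ)) : ℝ) (N : ℝ)
          have a3 := min_le_left (p.1 : ℝ) 0
          have hp' : (p.1 : ℝ) + 1 ≤ -(i : ℝ) := by exact_mod_cast hp
          push_cast at a1 ⊢
          linarith)
      have e : ∑' p : ℤ × Fin m, A p.1 j p.2 * (W N (i + 1, j) * Real.exp (γ * min (p.1 : ℝ) 0))
          = W N (i + 1, j) * ∑' p : ℤ × Fin m, A p.1 j p.2 * Real.exp (γ * min (p.1 : ℝ) 0) := by
        rw [← tsum_mul_left]
        exact tsum_congr fun p => by ring
      rw [e] at hge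
      have h2 := mul_le_mul_of_nonneg_left hge (show 0 ≤ E by linarith)
      have h3 := mul_le_mul_of_nonneg_left h1 (hW0 N (i + 1, j))
      linarith
  have hTW : ∀ N x, T (P A B) (W N) x ≤ 1 + C x * E / (1 - E * κ) := by
    intro N x
    have h := bounded_TW hP al hκ0 hC0 hC (by linarith) hE (hW0 N) (hWb N) (hsub N) x
    have h1 : W N al = 1 := by simp [hW, hal]
    rwa [h1, one_mul] at h
  have hsum : ∀ x, Summable (fun y => P A B x y * Real.exp (γ * (y.1 : ℝ))) := by
    intro x
    refine summable_of_sum_le (c := 1 + C x * E / (1 - E * κ))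
      (fun y => mul_nonneg (hP.1 x y) (Real.exp_pos _).le) (fun u => ?_)
    set N := u.sup (fun y => y.1) with hN
    have e : ∑ y ∈ u, P A B x y * Real.exp (γ * (y.1 : ℝ)) = ∑ y ∈ u, P A B x y * W N y := by
      refine Finset.sum_congr rfl fun y hy => ?_
      have : y.1 ≤ N := Finset.le_sup (f := fun y : S m => y.1) hy
      simp only [hW]
      rw [min_eq_left (by exact_mod_cast this)]
    rw [e]
    refine le_trans ?_ (hTW N x)
    exact (hWok N x).sum_le_tsum u (fun y _ => mul_nonneg (hP.1 x y) (hW0 N y))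
  constructor
  · intro r s
    refine ⟨γ, hγ, ?_⟩
    have hinj : Function.Injective (fun k : ℕ => ((k + 1 + 1, s) : S m)) := by
      intro a b h; simpa using h
    have h := (hsum (0 + 1, r)).comp_injective hinj
    simp only [Function.comp_def, P_succ_succ] at h
    refine Summable.of_nonneg_of_le (fun k => mul_nonneg (hA0 _ _ _) (Real.exp_pos _).le)
      (fun k => ?_) h
    push_cast
    rw [sub_zero]
    refine mul_le_mul_of_nonneg_left ?_ (hA0 _ _ _)
    rw [Real.exp_le_exp]
    nlinarith
  · intro r s
    refine ⟨γ, hγ, ?_⟩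
    have hinj : Function.Injective (fun k : ℕ => ((k + 1, s) : S m)) := by
      intro a b h; simpa using h
    have h := (hsum (0, r)).comp_injective hinj
    simp only [Function.comp_def, P_zero] at h
    refine h.congr (fun k => ?_)
    push_cast
    rfl

end forward


/-! ### The phase process -/

lemma hs_congr {α : Type*} {f g : α → ℝ} {a : ℝ} (h : HasSum f a) (e : ∀ p, g p = f p) :
    HasSum g a := by
  rw [funext e]; exact h

section phase

variable {m : ℕ}

lemma mat_pow_stoch {M : Matrix (Fin m) (Fin m) ℝ} (h0 : ∀ r s, 0 ≤ M r s)
    {g : Fin m → ℝ} (hg : ∀ j, ∑ s, M j s * g s ≤ g j) (n : ℕ) :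
    (∀ r s, 0 ≤ (M ^ n) r s) ∧ ∀ j, ∑ s, (M ^ n) j s * g s ≤ g j := by
  induction n with
  | zero =>
    constructor
    · intro r s
      rw [pow_zero, Matrix.one_apply]; split_ifs <;> norm_num
    · intro j
      simp [Matrix.one_apply]
  | succ n ih =>
    obtain ⟨i1, i2⟩ := ih
    constructor
    · intro r s
      rw [pow_succ, Matrix.mul_apply]
      exact Finset.sum_nonneg fun t _ => mul_nonneg (i1 _ _) (h0 _ _)
    · intro j
      calc ∑ s, (M ^ (n + 1)) j s * g s = ∑ t, (M ^ n) j t * ∑ s, M t s * g s := by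
            simp only [pow_succ, Matrix.mul_apply, Finset.sum_mul, Finset.mul_sum]
            rw [Finset.sum_comm]
            exact Finset.sum_congr rfl fun _ _ => Finset.sum_congr rfl fun _ _ => by ring
        _ ≤ ∑ t, (M ^ n) j t * g t :=
            Finset.sum_le_sum fun t _ => mul_le_mul_of_nonneg_left (hg t) (i1 _ _)
        _ ≤ g j := i2 j

lemma mat_pow_one {M : Matrix (Fin m) (Fin m) ℝ} (h1 : ∀ r, ∑ s, M r s = 1) (n : ℕ) :
    ∀ j, ∑ s, (M ^ n) j s = 1 := by
  induction n with
  | zero => intro j; simp [Matrix.one_apply]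
  | succ n ih =>
    intro j
    simp only [pow_succ, Matrix.mul_apply]
    rw [Finset.sum_comm]
    simp only [← Finset.mul_sum, h1, mul_one]
    exact ih j

lemma super_const {M : Matrix (Fin m) (Fin m) ℝ} (h0 : ∀ r s, 0 ≤ M r s)
    (h1 : ∀ r, ∑ s, M r s = 1) (hirr : MatIrreducible M)
    {g : Fin m → ℝ} (hg : ∀ j, ∑ s, M j s * g s ≤ g j) (a b : Fin m) : g a = g b := by
  have : Nonempty (Fin m) := ⟨a⟩
  obtain ⟨j0, hj0⟩ := Finite.exists_min g
  suffices h : ∀ s, g s = g j0 by rw [h a, h b]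
  intro s
  obtain ⟨n, -, hn⟩ := hirr j0 s
  obtain ⟨p0, p1⟩ := mat_pow_stoch h0 hg n
  have h2 : ∑ t, (M ^ n) j0 t * (g t - g j0) ≤ 0 := by
    have := p1 j0
    simp only [mul_sub, Finset.sum_sub_distrib, ← Finset.sum_mul, mat_pow_one h1 n, one_mul]
    linarith
  have h3 : (M ^ n) j0 s * (g s - g j0) ≤ ∑ t, (M ^ n) j0 t * (g t - g j0) :=
    Finset.single_le_sum (f := fun t => (M ^ n) j0 t * (g t - g j0))
      (fun t _ => mul_nonneg (p0 _ _) (sub_nonneg.2 (hj0 t))) (Finset.mem_univ s)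
  have h4 := hj0 s
  by_contra hne
  have h5 : 0 < g s - g j0 := by
    rcases lt_or_eq_of_le h4 with h | h
    · linarith
    · exact absurd h.symm hne
  have := mul_pos hn h5
  linarith

lemma super_zero {M : Matrix (Fin m) (Fin m) ℝ} (h0 : ∀ r s, 0 ≤ M r s)
    (h1 : ∀ r, ∑ s, M r s = 1) (hirr : MatIrreducible M)
    {d g : Fin m → ℝ} {σ : ℝ} (hd : ∀ j, 0 ≤ d j) (hσ : σ ≤ 0)
    (hg : ∀ j, d j + ∑ s, M j s * g s - g j = σ) (j : Fin m) : d j = σ ∧ ∀ s, g s = g j := by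
  have hc := super_const h0 h1 hirr (g := g) (fun j => by linarith [hg j, hd j])
  have h2 : ∑ s, M j s * g s = g j := by
    rw [Finset.sum_congr rfl (fun s _ => by rw [hc s j]), ← Finset.sum_mul, h1, one_mul]
  exact ⟨by linarith [hg j], fun s => hc s j⟩

/-- The Poisson equation for the phase process. -/
lemma poisson (hm : 0 < m) {M : Matrix (Fin m) (Fin m) ℝ} (h0 : ∀ r s, 0 ≤ M r s)
    (h1 : ∀ r, ∑ s, M r s = 1) (hirr : MatIrreducible M) :
    ∃ l : (Fin m → ℝ) →ₗ[ℝ] ℝ,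
      (∀ d : Fin m → ℝ, ∃ g : Fin m → ℝ, ∀ j, d j + ∑ s, M j s * g s - g j = l d) ∧
      (∀ d : Fin m → ℝ, (∀ j, 0 ≤ d j) → 0 ≤ l d) ∧
      (∀ j, 0 < l (Pi.single j 1)) := by
  set z : Fin m := ⟨0, hm⟩
  let L : (Fin m → ℝ) →ₗ[ℝ] (Fin m → ℝ) :=
    { toFun := fun g j => g j - ∑ s, M j s * g s + g z
      map_add' := by
        intro a b; funext j
        simp only [Pi.add_apply, mul_add, Finset.sum_add_distrib]; ring
      map_smul' := by
        intro c a; funext j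
        simp only [Pi.smul_apply, smul_eq_mul, RingHom.id_apply, mul_add, mul_sub, Finset.mul_sum]
        congr 2
        exact Finset.sum_congr rfl fun _ _ => by ring }
  have hL : ∀ g j, L g j = g j - ∑ s, M j s * g s + g z := fun g j => rfl
  have hinj : Function.Injective L := by
    rw [injective_iff_map_eq_zero]
    intro g hg
    have hgj : ∀ j, g j - ∑ s, M j s * g s + g z = 0 := fun j => by
      rw [← hL, hg]; rfl
    rcases le_total (g z) 0 with h | h
    · have := super_zero h0 h1 hirr (d := fun _ => 0) (g := g) (σ := g z) (fun _ => le_rfl) h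
        (fun j => by linarith [hgj j]) z
      funext j
      rw [this.2 j, ← this.1]; rfl
    · have := super_zero h0 h1 hirr (d := fun _ => 0) (g := fun j => - g j) (σ := - g z)
        (fun _ => le_rfl) (by linarith)
        (fun j => by
          simp only [mul_neg, Finset.sum_neg_distrib]; linarith [hgj j]) z
      funext j
      have h3 := this.2 j
      have h4 := this.1
      simp only [Pi.zero_apply]
      linarith
  let e := LinearEquiv.ofInjectiveEndo L hinj
  have he : ∀ d, L (e.symm d) = d := fun d => by
    exact LinearEquiv.apply_symm_apply e d
  let l : (Fin m → ℝ) →ₗ[ℝ] ℝ := (LinearMap.proj z).comp e.symm.toLinearMap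
  have hl : ∀ d, l d = e.symm d z := fun d => rfl
  have key : ∀ (d : Fin m → ℝ) j, d j + ∑ s, M j s * (e.symm d) s - (e.symm d) j = l d := by
    intro d j
    have := congrFun (he d) j
    rw [hL] at this
    rw [hl]; linarith
  refine ⟨l, fun d => ⟨e.symm d, key d⟩, fun d hd => ?_, fun j => ?_⟩
  · by_contra hneg
    have := super_zero h0 h1 hirr hd (not_le.1 hneg).le (key d) z
    have h2 := hd z
    linarith [this.1]
  · by_contra hneg
    have h2 : ∀ i, (0 : ℝ) ≤ (Pi.single j 1 : Fin m → ℝ) i := by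
      intro i
      by_cases h : i = j
      · subst h; simp
      · simp [Pi.single_eq_of_ne h]
    have := super_zero h0 h1 hirr h2 (not_lt.1 hneg) (key _) j
    have h3 := this.1
    rw [Pi.single_eq_same] at h3
    linarith

end phase

section drift

variable {m : ℕ} {A : ℤ → Matrix (Fin m) (Fin m) ℝ}

lemma matA_summable (hphase : PhaseStochastic A) (j s : Fin m) : Summable (fun k => A k j s) := by
  have hinj : Function.Injective (fun k : ℤ => ((k, s) : ℤ × Fin m)) := by
    intro a b h; simpa using h
  have h := (hphase j).summable.comp_injective hinj
  simp only [Function.comp_def] at h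
  exact h

lemma phase_hasSum (hA0 : ∀ k r s, 0 ≤ A k r s) (hphase : PhaseStochastic A)
    (g : Fin m → ℝ) (j : Fin m) :
    HasSum (fun p : ℤ × Fin m => A p.1 j p.2 * g p.2) (∑ s, matA A j s * g s) := by
  have hs : Summable (fun p : ℤ × Fin m => A p.1 j p.2 * g p.2) := by
    refine Summable.of_norm_bounded ((hphase j).summable.mul_right (∑ s, |g s|)) (fun p => ?_)
    rw [norm_mul, Real.norm_eq_abs, Real.norm_eq_abs, abs_of_nonneg (hA0 _ _ _)]
    refine mul_le_mul_of_nonneg_left ?_ (hA0 _ _ _)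
    exact Finset.single_le_sum (f := fun s => |g s|) (fun _ _ => abs_nonneg _) (Finset.mem_univ _)
  have e : ∑' p : ℤ × Fin m, A p.1 j p.2 * g p.2 = ∑ s, matA A j s * g s := by
    have h2 := (Equiv.prodComm (Fin m) ℤ).tsum_eq (fun p : ℤ × Fin m => A p.1 j p.2 * g p.2)
    have hs2 := (Equiv.prodComm (Fin m) ℤ).summable_iff.2 hs
    refine h2.symm.trans ((Summable.tsum_prod hs2).trans ?_)
    rw [tsum_fintype]
    refine Finset.sum_congr rfl fun s _ => ?_
    exact tsum_mul_right (f := fun k : ℤ => A k j s) (a := g s)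
  rw [← e]; exact hs.hasSum

lemma matA_nonneg (hA0 : ∀ k r s, 0 ≤ A k r s) (r s : Fin m) : 0 ≤ matA A r s :=
  tsum_nonneg fun k => hA0 k r s

lemma matA_one (hA0 : ∀ k r s, 0 ≤ A k r s) (hphase : PhaseStochastic A) (r : Fin m) :
    ∑ s, matA A r s = 1 := by
  have h := phase_hasSum hA0 hphase (fun _ => 1) r
  simp only [mul_one] at h
  exact h.unique (hphase r)

lemma drift_dichotomy (hm : 0 < m) (hA0 : ∀ k r s, 0 ≤ A k r s) (hphase : PhaseStochastic A)
    (hirr : MatIrreducible (matA A))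
    (hpos : ∀ j, Summable (fun p : ℤ × Fin m => A p.1 j p.2 * max (p.1 : ℝ) 0)) :
    (∃ (K : ℕ) (σ : ℝ) (g : Fin m → ℝ), σ < 0 ∧ ∀ j,
      HasSum (fun p : ℤ × Fin m => A p.1 j p.2 * (max (p.1 : ℝ) (-(K : ℝ)) + g p.2 - g j)) σ) ∨
    ((∀ j, Summable (fun p : ℤ × Fin m => A p.1 j p.2 * |(p.1 : ℝ)|)) ∧
      ∃ (σ : ℝ) (g : Fin m → ℝ), 0 ≤ σ ∧ ∀ j,
      HasSum (fun p : ℤ × Fin m => A p.1 j p.2 * ((p.1 : ℝ) + g p.2 - g j)) σ) := by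
  classical
  obtain ⟨l, hl, hl0, hl1⟩ := poisson hm (matA_nonneg hA0) (matA_one hA0 hphase) hirr
  have comb : ∀ (u : ℤ → ℝ) (g : Fin m → ℝ) (j : Fin m) (d : ℝ),
      HasSum (fun p : ℤ × Fin m => A p.1 j p.2 * u p.1) d →
      HasSum (fun p : ℤ × Fin m => A p.1 j p.2 * (u p.1 + g p.2 - g j))
        (d + ∑ s, matA A j s * g s - g j) := by
    intro u g j d hd
    have h1 := (hd.add (phase_hasSum hA0 hphase g j)).sub ((hphase j).mul_right (g j))
    rw [one_mul] at h1
    refine hs_congr h1 ?_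
    intro p; ring
  -- truncated drifts
  have hsm : ∀ (K : ℕ) j, Summable (fun p : ℤ × Fin m =>
      A p.1 j p.2 * min (max (-(p.1 : ℝ)) 0) K) := by
    intro K j
    refine Summable.of_nonneg_of_le (fun p => ?_) (fun p => ?_)
      ((hphase j).summable.mul_right (K : ℝ))
    · exact mul_nonneg (hA0 _ _ _) (le_min (le_max_right _ _) (by positivity))
    · exact mul_le_mul_of_nonneg_left (min_le_right _ _) (hA0 _ _ _)
  set d0 : Fin m → ℝ := fun j => ∑' p : ℤ × Fin m, A p.1 j p.2 * max (p.1 : ℝ) 0 with hd0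
  set x : ℕ → Fin m → ℝ := fun K j => ∑' p : ℤ × Fin m,
      A p.1 j p.2 * min (max (-(p.1 : ℝ)) 0) K with hx
  have hid : ∀ (K : ℕ) (k : ℝ), max k (-(K : ℝ)) = max k 0 - min (max (-k) 0) K := by
    intro K k
    have hK : (0 : ℝ) ≤ K := by positivity
    rcases le_total k 0 with h | h
    · rw [max_eq_right h, max_eq_left (by linarith : (0 : ℝ) ≤ -k)]
      rcases le_total (-k) K with h2 | h2
      · rw [min_eq_left h2, max_eq_left (by linarith)]; ring
      · rw [min_eq_right h2, max_eq_right (by linarith)]; ring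
    · rw [max_eq_left h, max_eq_right (by linarith : -k ≤ 0), min_eq_left hK,
        max_eq_left (by linarith)]; ring
  have hdK : ∀ (K : ℕ) j, HasSum (fun p : ℤ × Fin m =>
      A p.1 j p.2 * max (p.1 : ℝ) (-(K : ℝ))) (d0 j - x K j) := by
    intro K j
    have h := (hpos j).hasSum.sub (hsm K j).hasSum
    refine hs_congr h ?_
    intro p
    rw [hid]; ring
  by_cases hex : ∃ K : ℕ, l (d0 - x K) < 0
  · left
    obtain ⟨K, hK⟩ := hex
    obtain ⟨g, hg⟩ := hl (d0 - x K)
    refine ⟨K, _, g, hK, fun j => ?_⟩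
    rw [← hg j]
    exact comb (fun k => max (k : ℝ) (-(K : ℝ))) g j _ (hdK K j)
  · right
    have hge : ∀ K : ℕ, 0 ≤ l (d0 - x K) := fun K => not_lt.1 fun h => hex ⟨K, h⟩
    have hx0 : ∀ K j, 0 ≤ x K j := fun K j => tsum_nonneg fun p =>
      mul_nonneg (hA0 _ _ _) (le_min (le_max_right _ _) (by positivity))
    have hxb : ∀ K j, x K j ≤ l d0 / l (Pi.single j 1) := by
      intro K j
      rw [le_div_iff₀ (hl1 j)]
      have h1 := hl0 (x K - x K j • (Pi.single j 1 : Fin m → ℝ)) (fun i => by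
        simp only [Pi.sub_apply, Pi.smul_apply, smul_eq_mul]
        by_cases h : i = j
        · subst h; simp
        · simp [Pi.single_eq_of_ne h, hx0])
      have h2 := hge K
      rw [map_sub] at h1 h2
      rw [map_smul, smul_eq_mul] at h1
      linarith
    have hneg : ∀ j, Summable (fun p : ℤ × Fin m => A p.1 j p.2 * max (-(p.1 : ℝ)) 0) := by
      intro j
      refine summable_of_sum_le (c := l d0 / l (Pi.single j 1))
        (fun p => mul_nonneg (hA0 _ _ _) (le_max_right _ _)) (fun u => ?_)
      set K := u.sup (fun p => p.1.natAbs) with hK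
      refine le_trans ?_ (hxb K j)
      refine le_trans (le_of_eq ?_) ((hsm K j).sum_le_tsum u (fun p _ =>
        mul_nonneg (hA0 _ _ _) (le_min (le_max_right _ _) (by positivity))))
      refine Finset.sum_congr rfl fun p hp => ?_
      have hp1 : p.1.natAbs ≤ K := Finset.le_sup (f := fun p : ℤ × Fin m => p.1.natAbs) hp
      have hp2 : -p.1 ≤ (K : ℤ) := by omega
      have hp3 : -(p.1 : ℝ) ≤ K := by exact_mod_cast hp2
      rw [min_eq_left (max_le hp3 (by positivity))]
    have habs : ∀ j, Summable (fun p : ℤ × Fin m => A p.1 j p.2 * |(p.1 : ℝ)|) := by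
      intro j
      refine ((hpos j).add (hneg j)).congr (fun p => ?_)
      rw [← mul_add]
      congr 1
      rcases le_total (p.1 : ℝ) 0 with h | h
      · rw [abs_of_nonpos h, max_eq_right h, max_eq_left (by linarith)]; ring
      · rw [abs_of_nonneg h, max_eq_left h, max_eq_right (by linarith)]; ring
    refine ⟨habs, ?_⟩
    have hd1 : ∀ j, Summable (fun p : ℤ × Fin m => A p.1 j p.2 * (p.1 : ℝ)) := by
      intro j
      refine Summable.of_norm_bounded (habs j) (fun p => ?_)
      rw [norm_mul, Real.norm_eq_abs, Real.norm_eq_abs, abs_of_nonneg (hA0 _ _ _)]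
    set di : Fin m → ℝ := fun j => ∑' p : ℤ × Fin m, A p.1 j p.2 * (p.1 : ℝ) with hdi
    have hlim : Tendsto (fun K : ℕ => d0 - x K) atTop (𝓝 di) := by
      rw [tendsto_pi_nhds]
      intro j
      have e : (fun K : ℕ => (d0 - x K) j) = fun K : ℕ => ∑' p : ℤ × Fin m,
          A p.1 j p.2 * max (p.1 : ℝ) (-(K : ℝ)) := by
        funext K
        exact (hdK K j).tsum_eq.symm
      rw [e]
      refine tendsto_tsum_of_dominated_convergence (habs j) (fun p => ?_)
        (Eventually.of_forall fun K p => ?_)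
      · refine tendsto_const_nhds.congr' ?_
        filter_upwards [eventually_ge_atTop p.1.natAbs] with K hK
        have hp2 : -(K : ℤ) ≤ p.1 := by omega
        have hp3 : -(K : ℝ) ≤ p.1 := by exact_mod_cast hp2
        rw [max_eq_left hp3]
      · rw [norm_mul, Real.norm_eq_abs, Real.norm_eq_abs, abs_of_nonneg (hA0 _ _ _)]
        refine mul_le_mul_of_nonneg_left ?_ (hA0 _ _ _)
        have hK : (0 : ℝ) ≤ K := by positivity
        rw [abs_le]
        constructor
        · exact (neg_abs_le _).trans (le_max_left _ _)
        · exact max_le (le_abs_self _) (by linarith [abs_nonneg (p.1 : ℝ)])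
    have hlc : Continuous l := LinearMap.continuous_of_finiteDimensional l
    have hσ : 0 ≤ l di :=
      ge_of_tendsto' ((hlc.tendsto di).comp hlim) hge
    obtain ⟨g, hg⟩ := hl di
    refine ⟨l di, g, hσ, fun j => ?_⟩
    rw [← hg j]
    exact comb (fun k => (k : ℝ)) g j _ (hd1 j).hasSum

end drift


/-! ### A positive recurrent chain has negative (truncated) drift -/

section nodrift

variable {m : ℕ} {A B : ℤ → Matrix (Fin m) (Fin m) ℝ}

lemma ok_of_rows {F : S m → ℝ} (h0 : ∀ j, Summable (fun y => P A B (0, j) y * F y))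
    (h1 : ∀ (i : ℕ) j, Summable (fun y => P A B (i + 1, j) y * F y)) : Ok (P A B) F := by
  rintro ⟨i, j⟩
  cases i with
  | zero => exact h0 j
  | succ i => exact h1 i j

theorem nonneg_drift_false (hm : 0 < m)
    (hA0 : ∀ k r s, 0 ≤ A k r s) (hB0 : ∀ k r s, 0 ≤ B k r s)
    (hP : Stochastic (P A B)) (hirr : ChainIrreducible (P A B)) (hphase : PhaseStochastic A)
    (pd : S m → ℝ) (hpd : IsStationary (P A B) pd)
    (hB1 : ∀ j, Summable (fun y => P A B (0, j) y * (y.1 : ℝ)))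
    (habs : ∀ j, Summable (fun p : ℤ × Fin m => A p.1 j p.2 * |(p.1 : ℝ)|))
    {σ : ℝ} {g : Fin m → ℝ} (hσ : 0 ≤ σ)
    (hg : ∀ j, HasSum (fun p : ℤ × Fin m => A p.1 j p.2 * ((p.1 : ℝ) + g p.2 - g j)) σ) :
    False := by
  set L : ℝ := ∑ s, |g s| with hL
  have hgL : ∀ s, |g s| ≤ L := fun s =>
    Finset.single_le_sum (f := fun s => |g s|) (fun _ _ => abs_nonneg _) (Finset.mem_univ s)
  have hgU : ∀ s, g s ≤ L := fun s => (le_abs_self _).trans (hgL s)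
  have hgD : ∀ s, -L ≤ g s := fun s => (neg_le_neg (hgL s)).trans (neg_abs_le _)
  set f : S m → ℝ := fun y => max 0 ((y.1 : ℝ) + g y.2 - L) with hf
  have hf0 : ∀ y, 0 ≤ f y := fun y => le_max_left _ _
  have hf1 : ∀ y, f y ≤ (y.1 : ℝ) := fun y => max_le (by positivity) (by linarith [hgU y.2])
  have hfz : ∀ s, f (0, s) = 0 := fun s => by
    refine le_antisymm ?_ (hf0 _)
    simpa using hf1 (0, s)
  have hok1 : Ok (P A B) (fun y => (y.1 : ℝ)) := by
    refine ok_of_rows hB1 (fun i j => ?_)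
    rw [row_summable_iff]
    have h' := (((habs j).add ((hphase j).summable.mul_right ((i : ℝ) + 1)))).comp_injective
      (inj_shift m i)
    simp only [Function.comp_def] at h'
    refine Summable.of_nonneg_of_le (fun p => ?_) (fun p => ?_) h'
    · exact mul_nonneg (hA0 _ _ _) (by positivity)
    · rw [← mul_add]
      refine mul_le_mul_of_nonneg_left ?_ (hA0 _ _ _)
      have := le_abs_self ((((p.1 : ℤ) - (i : ℤ) : ℤ)) : ℝ)
      push_cast at this ⊢
      linarith
  have hok : Ok (P A B) f := hok1.of_abs_le hP (fun y => by
    rw [abs_of_nonneg (hf0 y)]; exact hf1 y)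
  -- `f` is subharmonic
  have hsub : ∀ x, f x ≤ T (P A B) f x := by
    rintro ⟨i, j⟩
    cases i with
    | zero => rw [hfz]; exact T_nonneg hP hf0 _
    | succ i =>
      have hs : HasSum (fun p : ℤ × Fin m => A p.1 j p.2 * ((i : ℝ) + 1 + p.1 + g p.2 - L))
          (σ + ((i : ℝ) + 1 + g j - L)) := by
        have h := (hg j).add ((hphase j).mul_right ((i : ℝ) + 1 + g j - L))
        rw [one_mul] at h
        exact hs_congr h (fun p => by ring)
      have h := row_ge hA0 hB0 hP hphase i j (F := f)
        (G := fun p => (i : ℝ) + 1 + p.1 + g p.2 - L) (c := 0) (hok _) hs.summable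
        (fun k s => by
          refine le_trans (le_of_eq ?_) (le_max_right _ _)
          push_cast; ring)
        (fun s => hf0 _)
        (fun p hp => by
          have hp' : (p.1 : ℝ) + 1 ≤ -(i : ℝ) := by exact_mod_cast hp
          linarith [hgU p.2])
      rw [hs.tsum_eq] at h
      refine max_le (T_nonneg hP hf0 _) ?_
      push_cast
      linarith
  -- truncations
  set fN : ℕ → S m → ℝ := fun N y => min (f y) N with hfN
  have hfN0 : ∀ N y, 0 ≤ fN N y := fun N y => le_min (hf0 y) (by positivity)
  have hfNabs : ∀ N y, |fN N y| ≤ N := fun N y => by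
    rw [abs_of_nonneg (hfN0 N y)]; exact min_le_right _ _
  have hfNok : ∀ N, Ok (P A B) (fN N) := fun N => ok_bdd hP (hfNabs N)
  set C : ℝ := ∑ j, ∑' p : ℤ × Fin m, A p.1 j p.2 * |(p.1 : ℝ)| + 2 * L with hC
  have hterm : ∀ j, 0 ≤ ∑' p : ℤ × Fin m, A p.1 j p.2 * |(p.1 : ℝ)| := fun j =>
    tsum_nonneg fun p => mul_nonneg (hA0 _ _ _) (abs_nonneg _)
  have hL0 : 0 ≤ L := Finset.sum_nonneg fun _ _ => abs_nonneg _
  have hC0 : 0 ≤ C := add_nonneg (Finset.sum_nonneg fun j _ => hterm j) (by linarith)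
  set D : ℕ → S m → ℝ := fun N x => T (P A B) (fN N) x - fN N x with hD
  have hDC : ∀ N x, -C ≤ D N x := by
    rintro N ⟨i, j⟩
    simp only [hD]
    cases i with
    | zero =>
      have h1 : fN N (0, j) = 0 := by simp [hfN, hfz]
      rw [h1]
      have := T_nonneg hP (hfN0 N) (0, j)
      linarith
    | succ i =>
      have hs : HasSum (fun p : ℤ × Fin m =>
          A p.1 j p.2 * (fN N (i + 1, j) - |(p.1 : ℝ)| - 2 * L))
          ((fN N (i + 1, j) - 2 * L) - ∑' p : ℤ × Fin m, A p.1 j p.2 * |(p.1 : ℝ)|) := by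
        have h := ((hphase j).mul_right (fN N (i + 1, j) - 2 * L)).sub (habs j).hasSum
        rw [one_mul] at h
        exact hs_congr h (fun p => by ring)
      have h := row_ge hA0 hB0 hP hphase i j (F := fN N)
        (G := fun p => fN N (i + 1, j) - |(p.1 : ℝ)| - 2 * L) (c := 0) (hfNok N _) hs.summable
        (fun k s => by
          have a1 : f (i + 1, j) - |((((k : ℤ) - (i : ℤ) : ℤ)) : ℝ)| - 2 * L ≤ f (k + 1, s) := by
            have b1 := neg_abs_le ((((k : ℤ) - (i : ℤ) : ℤ)) : ℝ)
            have b2 := abs_nonneg ((((k : ℤ) - (i : ℤ) : ℤ)) : ℝ)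
            have b3 : f (i + 1, j) ≤ f (k + 1, s) + |((((k : ℤ) - (i : ℤ) : ℤ)) : ℝ)| + 2 * L := by
              refine max_le ?_ ?_
              · have := hf0 (k + 1, s); linarith
              · have b4 : ((k + 1 : ℕ) : ℝ) + g s - L ≤ f (k + 1, s) := le_max_right _ _
                have b5 := hgU j
                have b6 := hgD s
                push_cast at b1 b4 ⊢
                linarith
            linarith
          have a2 := abs_nonneg ((((k : ℤ) - (i : ℤ) : ℤ)) : ℝ)
          have a3 : fN N (i + 1, j) ≤ f (i + 1, j) := min_le_left _ _
          have a4 : fN N (i + 1, j) ≤ N := min_le_right _ _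
          refine le_min ?_ ?_
          · linarith
          · linarith)
        (fun s => hfN0 N _)
        (fun p hp => by
          have hp' : (p.1 : ℝ) + 1 ≤ -(i : ℝ) := by exact_mod_cast hp
          have a1 := neg_abs_le (p.1 : ℝ)
          have a3 : fN N (i + 1, j) ≤ f (i + 1, j) := min_le_left _ _
          have a4 := hf1 (i + 1, j)
          push_cast at a4
          linarith)
      rw [hs.tsum_eq] at h
      have h2 : ∑' p : ℤ × Fin m, A p.1 j p.2 * |(p.1 : ℝ)|
          ≤ ∑ j, ∑' p : ℤ × Fin m, A p.1 j p.2 * |(p.1 : ℝ)| :=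
        Finset.single_le_sum (f := fun j => ∑' p : ℤ × Fin m, A p.1 j p.2 * |(p.1 : ℝ)|)
          (fun j _ => hterm j) (Finset.mem_univ j)
      rw [hC]
      linarith
  have hDsum : ∀ N, HasSum (fun x => pd x * D N x) 0 := by
    intro N
    obtain ⟨h1, h2⟩ := stat_bdd hP hpd (hfNabs N)
    have h3 := h2.sub h1.hasSum
    rw [sub_self] at h3
    exact hs_congr h3 (fun x => by simp only [hD]; ring)
  have hfNlim : ∀ x, Tendsto (fun N => fN N x) atTop (𝓝 (f x)) := by
    intro x
    refine tendsto_const_nhds.congr' ?_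
    obtain ⟨N0, hN0⟩ := exists_nat_ge (f x)
    filter_upwards [eventually_ge_atTop N0] with N hN
    simp only [hfN]
    rw [min_eq_left (hN0.trans (by exact_mod_cast hN))]
  have hDlim : ∀ x, Tendsto (fun N => D N x) atTop (𝓝 (T (P A B) f x - f x)) := by
    intro x
    refine Tendsto.sub ?_ (hfNlim x)
    unfold T
    refine tendsto_tsum_of_dominated_convergence (hok x) (fun z => ?_)
      (Eventually.of_forall fun N z => ?_)
    · exact (hfNlim z).const_mul _
    · rw [norm_mul, Real.norm_eq_abs, Real.norm_eq_abs, abs_of_nonneg (hP.1 x z),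
        abs_of_nonneg (hfN0 N z)]
      exact mul_le_mul_of_nonneg_left (min_le_left _ _) (hP.1 x z)
  set h : ℕ → S m → ℝ := fun N x => min (D N x) 0 with hh
  have hhb : ∀ N x, |h N x| ≤ C := by
    intro N x
    rw [abs_le]
    exact ⟨le_min (hDC N x) (by linarith), (min_le_right _ _).trans hC0⟩
  have hhlim : ∀ x, Tendsto (fun N => h N x) atTop (𝓝 0) := by
    intro x
    have h1 := (hDlim x).min (tendsto_const_nhds (x := (0 : ℝ)))
    rwa [min_eq_right (sub_nonneg.2 (hsub x))] at h1
  have hhs : ∀ N, Summable (fun x => pd x * h N x) := fun N => by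
    refine Summable.of_norm_bounded (hpd.2.1.summable.mul_right C) (fun x => ?_)
    rw [norm_mul, Real.norm_eq_abs, Real.norm_eq_abs, abs_of_nonneg (hpd.1 x)]
    exact mul_le_mul_of_nonneg_left (hhb N x) (hpd.1 x)
  have hhsum : Tendsto (fun N => ∑' x, pd x * h N x) atTop (𝓝 0) := by
    have h1 : Tendsto (fun N => ∑' x, pd x * h N x) atTop (𝓝 (∑' x : S m, (0 : ℝ))) := by
      refine tendsto_tsum_of_dominated_convergence (hpd.2.1.summable.mul_right C) (fun x => ?_)
        (Eventually.of_forall fun N x => ?_)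
      · simpa using (hhlim x).const_mul (pd x)
      · rw [norm_mul, Real.norm_eq_abs, Real.norm_eq_abs, abs_of_nonneg (hpd.1 x)]
        exact mul_le_mul_of_nonneg_left (hhb N x) (hpd.1 x)
    simpa using h1
  have hharm : ∀ x, T (P A B) f x ≤ f x := by
    intro x
    have hin : ∀ N, pd x * (D N x - h N x) + ∑' y, pd y * h N y ≤ 0 := by
      intro N
      have h1 := (hDsum N).sub (hhs N).hasSum
      have h2 : pd x * D N x - pd x * h N x ≤ 0 - ∑' y, pd y * h N y := by
        refine le_hasSum h1 x (fun y _ => ?_)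
        rw [← mul_sub]
        exact mul_nonneg (hpd.1 y) (sub_nonneg.2 (min_le_left _ _))
      linarith
    have h3 : Tendsto (fun N => pd x * (D N x - h N x) + ∑' y, pd y * h N y) atTop
        (𝓝 (pd x * (T (P A B) f x - f x - 0) + 0)) :=
      (((hDlim x).sub (hhlim x)).const_mul _).add hhsum
    have h4 := le_of_tendsto' h3 hin
    have h5 := pd_pos hP hirr hpd x
    by_contra hcon
    have h6 := mul_pos h5 (sub_pos.2 (not_le.1 hcon))
    linarith
  obtain ⟨i, hi⟩ := exists_nat_gt (2 * L)
  obtain ⟨n, -, hn⟩ := hirr (0, ⟨0, hm⟩) (i, ⟨0, hm⟩)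
  have h1 := Pn_le_of_super hP hok hf0 hharm (i, ⟨0, hm⟩) n (0, ⟨0, hm⟩)
  rw [hfz] at h1
  have h2 : 0 < f (i, ⟨0, hm⟩) := by
    refine lt_max_of_lt_right ?_
    have := hgD ⟨0, hm⟩
    simp only
    linarith
  have := mul_pos h2 hn
  linarith

end nodrift


/-! ### Light tails imply geometric ergodicity -/

section backward

variable {m : ℕ} {A B : ℤ → Matrix (Fin m) (Fin m) ℝ}

lemma light_common {C : ℤ → Matrix (Fin m) (Fin m) ℝ} (hm : 0 < m)
    (hC0 : ∀ k r s, 0 ≤ C k r s) (h : LightMat C) :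
    ∃ ε > (0 : ℝ), ∀ ε' ≤ ε, ∀ r s,
      Summable fun k : ℕ => C ((k : ℤ) + 1) r s * Real.exp (ε' * ((k : ℝ) + 1)) := by
  choose e he0 he using h
  have : Nonempty (Fin m × Fin m) := ⟨(⟨0, hm⟩, ⟨0, hm⟩)⟩
  obtain ⟨q, hq⟩ := Finite.exists_min (fun q : Fin m × Fin m => e q.1 q.2)
  refine ⟨e q.1 q.2, he0 _ _, fun ε' hε' r s => ?_⟩
  refine Summable.of_nonneg_of_le (fun k => mul_nonneg (hC0 _ _ _) (Real.exp_pos _).le)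
    (fun k => ?_) (he r s)
  refine mul_le_mul_of_nonneg_left ?_ (hC0 _ _ _)
  rw [Real.exp_le_exp]
  exact mul_le_mul_of_nonneg_right (hε'.trans (hq (r, s))) (by positivity)

lemma summable_fin_prod {α : Type*} {f : α × Fin m → ℝ} (h0 : ∀ p, 0 ≤ f p)
    (h : ∀ s, Summable (fun k => f (k, s))) : Summable f := by
  refine (Equiv.prodComm (Fin m) α).summable_iff.1 ?_
  refine (summable_prod_of_nonneg (fun p => h0 _)).2 ⟨fun s => h s, ?_⟩
  exact (hasSum_fintype _).summable

lemma exp_quad (u : ℝ) : Real.exp u ≤ 1 + u + u ^ 2 * Real.exp |u| := by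
  have h1 : Real.exp u - 1 ≤ u * Real.exp u := by
    have h := Real.add_one_le_exp (-u)
    have h2 := mul_le_mul_of_nonneg_right h (Real.exp_pos u).le
    rw [← Real.exp_add, neg_add_cancel, Real.exp_zero] at h2
    linarith
  have h3 := Real.add_one_le_exp u
  rcases le_total 0 u with hu | hu
  · rw [abs_of_nonneg hu]
    have := mul_le_mul_of_nonneg_left h1 hu
    nlinarith
  · have h4 : (1 : ℝ) ≤ Real.exp |u| := Real.one_le_exp (abs_nonneg u)
    have h5 : u * (Real.exp u - 1) ≤ u ^ 2 := by nlinarith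
    have h6 : u ^ 2 ≤ u ^ 2 * Real.exp |u| := le_mul_of_one_le_right (sq_nonneg u) h4
    nlinarith

lemma exp_moment (hA0 : ∀ k r s, 0 ≤ A k r s) (hphase : PhaseStochastic A)
    {ε : ℝ} (hε : 0 < ε)
    (hAe : ∀ j, Summable (fun p : ℤ × Fin m => A p.1 j p.2 * Real.exp (ε * max (p.1 : ℝ) 0)))
    {K : ℕ} {σ L : ℝ} {w : Fin m → ℝ} (hσ : σ < 0) (hw0 : ∀ s, 0 ≤ w s) (hwL : ∀ s, w s ≤ L)
    (hL : 0 ≤ L)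
    (hw : ∀ j, HasSum (fun p : ℤ × Fin m =>
      A p.1 j p.2 * (max (p.1 : ℝ) (-(K : ℝ)) + w p.2 - w j)) σ) :
    ∃ γ > (0 : ℝ), γ ≤ ε ∧ ∃ l, 0 ≤ l ∧ l < 1 ∧ ∀ j,
      Summable (fun p : ℤ × Fin m =>
        A p.1 j p.2 * Real.exp (γ * (max (p.1 : ℝ) (-(K : ℝ)) + w p.2 - w j))) ∧
      ∑' p : ℤ × Fin m,
        A p.1 j p.2 * Real.exp (γ * (max (p.1 : ℝ) (-(K : ℝ)) + w p.2 - w j)) ≤ l := by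
  set g0 : ℝ := ε / 2 with hg0
  have hg00 : 0 < g0 := by positivity
  set c0 : ℝ := 2 / g0 ^ 2 * Real.exp (ε * (K + L)) with hc0
  have hc00 : 0 < c0 := by positivity
  set Mx : ℝ := ∑ j, ∑' p : ℤ × Fin m, A p.1 j p.2 * Real.exp (ε * max (p.1 : ℝ) 0) with hMx
  have hterm : ∀ j, 0 ≤ ∑' p : ℤ × Fin m, A p.1 j p.2 * Real.exp (ε * max (p.1 : ℝ) 0) :=
    fun j => tsum_nonneg fun p => mul_nonneg (hA0 _ _ _) (Real.exp_pos _).le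
  have hMx0 : 0 ≤ Mx := Finset.sum_nonneg fun j _ => hterm j
  set γ : ℝ := min g0 (-σ / (2 * (c0 * Mx + 1))) with hγ
  have hden : 0 < c0 * Mx + 1 := by positivity
  have hγ0 : 0 < γ := lt_min hg00 (div_pos (by linarith) (by linarith))
  have hγ1 : γ ≤ g0 := min_le_left _ _
  have hγ2 : γ * (c0 * Mx) ≤ -σ / 2 := by
    have h1 : γ ≤ -σ / (2 * (c0 * Mx + 1)) := min_le_right _ _
    rw [le_div_iff₀ (by linarith)] at h1
    nlinarith
  have hpt : ∀ j (p : ℤ × Fin m),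
      Real.exp (γ * (max (p.1 : ℝ) (-(K : ℝ)) + w p.2 - w j)) ≤
        1 + γ * (max (p.1 : ℝ) (-(K : ℝ)) + w p.2 - w j)
          + γ ^ 2 * c0 * Real.exp (ε * max (p.1 : ℝ) 0) := by
    intro j p
    set X : ℝ := max (p.1 : ℝ) (-(K : ℝ)) + w p.2 - w j with hX
    set Y : ℝ := max (p.1 : ℝ) 0 + K + L with hY
    have hK : (0 : ℝ) ≤ K := by positivity
    have hY0 : 0 ≤ Y := by
      have := le_max_right (p.1 : ℝ) 0
      linarith
    have hXY : |X| ≤ Y := by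
      have a1 := le_max_right (p.1 : ℝ) 0
      have a2 := le_max_left (p.1 : ℝ) 0
      have a3 := le_max_right (p.1 : ℝ) (-(K : ℝ))
      have a4 : max (p.1 : ℝ) (-(K : ℝ)) ≤ max (p.1 : ℝ) 0 := max_le a2 (by linarith)
      rw [abs_le]
      constructor <;> linarith [hw0 p.2, hw0 j, hwL p.2, hwL j]
    have h1 := exp_quad (γ * X)
    have h2 : |γ * X| ≤ g0 * Y := by
      rw [abs_mul, abs_of_pos hγ0]
      exact mul_le_mul hγ1 hXY (abs_nonneg _) hg00.le
    have h3 : X ^ 2 ≤ Y ^ 2 := by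
      rw [← sq_abs X]
      exact pow_le_pow_left₀ (abs_nonneg _) hXY 2
    have h4 : Y ^ 2 ≤ 2 / g0 ^ 2 * Real.exp (g0 * Y) := by
      have := Real.quadratic_le_exp_of_nonneg (x := g0 * Y) (by positivity)
      rw [div_mul_eq_mul_div, le_div_iff₀ (by positivity)]
      nlinarith [mul_nonneg hg00.le hY0]
    have h5 : X ^ 2 * Real.exp |γ * X| ≤ c0 * Real.exp (ε * max (p.1 : ℝ) 0) := by
      calc X ^ 2 * Real.exp |γ * X| ≤ (2 / g0 ^ 2 * Real.exp (g0 * Y)) * Real.exp (g0 * Y) :=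
            mul_le_mul (h3.trans h4) (Real.exp_le_exp.2 h2) (Real.exp_pos _).le (by positivity)
        _ = c0 * Real.exp (ε * max (p.1 : ℝ) 0) := by
            rw [hc0, mul_assoc, mul_assoc, ← Real.exp_add, ← Real.exp_add]
            congr 2
            rw [hY, hg0]; ring
    have h6 := mul_le_mul_of_nonneg_left h5 (sq_nonneg γ)
    rw [mul_pow] at h1
    nlinarith
  have hbs : ∀ j, HasSum (fun p : ℤ × Fin m => A p.1 j p.2 *
        (1 + γ * (max (p.1 : ℝ) (-(K : ℝ)) + w p.2 - w j)
          + γ ^ 2 * c0 * Real.exp (ε * max (p.1 : ℝ) 0)))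
      (1 + γ * σ + γ ^ 2 * c0 *
        ∑' p : ℤ × Fin m, A p.1 j p.2 * Real.exp (ε * max (p.1 : ℝ) 0)) := by
    intro j
    have h := ((hphase j).add ((hw j).mul_left γ)).add ((hAe j).hasSum.mul_left (γ ^ 2 * c0))
    exact hs_congr h (fun p => by ring)
  refine ⟨γ, hγ0, by linarith, max 0 (1 + γ * σ / 2), le_max_left _ _,
    max_lt one_pos (by nlinarith), fun j => ?_⟩
  have hsum : Summable (fun p : ℤ × Fin m =>
        A p.1 j p.2 * Real.exp (γ * (max (p.1 : ℝ) (-(K : ℝ)) + w p.2 - w j))) :=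
    Summable.of_nonneg_of_le (fun p => mul_nonneg (hA0 _ _ _) (Real.exp_pos _).le)
      (fun p => mul_le_mul_of_nonneg_left (hpt j p) (hA0 _ _ _)) (hbs j).summable
  refine ⟨hsum, le_trans ?_ (le_max_right _ _)⟩
  have h1 := hsum.tsum_le_tsum
    (fun p => mul_le_mul_of_nonneg_left (hpt j p) (hA0 _ _ _)) (hbs j).summable
  rw [(hbs j).tsum_eq] at h1
  have h2 : ∑' p : ℤ × Fin m, A p.1 j p.2 * Real.exp (ε * max (p.1 : ℝ) 0) ≤ Mx :=
    Finset.single_le_sum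
      (f := fun j => ∑' p : ℤ × Fin m, A p.1 j p.2 * Real.exp (ε * max (p.1 : ℝ) 0))
      (fun j _ => hterm j) (Finset.mem_univ j)
  have h3 := mul_le_mul_of_nonneg_left h2 (show 0 ≤ γ ^ 2 * c0 by positivity)
  have h4 := mul_le_mul_of_nonneg_left hγ2 hγ0.le
  nlinarith

theorem geometric_of_drift (hm : 0 < m)
    (hA0 : ∀ k r s, 0 ≤ A k r s) (hB0 : ∀ k r s, 0 ≤ B k r s)
    (hP : Stochastic (P A B)) (hirr : ChainIrreducible (P A B)) (hap : ChainAperiodic (P A B))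
    (hphase : PhaseStochastic A)
    (pd : S m → ℝ) (hpd : IsStationary (P A B) pd)
    {ε : ℝ} (hε : 0 < ε)
    (hAe : ∀ j, Summable (fun p : ℤ × Fin m => A p.1 j p.2 * Real.exp (ε * max (p.1 : ℝ) 0)))
    (hBe : ∀ j, Summable (fun y => P A B (0, j) y * Real.exp (ε * (y.1 : ℝ))))
    {K : ℕ} {σ : ℝ} {g : Fin m → ℝ} (hσ : σ < 0)
    (hg : ∀ j, HasSum (fun p : ℤ × Fin m =>
      A p.1 j p.2 * (max (p.1 : ℝ) (-(K : ℝ)) + g p.2 - g j)) σ) :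
    ∃ ρ : ℝ, 0 ≤ ρ ∧ ρ < 1 ∧ ∃ M : S m → S m → ℝ,
        ∀ (x y : S m) (n : ℕ), |Pn (P A B) n x y - pd y| ≤ M x y * ρ ^ n := by
  set L0 : ℝ := ∑ s, |g s| with hL0
  have hgL : ∀ s, |g s| ≤ L0 := fun s =>
    Finset.single_le_sum (f := fun s => |g s|) (fun _ _ => abs_nonneg _) (Finset.mem_univ s)
  obtain ⟨w, hwdef⟩ : ∃ w : Fin m → ℝ, ∀ s, w s = g s + L0 := ⟨fun s => g s + L0, fun s => rfl⟩
  obtain ⟨L, hLdef⟩ : ∃ L : ℝ, L = 2 * L0 := ⟨_, rfl⟩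
  have hw0 : ∀ s, 0 ≤ w s := fun s => by
    rw [hwdef]; linarith [neg_abs_le (g s), hgL s]
  have hwL : ∀ s, w s ≤ L := fun s => by
    rw [hwdef, hLdef]; linarith [le_abs_self (g s), hgL s]
  have hL : 0 ≤ L := by
    rw [hLdef]
    have : 0 ≤ L0 := Finset.sum_nonneg fun _ _ => abs_nonneg _
    linarith
  have hw : ∀ j, HasSum (fun p : ℤ × Fin m =>
      A p.1 j p.2 * (max (p.1 : ℝ) (-(K : ℝ)) + w p.2 - w j)) σ := fun j =>
    hs_congr (hg j) (fun p => by rw [hwdef, hwdef]; ring)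
  obtain ⟨γ, hγ0, hγε, l, hl0, hl1, hmom⟩ :=
    exp_moment hA0 hphase hε hAe hσ hw0 hwL hL hw
  set V : S m → ℝ := fun y => Real.exp (γ * ((y.1 : ℝ) + w y.2)) with hV
  have hVpos : ∀ y, 0 < V y := fun y => Real.exp_pos _
  have hV1 : ∀ y, 1 ≤ V y := fun y =>
    Real.one_le_exp (mul_nonneg hγ0.le (add_nonneg (by positivity) (hw0 _)))
  have hVok : Ok (P A B) V := by
    refine ok_of_rows (fun j => ?_) (fun i j => ?_)
    · refine Summable.of_nonneg_of_le (fun y => mul_nonneg (hP.1 _ _) (hVpos y).le) (fun y => ?_)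
        ((hBe j).mul_right (Real.exp (γ * L)))
      rw [mul_assoc, ← Real.exp_add]
      refine mul_le_mul_of_nonneg_left ?_ (hP.1 _ _)
      simp only [hV]
      rw [Real.exp_le_exp]
      have a1 := mul_le_mul_of_nonneg_left (hwL y.2) hγ0.le
      have a2 := mul_le_mul_of_nonneg_right hγε (show (0 : ℝ) ≤ (y.1 : ℝ) by positivity)
      linarith
    · rw [row_summable_iff]
      have h' := ((hAe j).mul_right (Real.exp (γ * ((i : ℝ) + 1 + L)))).comp_injective
        (inj_shift m i)
      simp only [Function.comp_def] at h'
      refine Summable.of_nonneg_of_le (fun p => mul_nonneg (hA0 _ _ _) (hVpos _).le)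
        (fun p => ?_) h'
      rw [mul_assoc, ← Real.exp_add]
      refine mul_le_mul_of_nonneg_left ?_ (hA0 _ _ _)
      simp only [hV]
      rw [Real.exp_le_exp]
      push_cast
      have a1 := mul_le_mul_of_nonneg_left (hwL p.2) hγ0.le
      have a2 := mul_le_mul_of_nonneg_right hγε (le_max_right ((p.1 : ℝ) - (i : ℝ)) 0)
      have a3 := mul_le_mul_of_nonneg_left (le_max_left ((p.1 : ℝ) - (i : ℝ)) 0) hγ0.le
      linarith
  obtain ⟨n0, hn0⟩ := exists_nat_gt ((K : ℝ) + L)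
  set b : ℝ := ∑ x ∈ Finset.range n0 ×ˢ (Finset.univ : Finset (Fin m)), T (P A B) V x with hb
  have hTV0 : ∀ x, 0 ≤ T (P A B) V x := T_nonneg hP (fun y => (hVpos y).le)
  have hb0 : 0 ≤ b := Finset.sum_nonneg fun x _ => hTV0 x
  refine harris hP hirr hap hpd (0, ⟨0, hm⟩) hV1 hVok hl0 hl1 hb0 ?_ ?_
  · rintro ⟨i, j⟩
    by_cases hi : i < n0
    · have h1 : T (P A B) V (i, j) ≤ b :=
        Finset.single_le_sum (f := fun x => T (P A B) V x) (fun x _ => hTV0 x)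
          (by simp [hi])
      have h2 := mul_nonneg hl0 (hVpos (i, j)).le
      linarith
    · have hi' : n0 ≤ i := not_lt.1 hi
      have hi2 : (n0 : ℝ) ≤ i := by exact_mod_cast hi'
      have hK : (0 : ℝ) ≤ K := by positivity
      cases i with
      | zero =>
        exfalso
        push_cast at hi2
        linarith
      | succ i =>
        push_cast at hi2
        obtain ⟨hs, hle⟩ := hmom j
        have e : ∀ p : ℤ × Fin m,
            A p.1 j p.2 * Real.exp (γ * ((i : ℝ) + 1 + max (p.1 : ℝ) (-(K : ℝ)) + w p.2))
            = V (i + 1, j) *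
              (A p.1 j p.2 * Real.exp (γ * (max (p.1 : ℝ) (-(K : ℝ)) + w p.2 - w j))) := by
          intro p
          simp only [hV]
          rw [mul_left_comm, ← Real.exp_add]
          congr 2
          push_cast; ring
        have hrow := row_le hA0 hB0 hP hphase i j (F := V)
          (G := fun p => Real.exp (γ * ((i : ℝ) + 1 + max (p.1 : ℝ) (-(K : ℝ)) + w p.2)))
          (c := Real.exp (γ * L)) (hVok _) ((hs.mul_left (V (i + 1, j))).congr (fun p => (e p).symm))
          (fun k s => by
            simp only [hV]
            rw [Real.exp_le_exp]
            refine mul_le_mul_of_nonneg_left ?_ hγ0.le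
            have := le_max_left ((((k : ℤ) - (i : ℤ) : ℤ)) : ℝ) (-(K : ℝ))
            push_cast at this ⊢
            linarith)
          (fun s => by
            simp only [hV]
            rw [Real.exp_le_exp]
            refine mul_le_mul_of_nonneg_left ?_ hγ0.le
            have := hwL s
            push_cast
            linarith)
          (fun p hp => by
            rw [Real.exp_le_exp]
            refine mul_le_mul_of_nonneg_left ?_ hγ0.le
            have := le_max_right (p.1 : ℝ) (-(K : ℝ))
            linarith [hw0 p.2])
        rw [tsum_congr e, tsum_mul_left] at hrow
        have h2 := mul_le_mul_of_nonneg_left hle (hVpos (i + 1, j)).le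
        linarith
  · intro R
    obtain ⟨n1, hn1⟩ := exists_nat_gt (R / γ)
    refine (Finset.finite_toSet (Finset.range n1 ×ˢ (Finset.univ : Finset (Fin m)))).subset ?_
    rintro ⟨i, j⟩ hx
    have hx' : V (i, j) ≤ R := hx
    have h1 := Real.add_one_le_exp (γ * ((i : ℝ) + w j))
    have h2 : γ * (i : ℝ) < R := by
      have h3 : Real.exp (γ * ((i : ℝ) + w j)) ≤ R := hx'
      have := mul_nonneg hγ0.le (hw0 j)
      linarith
    have h4 : (i : ℝ) < n1 := by
      rw [div_lt_iff₀ hγ0] at hn1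
      by_contra hcon
      have := mul_le_mul_of_nonneg_left (not_lt.1 hcon) hγ0.le
      linarith
    have h5 : i < n1 := by exact_mod_cast h4
    simp [h5]

theorem geometric_of_light (hm : 0 < m)
    (hA0 : ∀ k r s, 0 ≤ A k r s) (hB0 : ∀ k r s, 0 ≤ B k r s)
    (hP : Stochastic (P A B)) (hirr : ChainIrreducible (P A B)) (hap : ChainAperiodic (P A B))
    (hphase : PhaseStochastic A) (hphaseirr : MatIrreducible (matA A))
    (pd : S m → ℝ) (hpd : IsStationary (P A B) pd)
    (hlA : LightMat A) (hlB : LightMat B) :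
    ∃ ρ : ℝ, 0 ≤ ρ ∧ ρ < 1 ∧ ∃ M : S m → S m → ℝ,
        ∀ (x y : S m) (n : ℕ), |Pn (P A B) n x y - pd y| ≤ M x y * ρ ^ n := by
  obtain ⟨ε1, h1, hA⟩ := light_common hm hA0 hlA
  obtain ⟨ε2, h2, hB⟩ := light_common hm hB0 hlB
  set ε : ℝ := min ε1 ε2 with hεdef
  have hε : 0 < ε := lt_min h1 h2
  have hA' := hA ε (min_le_left _ _)
  have hB' := hB ε (min_le_right _ _)
  have hAe : ∀ j, Summable (fun p : ℤ × Fin m =>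
      A p.1 j p.2 * Real.exp (ε * max (p.1 : ℝ) 0)) := by
    intro j
    refine summable_fin_prod (fun p => mul_nonneg (hA0 _ _ _) (Real.exp_pos _).le) (fun s => ?_)
    refine Summable.of_nat_of_neg_add_one ?_ ?_
    · refine (summable_nat_add_iff 1).1 ?_
      refine (hA' j s).congr (fun k => ?_)
      push_cast
      rw [max_eq_left (by positivity)]
    · have hinj : Function.Injective (fun n : ℕ => -((n : ℤ) + 1)) := by
        intro a b h
        simp only at h
        omega
      have h := (matA_summable hphase j s).comp_injective hinj
      simp only [Function.comp_def] at h
      refine h.congr (fun n => ?_)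
      push_cast
      rw [max_eq_right (by linarith [show (0 : ℝ) ≤ n by positivity]), mul_zero, Real.exp_zero,
        mul_one]
  have hBe : ∀ j, Summable (fun y => P A B (0, j) y * Real.exp (ε * (y.1 : ℝ))) := by
    intro j
    refine summable_fin_prod (fun p => mul_nonneg (hP.1 _ _) (Real.exp_pos _).le) (fun s => ?_)
    refine (summable_nat_add_iff 1).1 ?_
    refine (hB' j s).congr (fun k => ?_)
    rw [P_zero]
    push_cast
    rfl
  have hle : ∀ t : ℝ, t ≤ ε⁻¹ * Real.exp (ε * t) := by
    intro t
    have := Real.add_one_le_exp (ε * t)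
    rw [inv_mul_eq_div, le_div_iff₀ hε]
    linarith
  have hpos : ∀ j, Summable (fun p : ℤ × Fin m => A p.1 j p.2 * max (p.1 : ℝ) 0) := by
    intro j
    refine Summable.of_nonneg_of_le (fun p => mul_nonneg (hA0 _ _ _) (le_max_right _ _))
      (fun p => ?_) ((hAe j).mul_left ε⁻¹)
    rw [mul_left_comm]
    exact mul_le_mul_of_nonneg_left (hle _) (hA0 _ _ _)
  have hB1 : ∀ j, Summable (fun y => P A B (0, j) y * (y.1 : ℝ)) := by
    intro j
    refine Summable.of_nonneg_of_le (fun p => mul_nonneg (hP.1 _ _) (by positivity))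
      (fun p => ?_) ((hBe j).mul_left ε⁻¹)
    rw [mul_left_comm]
    exact mul_le_mul_of_nonneg_left (hle _) (hP.1 _ _)
  rcases drift_dichotomy hm hA0 hphase hphaseirr hpos with ⟨K, σ, g, hσ, hg⟩ | ⟨habs, σ, g, hσ, hg⟩
  · exact geometric_of_drift hm hA0 hB0 hP hirr hap hphase pd hpd hε hAe hBe hσ hg
  · exact (nonneg_drift_false hm hA0 hB0 hP hirr hphase pd hpd hB1 habs hσ hg).elim

end backward


/-! ### Radii of convergence and light tails -/

section radii

variable {m : ℕ}

lemma one_lt_radius_iff {c : ℕ → ℝ} :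
    1 < radius c ↔ ∃ ε > (0 : ℝ), Summable fun k : ℕ => c k * Real.exp (ε * ((k : ℝ) + 1)) := by
  have hexp : ∀ (ε : ℝ) (k : ℕ), Real.exp (ε * ((k : ℝ) + 1)) = Real.exp ε ^ k * Real.exp ε := by
    intro ε k
    rw [mul_add, mul_one, Real.exp_add, mul_comm ε, Real.exp_nat_mul]
  unfold radius
  simp only [lt_iSup_iff]
  constructor
  · rintro ⟨r, hs, hr⟩
    have hr1 : (1 : ℝ) < r := by exact_mod_cast hr
    refine ⟨Real.log r, Real.log_pos hr1, ?_⟩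
    refine (hs.mul_right (r : ℝ)).congr (fun k => ?_)
    rw [hexp, Real.exp_log (by linarith)]; ring
  · rintro ⟨ε, hε, hs⟩
    have hco : ((Real.exp ε).toNNReal : ℝ) = Real.exp ε := Real.coe_toNNReal _ (Real.exp_pos ε).le
    refine ⟨(Real.exp ε).toNNReal, ?_, ?_⟩
    · refine (hs.mul_right (Real.exp ε)⁻¹).congr (fun k => ?_)
      rw [hexp, hco]
      have := (Real.exp_pos ε).ne'
      field_simp
    · have h1 : (1 : ℝ) < Real.exp ε := Real.one_lt_exp_iff.2 hε
      have h2 : (1 : ℝ≥0) < (Real.exp ε).toNNReal := by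
        rw [← NNReal.coe_lt_coe, hco]; exact h1
      exact_mod_cast h2

lemma one_lt_phi_iff (hm : 0 < m) (C : ℤ → Matrix (Fin m) (Fin m) ℝ) :
    1 < (⨅ (r : Fin m) (s : Fin m), radius fun k => C ((k : ℤ) + 1) r s) ↔ LightMat C := by
  have : Nonempty (Fin m) := ⟨⟨0, hm⟩⟩
  unfold LightMat
  simp only [← one_lt_radius_iff]
  constructor
  · intro h r s
    exact h.trans_le ((iInf_le _ r).trans (iInf_le _ s))
  · intro h
    obtain ⟨r, hr⟩ := Finite.exists_min
      (fun r : Fin m => ⨅ s : Fin m, radius fun k => C ((k : ℤ) + 1) r s)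
    obtain ⟨s, hs⟩ := Finite.exists_min (fun s : Fin m => radius fun k => C ((k : ℤ) + 1) r s)
    exact (h r s).trans_le (le_iInf fun r' => le_trans (le_iInf hs) (hr r'))

end radii


/-- For an irreducible, aperiodic, positive recurrent `GI/G/1`-type Markov
chain with stationary distribution `π` and stochastic phase matrix `A`, the chain is
geometrically ergodic iff `min(φ_{A+}, φ_{B+}) > 1`, equivalently iff both `{A_k}_{k≥1}` and
`{B_k}_{k≥1}` are light-tailed. -/
theorem geometric_ergodicity_iff {m : ℕ} (hm : 0 < m)
    (A B : ℤ → Matrix (Fin m) (Fin m) ℝ)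
    (hA0 : ∀ k r s, 0 ≤ A k r s) (hB0 : ∀ k r s, 0 ≤ B k r s)
    (hP : Stochastic (P A B))
    (hirr : ChainIrreducible (P A B)) (hap : ChainAperiodic (P A B))
    (hphase : PhaseStochastic A) (hphaseirr : MatIrreducible (matA A))
    (pd : S m → ℝ) (hpd : IsStationary (P A B) pd) :
    ((∃ ρ : ℝ, 0 ≤ ρ ∧ ρ < 1 ∧ ∃ M : S m → S m → ℝ,
        ∀ (x y : S m) (n : ℕ), |Pn (P A B) n x y - pd y| ≤ M x y * ρ ^ n)
      ↔ 1 < min (phiA A) (phiB B)) ∧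
    ((∃ ρ : ℝ, 0 ≤ ρ ∧ ρ < 1 ∧ ∃ M : S m → S m → ℝ,
        ∀ (x y : S m) (n : ℕ), |Pn (P A B) n x y - pd y| ≤ M x y * ρ ^ n)
      ↔ (LightMat A ∧ LightMat B)) := by
  have hlight : (∃ ρ : ℝ, 0 ≤ ρ ∧ ρ < 1 ∧ ∃ M : S m → S m → ℝ,
        ∀ (x y : S m) (n : ℕ), |Pn (P A B) n x y - pd y| ≤ M x y * ρ ^ n)
      ↔ (LightMat A ∧ LightMat B) :=
    ⟨light_of_geometric hm hA0 hB0 hP hirr hphase pd hpd,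
      fun h => geometric_of_light hm hA0 hB0 hP hirr hap hphase hphaseirr pd hpd h.1 h.2⟩
  refine ⟨hlight.trans ?_, hlight⟩
  rw [lt_min_iff]
  exact and_congr (one_lt_phi_iff hm A).symm (one_lt_phi_iff hm B).symm

end GIG1
end

section
/- Suppose the GI/G/1-type Markov chain is irreducible and aperiodic and the phase matrix A is irreducible. Then the chain is strongly ergodic if and only if A is not stochastic, i.e., if and only if Ae ≠ e. -/
open Filter Topology
open scoped ENNReal NNReal BigOperators

namespace GIG1

section Generic

variable {α : Type*} [DecidableEq α]

/-- `n`-step kernel with values in `ℝ≥0∞`. -/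
noncomputable def kn (p : α → α → ℝ≥0∞) : ℕ → α → α → ℝ≥0∞
  | 0, x, y => if x = y then 1 else 0
  | n + 1, x, y => ∑' z, p x z * kn p n z y

theorem tsum_ite_left (f : α → ℝ≥0∞) (x : α) (c : ℝ≥0∞) :
    ∑' z, (if x = z then c else 0) * f z = c * f x := by
  rw [tsum_eq_single x]
  · simp
  · intro b hb
    simp [hb.symm]

theorem kn_add (p : α → α → ℝ≥0∞) (n k : ℕ) (x y : α) :
    kn p (n + k) x y = ∑' z, kn p n x z * kn p k z y := by
  induction n generalizing x with
  | zero => simp only [Nat.zero_add, kn]; rw [tsum_ite_left]; simp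
  | succ n ih =>
    have : n + 1 + k = (n + k) + 1 := by ring
    rw [this]
    simp only [kn, ih]
    simp_rw [← ENNReal.tsum_mul_left, ← ENNReal.tsum_mul_right]
    rw [ENNReal.tsum_comm]
    simp_rw [mul_assoc]

theorem kn_one (p : α → α → ℝ≥0∞) (x y : α) : kn p 1 x y = p x y := by
  simp only [kn]
  rw [tsum_eq_single y]
  · simp
  · intro b hb; simp [hb]

theorem kn_row (p : α → α → ℝ≥0∞) (hp : ∀ x, ∑' y, p x y = 1) (n : ℕ) (x : α) :
    ∑' y, kn p n x y = 1 := by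
  induction n generalizing x with
  | zero =>
    have := tsum_ite_left (fun _ => 1) x 1
    simpa [kn] using this
  | succ n ih =>
    simp only [kn]
    rw [ENNReal.tsum_comm]
    simp_rw [ENNReal.tsum_mul_left, ih, mul_one, hp]

/-- Minorising sequence. -/
noncomputable def an (p : α → α → ℝ≥0∞) (n : ℕ) (y : α) : ℝ≥0∞ := ⨅ x, kn p n x y

theorem an_le (p : α → α → ℝ≥0∞) (n : ℕ) (x y : α) : an p n y ≤ kn p n x y := iInf_le _ x

theorem an_mono (p : α → α → ℝ≥0∞) (hp : ∀ x, ∑' y, p x y = 1) (y : α) :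
    Monotone (fun n => an p n y) := by
  apply monotone_nat_of_le_succ
  intro n
  refine le_iInf fun x => ?_
  simp only [kn]
  calc an p n y = ∑' z, p x z * an p n y := by rw [ENNReal.tsum_mul_right, hp, one_mul]
    _ ≤ _ := ENNReal.tsum_le_tsum fun z => by gcongr; exact an_le p n z y

theorem doeblin_aux (q f : α → ℝ≥0∞) (x0 : α) (η a : ℝ≥0∞) (hη : η ≤ q x0)
    (hq : ∑' z, q z = 1) (hf : ∀ z, a ≤ f z) :
    η * f x0 + (1 - η) * a ≤ ∑' z, q z * f z := by
  set r : α → ℝ≥0∞ := fun z => if x0 = z then η else 0 with hr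
  have hrq : ∀ z, r z + (q z - r z) = q z := by
    intro z
    apply add_tsub_cancel_of_le
    by_cases h : x0 = z
    · subst h; simpa [hr] using hη
    · simp [hr, h]
  have hrs : ∑' z, r z = η := by
    have := tsum_ite_left (fun _ => 1) x0 η
    simpa [hr] using this
  have h1 : η + ∑' z, (q z - r z) = 1 := by
    rw [← hrs, ← ENNReal.tsum_add]; simp_rw [hrq]; exact hq
  have h2 : 1 - η ≤ ∑' z, (q z - r z) := by rw [← h1]; exact tsub_le_iff_left.2 le_rfl
  calc η * f x0 + (1 - η) * a ≤ ∑' z, r z * f z + (∑' z, (q z - r z)) * a := by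
        rw [tsum_ite_left]; gcongr
    _ ≤ ∑' z, r z * f z + ∑' z, (q z - r z) * f z := by
        rw [← ENNReal.tsum_mul_right]
        gcongr with z
        exact hf z
    _ = ∑' z, q z * f z := by
        rw [← ENNReal.tsum_add]; simp_rw [← add_mul, hrq]

theorem sum_an_le (p : α → α → ℝ≥0∞) (hp : ∀ x, ∑' y, p x y = 1) (x0 : α) (n : ℕ) :
    ∑' y, an p n y ≤ 1 := by
  rw [← kn_row p hp n x0]
  exact ENNReal.tsum_le_tsum fun y => an_le p n x0 y

theorem doeblin_step (p : α → α → ℝ≥0∞) (hp : ∀ x, ∑' y, p x y = 1) (x0 : α) (N : ℕ)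
    (η : ℝ≥0∞) (hη : ∀ x, η ≤ kn p N x x0) (k : ℕ) :
    1 ≤ ∑' y, an p (k * N) y + (1 - η) ^ k := by
  have hη1 : η ≤ 1 := (hη x0).trans ((ENNReal.le_tsum x0).trans (kn_row p hp N x0).le)
  induction k with
  | zero => simp
  | succ k ih =>
    have h1 : ∀ y, η * kn p (k * N) x0 y + (1 - η) * an p (k * N) y ≤ an p ((k + 1) * N) y := by
      intro y
      refine le_iInf fun x => ?_
      have : (k + 1) * N = N + k * N := by ring
      rw [this, kn_add]
      exact doeblin_aux _ _ x0 η _ (hη x) (kn_row p hp N x) (fun z => an_le p _ z y)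
    have h2 : η + (1 - η) * ∑' y, an p (k * N) y ≤ ∑' y, an p ((k + 1) * N) y := by
      refine le_trans (le_of_eq ?_) (ENNReal.tsum_le_tsum h1)
      rw [ENNReal.tsum_add, ENNReal.tsum_mul_left, ENNReal.tsum_mul_left, kn_row p hp, mul_one]
    calc (1 : ℝ≥0∞) = η + (1 - η) * 1 := by rw [mul_one, add_tsub_cancel_of_le hη1]
      _ ≤ η + (1 - η) * (∑' y, an p (k * N) y + (1 - η) ^ k) := by gcongr
      _ = η + (1 - η) * ∑' y, an p (k * N) y + (1 - η) ^ (k + 1) := by ring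
      _ ≤ _ := by gcongr

theorem tsum_iSup_le (f : ℕ → α → ℝ≥0∞) (hf : ∀ y, Monotone fun n => f n y) (c : ℝ≥0∞)
    (h : ∀ n, ∑' y, f n y ≤ c) : ∑' y, ⨆ n, f n y ≤ c := by
  rw [ENNReal.tsum_eq_iSup_sum]
  refine iSup_le fun s => ?_
  rw [ENNReal.finsetSum_iSup_of_monotone hf]
  exact iSup_le fun n => (ENNReal.sum_le_tsum s).trans (h n)

theorem doeblin (p : α → α → ℝ≥0∞) (hp : ∀ x, ∑' y, p x y = 1) (x0 : α) (N : ℕ)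
    (η : ℝ≥0∞) (hη0 : 0 < η) (hη : ∀ x, η ≤ kn p N x x0) :
    ∃ pd : α → ℝ≥0∞, ∑' y, pd y = 1 ∧ (∀ y, ∑' x, pd x * p x y = pd y) ∧
      Tendsto (fun n => ⨆ x, ∑' y, ENNReal.ofReal |(kn p n x y).toReal - (pd y).toReal|)
        atTop (𝓝 0) := by
  set pd : α → ℝ≥0∞ := fun y => ⨆ n, an p n y with hpd
  have hle : ∀ n y, an p n y ≤ pd y := fun n y => le_iSup (fun n => an p n y) n
  have hη1 : η ≤ 1 := (hη x0).trans ((ENNReal.le_tsum x0).trans (kn_row p hp N x0).le)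
  have hpow : Tendsto (fun k : ℕ => (1 - η) ^ k) atTop (𝓝 0) :=
    ENNReal.tendsto_pow_atTop_nhds_zero_of_lt_one
      (ENNReal.sub_lt_self ENNReal.one_ne_top one_ne_zero hη0.ne')
  have hs : ∀ ε : ℝ≥0∞, 0 < ε → ∀ᶠ n in atTop, 1 ≤ ∑' y, an p n y + ε := by
    intro ε hε
    obtain ⟨k, hk⟩ := ((tendsto_order.1 hpow).2 ε hε).exists
    filter_upwards [eventually_ge_atTop (k * N)] with n hn
    refine (doeblin_step p hp x0 N η hη k).trans ?_
    gcongr with y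
    exact an_mono p hp y hn
  have hsum : ∑' y, pd y = 1 := by
    apply le_antisymm
    · exact tsum_iSup_le _ (an_mono p hp) 1 (sum_an_le p hp x0)
    · refine ENNReal.le_of_forall_pos_le_add fun ε hε _ => ?_
      obtain ⟨n, hn⟩ := (hs ε (by exact_mod_cast hε)).exists
      refine hn.trans ?_
      gcongr with y
      exact hle n y
  have hpdtop : ∀ y, pd y ≠ ⊤ := fun y => 
    ne_top_of_le_ne_top ENNReal.one_ne_top ((ENNReal.le_tsum y).trans hsum.le)
  have hst : ∀ y, ∑' x, pd x * p x y ≤ pd y := by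
    intro y
    simp only [hpd, ENNReal.iSup_mul]
    refine tsum_iSup_le (fun n x => an p n x * p x y) ?_ _ ?_
    · intro x a b hab
      exact mul_le_mul_left (an_mono p hp x hab) _
    · intro n
      refine le_trans ?_ (hle (n + 1) y)
      refine le_iInf fun w => ?_
      rw [kn_add]
      simp_rw [kn_one]
      gcongr with x
      exact an_le p n w x
  refine ⟨pd, hsum, ?_, ?_⟩
  · have htot : ∑' y, ∑' x, pd x * p x y = 1 := by
      rw [ENNReal.tsum_comm]
      simp_rw [ENNReal.tsum_mul_left, hp, mul_one, hsum]
    have hdiff : ∑' y, (pd y - ∑' x, pd x * p x y) + 1 = 0 + 1 := by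
      nth_rewrite 1 [← htot]
      rw [← ENNReal.tsum_add]
      simp_rw [fun y => tsub_add_cancel_of_le (hst y)]
      rw [hsum, zero_add]
    have h0 := (ENNReal.add_left_inj ENNReal.one_ne_top).1 hdiff
    rw [ENNReal.tsum_eq_zero] at h0
    intro y
    exact le_antisymm (hst y) (tsub_eq_zero_iff_le.1 (h0 y))
  · have hbd : ∀ (f : α → ℝ≥0∞) (n : ℕ) (ε : ℝ≥0∞), ∑' y, f y = 1 → (∀ y, an p n y ≤ f y) →
        1 ≤ ∑' y, an p n y + ε → ∑' y, (f y - an p n y) ≤ ε := by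
      intro f n ε hf hle hε
      have h1 : ∑' y, (f y - an p n y) + ∑' y, an p n y = 1 := by
        rw [← ENNReal.tsum_add]
        simp_rw [fun y => tsub_add_cancel_of_le (hle y)]
        exact hf
      have hfin : ∑' y, an p n y ≠ ⊤ :=
        ne_top_of_le_ne_top ENNReal.one_ne_top (sum_an_le p hp x0 n)
      rw [← h1, add_comm] at hε
      exact (ENNReal.add_le_add_iff_left hfin).1 hε
    rw [ENNReal.tendsto_nhds_zero]
    intro ε hε
    filter_upwards [hs (ε / 2) (ENNReal.half_pos hε.ne')] with n hn
    refine iSup_le fun x => ?_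
    calc ∑' y, ENNReal.ofReal |(kn p n x y).toReal - (pd y).toReal|
        ≤ ∑' y, ((kn p n x y - an p n y) + (pd y - an p n y)) := by
          gcongr with y
          have hk : kn p n x y ≠ ⊤ := ne_top_of_le_ne_top ENNReal.one_ne_top
            ((ENNReal.le_tsum y).trans (kn_row p hp n x).le)
          have ha : an p n y ≠ ⊤ := ne_top_of_le_ne_top hk (an_le p n x y)
          have e1 := ENNReal.toReal_mono hk (an_le p n x y)
          have e2 := ENNReal.toReal_mono (hpdtop y) (hle n y)
          apply ENNReal.ofReal_le_of_le_toReal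
          rw [ENNReal.toReal_add (ENNReal.sub_ne_top hk) (ENNReal.sub_ne_top (hpdtop y)),
            ENNReal.toReal_sub_of_le (an_le p n x y) hk,
            ENNReal.toReal_sub_of_le (hle n y) (hpdtop y), abs_le]
          constructor <;> linarith
      _ ≤ ε / 2 + ε / 2 := by
          rw [ENNReal.tsum_add]
          exact add_le_add (hbd _ n _ (kn_row p hp n x) (an_le p n x) hn)
            (hbd _ n _ hsum (hle n) hn)
      _ = ε := ENNReal.add_halves ε

end Generic

section Specific

variable {m : ℕ}

/-- The kernel with values in `ℝ≥0∞`. -/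
noncomputable def pe (Q : S m → S m → ℝ) (x y : S m) : ℝ≥0∞ := ENNReal.ofReal (Q x y)

theorem pe_ne_top (Q : S m → S m → ℝ) (x y : S m) : pe Q x y ≠ ⊤ := ENNReal.ofReal_ne_top

theorem pe_row {Q : S m → S m → ℝ} (hQ : Stochastic Q) (x : S m) : ∑' y, pe Q x y = 1 := by
  unfold pe
  rw [← ENNReal.ofReal_tsum_of_nonneg (hQ.1 x) (hQ.2 x).summable, (hQ.2 x).tsum_eq]
  simp

theorem kn_le_one {Q : S m → S m → ℝ} (hQ : Stochastic Q) (n : ℕ) (x y : S m) :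
    kn (pe Q) n x y ≤ 1 :=
  (ENNReal.le_tsum y).trans (kn_row (pe Q) (pe_row hQ) n x).le

theorem kn_ne_top {Q : S m → S m → ℝ} (hQ : Stochastic Q) (n : ℕ) (x y : S m) :
    kn (pe Q) n x y ≠ ⊤ := ne_top_of_le_ne_top ENNReal.one_ne_top (kn_le_one hQ n x y)

theorem kn_toReal {Q : S m → S m → ℝ} (hQ : Stochastic Q) (n : ℕ) (x y : S m) :
    (kn (pe Q) n x y).toReal = Pn Q n x y := by
  induction n generalizing x with
  | zero => simp only [kn, Pn]; split_ifs <;> simp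
  | succ n ih =>
    simp only [kn, Pn]
    rw [ENNReal.tsum_toReal_eq
      (fun z => ENNReal.mul_ne_top (pe_ne_top Q x z) (kn_ne_top hQ n z y))]
    simp_rw [ENNReal.toReal_mul, ih]
    congr 1
    ext z
    rw [pe, ENNReal.toReal_ofReal (hQ.1 x z)]

theorem tsum_level (f : S m → ℝ≥0∞) :
    ∑' z, f z = ∑ s, f (0, s) + ∑ s, ∑' k : ℕ, f (k + 1, s) := by
  have := ENNReal.tsum_prod (f := fun (a : ℕ) (b : Fin m) => f (a, b))
  simp only [Prod.mk.eta] at this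
  rw [this, ENNReal.tsum_comm, tsum_fintype, ← Finset.sum_add_distrib]
  congr 1
  ext s
  exact tsum_eq_zero_add' ENNReal.summable

/-- phase matrix with extended values -/
noncomputable def Me (A : ℤ → Matrix (Fin m) (Fin m) ℝ) (j s : Fin m) : ℝ≥0∞ :=
  ∑' k : ℤ, ENNReal.ofReal (A k j s)

theorem Me_row {A B : ℤ → Matrix (Fin m) (Fin m) ℝ} (hP : Stochastic (P A B)) (j : Fin m) :
    ∑ s, Me A j s ≤ 1 := by
  unfold Me
  rw [← tsum_fintype (L := .unconditional _), ← ENNReal.tsum_prod, ENNReal.tsum_eq_iSup_sum]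
  refine iSup_le fun u => ?_
  set i : ℕ := ∑ q ∈ u, q.2.natAbs with hi
  have hiu : ∀ q ∈ u, 0 ≤ q.2 + i := by
    intro q hq
    have : q.2.natAbs ≤ i := Finset.single_le_sum (f := fun q : Fin m × ℤ => q.2.natAbs)
      (fun _ _ => Nat.zero_le _) hq
    omega
  set g : Fin m × ℤ → S m := fun q => ((q.2 + i).toNat + 1, q.1) with hg
  have hinj : Set.InjOn g u := by
    rintro ⟨a, b⟩ hq ⟨a', b'⟩ hq' h
    have h1 := hiu _ hq
    have h2 := hiu _ hq'
    simp only [hg, Prod.mk.injEq] at h h1 h2 ⊢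
    refine ⟨h.2, ?_⟩
    omega
  rw [← pe_row hP (i + 1, j)]
  refine le_trans (le_of_eq ?_) (ENNReal.sum_le_tsum (u.image g))
  rw [Finset.sum_image hinj]
  refine Finset.sum_congr rfl fun q hq => ?_
  have h1 := hiu q hq
  have h2 : ((q.2 + (i : ℤ)).toNat : ℤ) - i = q.2 := by omega
  simp only [pe, hg, P, h2]

theorem Me_ne_top {A B : ℤ → Matrix (Fin m) (Fin m) ℝ} (hP : Stochastic (P A B)) (j s : Fin m) :
    Me A j s ≠ ⊤ :=
  ne_top_of_le_ne_top ENNReal.one_ne_top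
    ((Finset.single_le_sum (f := Me A j) (fun _ _ => zero_le) (Finset.mem_univ s)).trans
      (Me_row hP j))

theorem Me_toReal {A : ℤ → Matrix (Fin m) (Fin m) ℝ} (hA0 : ∀ k r s, 0 ≤ A k r s)
    (j s : Fin m) : (Me A j s).toReal = matA A j s := by
  rw [Me, ENNReal.tsum_toReal_eq (fun _ => ENNReal.ofReal_ne_top)]
  simp [matA, ENNReal.toReal_ofReal (hA0 _ _ _)]

theorem Me_head_tail (A : ℤ → Matrix (Fin m) (Fin m) ℝ) (i : ℕ) (j s : Fin m) :
    Me A j s = ∑' k : ℕ, ENNReal.ofReal (A ((k : ℤ) - i) j s) +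
      ∑' k : ℕ, ENNReal.ofReal (A (-((k + i : ℕ) + 1 : ℤ)) j s) := by
  rw [Me, ← (Equiv.subRight (i : ℤ)).tsum_eq, tsum_of_nat_of_neg_add_one ENNReal.summable
    ENNReal.summable]
  congr 2
  ext k
  congr 2
  simp
  ring_nf

theorem row_eq {A B : ℤ → Matrix (Fin m) (Fin m) ℝ} (hP : Stochastic (P A B)) (i : ℕ)
    (j : Fin m) :
    ∑ s, ENNReal.ofReal (B (-(i + 1 : ℤ)) j s) +
      ∑ s, ∑' k : ℕ, ENNReal.ofReal (A ((k : ℤ) - i) j s) = 1 := by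
  rw [← pe_row hP (i + 1, j), tsum_level]
  rfl

/-! ### Non-stochastic phase matrix implies uniform ergodicity -/

theorem drift {A B : ℤ → Matrix (Fin m) (Fin m) ℝ} (w : Fin m → ℝ≥0∞) (i : ℕ) (j : Fin m) :
    ∑' z : S m, pe (P A B) (i + 1, j) z * (if z.1 = 0 then 0 else w z.2) ≤
      ∑ s, Me A j s * w s := by
  rw [tsum_level]
  simp only [if_true, mul_zero, Finset.sum_const_zero, zero_add, Nat.succ_ne_zero, if_false]
  refine Finset.sum_le_sum fun s _ => ?_
  rw [ENNReal.tsum_mul_right]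
  gcongr
  rw [Me_head_tail A i j s]
  exact le_self_add

theorem survive {A B : ℤ → Matrix (Fin m) (Fin m) ℝ} (hP : Stochastic (P A B))
    (w : ℕ → Fin m → ℝ≥0∞) (hw0 : ∀ j, w 0 j = 1)
    (hw : ∀ t j, w (t + 1) j = ∑ s, Me A j s * w t s) (x0 : S m) (M N : ℕ) (ε : ℝ≥0∞)
    (hε : ∀ t ≤ N, ∀ j : Fin m, ε ≤ kn (pe (P A B)) (M + t) (0, j) x0) (t : ℕ) (ht : t ≤ N)
    (x : S m) :
    ε ≤ kn (pe (P A B)) (M + t) x x0 + ε * (if x.1 = 0 then 0 else w t x.2) := by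
  induction t generalizing x with
  | zero =>
    obtain ⟨i, j⟩ := x
    cases i with
    | zero => simpa using hε 0 ht j
    | succ i => simp [hw0]
  | succ t ih =>
    obtain ⟨i, j⟩ := x
    cases i with
    | zero => simpa using hε (t + 1) ht j
    | succ i =>
      have ih' := ih (by omega)
      simp only [Nat.succ_ne_zero, if_false, hw]
      calc ε = ∑' z, pe (P A B) (i + 1, j) z * ε := by
            rw [ENNReal.tsum_mul_right, pe_row hP, one_mul]
        _ ≤ ∑' z, pe (P A B) (i + 1, j) z * (kn (pe (P A B)) (M + t) z x0 +
              ε * (if z.1 = 0 then 0 else w t z.2)) := by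
            gcongr with z
            exact ih' z
        _ = kn (pe (P A B)) (M + (t + 1)) (i + 1, j) x0 + ε *
              ∑' z, pe (P A B) (i + 1, j) z * (if z.1 = 0 then 0 else w t z.2) := by
            rw [← ENNReal.tsum_mul_left, ← add_assoc, kn, ← ENNReal.tsum_add]
            congr 1
            ext z
            ring
        _ ≤ _ := by
            gcongr
            exact drift (w t) i j

theorem exists_contract {M : Matrix (Fin m) (Fin m) ℝ} (hM0 : ∀ r s, 0 ≤ M r s)
    (hM1 : ∀ r, (M.mulVec 1) r ≤ 1) (hirr : MatIrreducible M) (hne : M.mulVec 1 ≠ 1) :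
    ∃ N, ∀ j, ((M ^ N).mulVec 1) j < 1 := by
  have hpow0 : ∀ n r s, 0 ≤ (M ^ n) r s := by
    intro n
    induction n with
    | zero => intro r s; rw [pow_zero, Matrix.one_apply]; split_ifs <;> simp
    | succ n ih =>
      intro r s
      rw [pow_succ, Matrix.mul_apply]
      exact Finset.sum_nonneg fun k _ => mul_nonneg (ih r k) (hM0 k s)
  have hstep : ∀ n j, ((M ^ (n + 1)).mulVec 1) j = ∑ s, (M ^ n) j s * (M.mulVec 1) s := by
    intro n j
    rw [pow_succ, ← Matrix.mulVec_mulVec]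
    rfl
  have hval : ∀ n j, ((M ^ n).mulVec 1) j = ∑ s, (M ^ n) j s * 1 := fun n j => rfl
  have hanti : ∀ j, Antitone fun n => ((M ^ n).mulVec 1) j := by
    intro j
    apply antitone_nat_of_succ_le
    intro n
    rw [hstep, hval]
    exact Finset.sum_le_sum fun s _ => mul_le_mul_of_nonneg_left (hM1 s) (hpow0 n j s)
  obtain ⟨r0, hr0⟩ := Function.ne_iff.1 hne
  have hr0' : (M.mulVec 1) r0 < 1 := lt_of_le_of_ne (hM1 r0) hr0
  choose n hn1 hn using fun j => hirr j r0
  refine ⟨∑ j, (n j + 1), fun j => ?_⟩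
  have h1 : n j + 1 ≤ ∑ j, (n j + 1) :=
    Finset.single_le_sum (f := fun j => n j + 1) (fun _ _ => Nat.zero_le _) (Finset.mem_univ j)
  refine (hanti j h1).trans_lt ?_
  refine lt_of_lt_of_le ?_ (hanti j (Nat.zero_le (n j)) |>.trans (by simp))
  show ((M ^ (n j + 1)).mulVec 1) j < ((M ^ (n j)).mulVec 1) j
  rw [hstep, hval]
  exact Finset.sum_lt_sum
    (fun s _ => mul_le_mul_of_nonneg_left (hM1 s) (hpow0 _ j s))
    ⟨r0, Finset.mem_univ _, mul_lt_mul_of_pos_left hr0' (hn j)⟩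

theorem matA_row {A B : ℤ → Matrix (Fin m) (Fin m) ℝ} (hA0 : ∀ k r s, 0 ≤ A k r s)
    (hP : Stochastic (P A B)) (j : Fin m) :
    ((matA A).mulVec 1) j = (∑ s, Me A j s).toReal := by
  rw [ENNReal.toReal_sum (fun s _ => Me_ne_top hP j s)]
  simp [Matrix.mulVec, dotProduct, Me_toReal hA0]

theorem pn_pos_iff {Q : S m → S m → ℝ} (hQ : Stochastic Q) (n : ℕ) (x y : S m) :
    0 < Pn Q n x y ↔ 0 < kn (pe Q) n x y := by
  rw [← kn_toReal hQ, ENNReal.toReal_pos_iff]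
  exact ⟨fun h => h.1, fun h => ⟨h, (kn_ne_top hQ n x y).lt_top⟩⟩

theorem minor_zero {A B : ℤ → Matrix (Fin m) (Fin m) ℝ} (hP : Stochastic (P A B))
    (hirr : ChainIrreducible (P A B)) (hap : ChainAperiodic (P A B)) (x0 : S m) (N : ℕ) :
    ∃ (M : ℕ) (ε : ℝ≥0∞), 0 < ε ∧
      ∀ t ≤ N, ∀ j : Fin m, ε ≤ kn (pe (P A B)) (M + t) (0, j) x0 := by
  obtain ⟨N0, hN0⟩ := hap x0
  choose n hn1 hn using fun j : Fin m => hirr (0, j) x0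
  set M := N0 + ∑ j, n j with hM
  have hpos : ∀ t, ∀ j : Fin m, 0 < kn (pe (P A B)) (M + t) (0, j) x0 := by
    intro t j
    have h1 : n j ≤ ∑ j, n j :=
      Finset.single_le_sum (f := n) (fun _ _ => Nat.zero_le _) (Finset.mem_univ j)
    obtain ⟨r, hr⟩ : ∃ r, M + t = n j + r ∧ N0 ≤ r := ⟨M + t - n j, by omega, by omega⟩
    rw [hr.1, kn_add]
    refine lt_of_lt_of_le ?_ (ENNReal.le_tsum x0)
    exact ENNReal.mul_pos ((pn_pos_iff hP _ _ _).1 (hn j)).ne'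
      ((pn_pos_iff hP _ _ _).1 (hN0 r hr.2)).ne'
  refine ⟨M, (Finset.range (N + 1) ×ˢ (Finset.univ : Finset (Fin m))).inf
    (fun q => kn (pe (P A B)) (M + q.1) (0, q.2) x0), ?_, ?_⟩
  · rw [Finset.lt_inf_iff (by simp)]
    exact fun q _ => hpos q.1 q.2
  · intro t ht j
    exact Finset.inf_le (f := fun q : ℕ × Fin m => kn (pe (P A B)) (M + q.1) (0, q.2) x0)
      (b := (t, j)) (by simp; omega)

theorem minor_all {A B : ℤ → Matrix (Fin m) (Fin m) ℝ} (hA0 : ∀ k r s, 0 ≤ A k r s)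
    (hP : Stochastic (P A B))
    (hirr : ChainIrreducible (P A B)) (hap : ChainAperiodic (P A B))
    (hphaseirr : MatIrreducible (matA A)) (hne : (matA A).mulVec 1 ≠ 1) (x0 : S m) :
    ∃ (N : ℕ) (η : ℝ≥0∞), 0 < η ∧ ∀ x, η ≤ kn (pe (P A B)) N x x0 := by
  have hM0 : ∀ r s, 0 ≤ matA A r s := fun r s => by
    rw [← Me_toReal hA0]; exact ENNReal.toReal_nonneg
  have hM1 : ∀ r, ((matA A).mulVec 1) r ≤ 1 := fun r => by
    rw [matA_row hA0 hP]
    exact ENNReal.toReal_le_of_le_ofReal zero_le_one (by simpa using Me_row hP r)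
  obtain ⟨N, hN⟩ := exists_contract hM0 hM1 hphaseirr hne
  obtain ⟨M, ε, hε0, hε⟩ := minor_zero hP hirr hap x0 N
  have hv0 : ∀ t j, 0 ≤ ((matA A ^ t).mulVec 1) j := by
    intro t
    induction t with
    | zero => intro j; simp
    | succ t ih =>
      intro j
      rw [pow_succ', ← Matrix.mulVec_mulVec]
      show 0 ≤ ∑ s, matA A j s * ((matA A ^ t).mulVec 1) s
      exact Finset.sum_nonneg fun s _ => mul_nonneg (hM0 j s) (ih s)
  set w : ℕ → Fin m → ℝ≥0∞ := fun t j => ENNReal.ofReal (((matA A ^ t).mulVec 1) j) with hw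
  have hsurv := survive hP w (by intro j; simp [hw]) (by
    intro t j
    simp only [hw]
    rw [pow_succ', ← Matrix.mulVec_mulVec]
    show ENNReal.ofReal (∑ s, matA A j s * ((matA A ^ t).mulVec 1) s) = _
    rw [ENNReal.ofReal_sum_of_nonneg (fun s _ => mul_nonneg (hM0 j s) (hv0 t s))]
    refine Finset.sum_congr rfl fun s _ => ?_
    rw [ENNReal.ofReal_mul (hM0 j s), ← Me_toReal hA0, ENNReal.ofReal_toReal (Me_ne_top hP j s)])
    x0 M N ε hε N le_rfl
  have hε1 : ε ≠ ⊤ := ne_top_of_le_ne_top (kn_ne_top hP _ _ _) (hε 0 (Nat.zero_le _) x0.2)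
  set θ : ℝ≥0∞ := Finset.univ.sup (w N) with hθ
  have hθ1 : θ < 1 := by
    rw [hθ, Finset.sup_lt_iff (by simp)]
    intro j _
    simp only [hw]
    rw [ENNReal.ofReal_lt_one]
    exact hN j
  refine ⟨M + N, ε - ε * θ, ?_, fun x => ?_⟩
  · rw [tsub_pos_iff_lt]
    calc ε * θ < ε * 1 := ENNReal.mul_lt_mul_right hε0.ne' hε1 hθ1
      _ = ε := mul_one _
  · rw [tsub_le_iff_right]
    refine (hsurv x).trans ?_
    gcongr
    split_ifs
    · exact zero_le
    · exact Finset.le_sup (f := w N) (Finset.mem_univ x.2)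

/-! ### Stochastic phase matrix excludes uniform ergodicity -/

theorem pe_tendsto {A B : ℤ → Matrix (Fin m) (Fin m) ℝ} (hA0 : ∀ k r s, 0 ≤ A k r s)
    (hP : Stochastic (P A B)) (he : (matA A).mulVec 1 = 1) (j : Fin m) (z : S m) :
    Tendsto (fun i : ℕ => pe (P A B) (i + 1, j) z) atTop (𝓝 0) := by
  have htail : ∀ s, Tendsto (fun i : ℕ => ∑' k : ℕ,
      ENNReal.ofReal (A (-((k + i : ℕ) + 1 : ℤ)) j s)) atTop (𝓝 0) := by
    intro s
    refine ENNReal.tendsto_sum_nat_add (fun k : ℕ => ENNReal.ofReal (A (-(k + 1 : ℤ)) j s)) ?_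
    refine ne_top_of_le_ne_top (Me_ne_top hP j s) ?_
    refine ENNReal.tsum_comp_le_tsum_of_injective (f := fun k : ℕ => (-(k + 1 : ℤ))) ?_
      (fun k => ENNReal.ofReal (A k j s))
    intro a b h
    simp only at h
    omega
  have hrow : ∑ s, Me A j s = 1 := by
    have h1 := matA_row hA0 hP j
    rw [he] at h1
    have h2 : ∑ s, Me A j s ≠ ⊤ := ne_top_of_le_ne_top ENNReal.one_ne_top (Me_row hP j)
    rw [← ENNReal.ofReal_toReal h2, ← h1]
    simp
  obtain ⟨k, s⟩ := z
  cases k with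
  | zero =>
    have hsum : Tendsto (fun i : ℕ => ∑ s, ∑' k : ℕ,
        ENNReal.ofReal (A (-((k + i : ℕ) + 1 : ℤ)) j s)) atTop (𝓝 0) := by
      have := tendsto_finset_sum Finset.univ (fun s _ => htail s)
      simpa using this
    refine tendsto_of_tendsto_of_tendsto_of_le_of_le tendsto_const_nhds hsum
      (fun _ => zero_le) fun i => ?_
    have h1 := row_eq hP i j
    rw [← hrow] at h1
    simp_rw [Me_head_tail A i j] at h1
    rw [Finset.sum_add_distrib, add_comm] at h1
    have hfin : ∑ s, ∑' k : ℕ, ENNReal.ofReal (A ((k : ℤ) - i) j s) ≠ ⊤ :=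
      ne_top_of_le_ne_top ENNReal.one_ne_top (le_add_self.trans (row_eq hP i j).le)
    have h2 := (ENNReal.add_right_inj hfin).1 h1
    show pe (P A B) (i + 1, j) (0, s) ≤ ∑ s, ∑' k : ℕ,
        ENNReal.ofReal (A (-((k + i : ℕ) + 1 : ℤ)) j s)
    rw [← h2]
    exact Finset.single_le_sum (f := fun s => ENNReal.ofReal (B (-(i + 1 : ℤ)) j s))
      (fun _ _ => zero_le) (Finset.mem_univ s)
  | succ k =>
    rw [← tendsto_add_atTop_iff_nat (k + 1)]
    refine tendsto_of_tendsto_of_tendsto_of_le_of_le tendsto_const_nhds (htail s)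
      (fun _ => zero_le) fun i => ?_
    refine le_trans (le_of_eq ?_) (ENNReal.le_tsum 0)
    simp only [pe, P]
    congr 2
    push_cast
    ring

theorem kn_tendsto {A B : ℤ → Matrix (Fin m) (Fin m) ℝ} (hA0 : ∀ k r s, 0 ≤ A k r s)
    (hP : Stochastic (P A B)) (he : (matA A).mulVec 1 = 1) (n : ℕ) (j : Fin m) (y : S m) :
    Tendsto (fun i : ℕ => kn (pe (P A B)) n (i, j) y) atTop (𝓝 0) := by
  induction n generalizing j with
  | zero =>
    refine tendsto_const_nhds.congr' ?_
    filter_upwards [eventually_gt_atTop y.1] with i hi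
    have : (i, j) ≠ y := by rintro rfl; simp at hi
    simp [kn, this]
  | succ n ih =>
    rw [← tendsto_add_atTop_iff_nat 1, ENNReal.tendsto_nhds_zero]
    intro ε hε
    have h1 : ∀ᶠ i : ℕ in atTop, ∀ j, kn (pe (P A B)) n (i, j) y ≤ ε / 2 := by
      rw [eventually_all]
      exact fun j => ENNReal.tendsto_nhds_zero.1 (ih j) _ (ENNReal.half_pos hε.ne')
    obtain ⟨K, hK⟩ := eventually_atTop.1 h1
    set F : Finset (S m) := Finset.range K ×ˢ Finset.univ with hF
    have h2 : Tendsto (fun i : ℕ => ∑ z ∈ F, pe (P A B) (i + 1, j) z) atTop (𝓝 0) := by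
      have := tendsto_finset_sum F (fun z _ => pe_tendsto hA0 hP he j z)
      simpa using this
    filter_upwards [ENNReal.tendsto_nhds_zero.1 h2 _ (ENNReal.half_pos hε.ne')] with i hi
    rw [kn]
    calc ∑' z, pe (P A B) (i + 1, j) z * kn (pe (P A B)) n z y
        ≤ ∑' z, (pe (P A B) (i + 1, j) z * (ε / 2) +
            if z ∈ F then pe (P A B) (i + 1, j) z else 0) := by
          gcongr with z
          by_cases hz : z ∈ F
          · rw [if_pos hz]
            refine le_trans ?_ le_add_self
            exact mul_le_of_le_one_right' (kn_le_one hP n z y)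
          · rw [if_neg hz, add_zero]
            gcongr
            refine hK z.1 ?_ z.2
            simpa [hF] using hz
      _ = ε / 2 + ∑ z ∈ F, pe (P A B) (i + 1, j) z := by
          rw [ENNReal.tsum_add, ENNReal.tsum_mul_right, pe_row hP, one_mul]
          congr 1
          rw [tsum_eq_sum (s := F) (fun z hz => by simp [hz])]
          exact Finset.sum_congr rfl fun z hz => by simp [hz]
      _ ≤ ε / 2 + ε / 2 := by gcongr
      _ = ε := ENNReal.add_halves ε

end Specific

/-- An irreducible aperiodic `GI/G/1`-type Markov chain (with irreducible
phase matrix `A`) is strongly (uniformly) ergodic iff `A` is not stochastic, i.e. `Ae ≠ e`. -/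
theorem strongly_ergodic_iff_phase_not_stochastic {m : ℕ} (hm : 0 < m)
    (A B : ℤ → Matrix (Fin m) (Fin m) ℝ)
    (hA0 : ∀ k r s, 0 ≤ A k r s) (hB0 : ∀ k r s, 0 ≤ B k r s)
    (hP : Stochastic (P A B))
    (hirr : ChainIrreducible (P A B)) (hap : ChainAperiodic (P A B))
    (hphaseirr : MatIrreducible (matA A)) :
    ((∃ pd : S m → ℝ, IsStationary (P A B) pd ∧
        Tendsto (fun n : ℕ => ⨆ x : S m, ∑' y : S m, ENNReal.ofReal |Pn (P A B) n x y - pd y|)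
          atTop (nhds 0))
      ↔ (matA A).mulVec 1 ≠ 1) := by
  constructor
  · rintro ⟨pd, ⟨hpd0, hpd1, -⟩, hlim⟩ he
    obtain ⟨y, hy⟩ : ∃ y, 0 < pd y := by
      by_contra! h
      have h0 : pd = fun _ => 0 := funext fun y => le_antisymm (h y) (hpd0 y)
      rw [h0] at hpd1
      exact zero_ne_one (hasSum_zero.unique hpd1)
    have hy2 : (0 : ℝ≥0∞) < ENNReal.ofReal (pd y / 2) := ENNReal.ofReal_pos.2 (half_pos hy)
    obtain ⟨n, hn⟩ := (ENNReal.tendsto_nhds_zero.1 hlim _ hy2).exists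
    have hbd : ∀ x : S m, pd y / 2 ≤ Pn (P A B) n x y := by
      intro x
      have h1 : ENNReal.ofReal |Pn (P A B) n x y - pd y| ≤ ENNReal.ofReal (pd y / 2) :=
        (ENNReal.le_tsum y).trans
          ((le_iSup (fun x : S m => ∑' y, ENNReal.ofReal |Pn (P A B) n x y - pd y|) x).trans hn)
      have h2 := (ENNReal.ofReal_le_ofReal_iff (half_pos hy).le).1 h1
      have h3 := (abs_le.1 h2).1
      linarith
    have ht := kn_tendsto hA0 hP he n ⟨0, hm⟩ y
    have hge : ENNReal.ofReal (pd y / 2) ≤ 0 := by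
      refine ge_of_tendsto' ht fun i => ?_
      rw [← ENNReal.ofReal_toReal (kn_ne_top hP n (i, ⟨0, hm⟩) y), kn_toReal hP]
      exact ENNReal.ofReal_le_ofReal (hbd _)
    exact absurd hge (not_le.2 hy2)
  · intro hne
    obtain ⟨N, η, hη0, hη⟩ := minor_all hA0 hP hirr hap hphaseirr hne (0, ⟨0, hm⟩)
    obtain ⟨pd, hs, hst, hlim⟩ := doeblin (pe (P A B)) (pe_row hP) _ N η hη0 hη
    have htop : ∀ y, pd y ≠ ⊤ := fun y =>
      ne_top_of_le_ne_top ENNReal.one_ne_top ((ENNReal.le_tsum y).trans hs.le)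
    refine ⟨fun y => (pd y).toReal, ⟨fun _ => ENNReal.toReal_nonneg, ?_, fun y => ?_⟩, ?_⟩
    · have := ENNReal.hasSum_toReal (f := pd) (by rw [hs]; exact ENNReal.one_ne_top)
      rwa [← ENNReal.tsum_toReal_eq htop, hs, ENNReal.toReal_one] at this
    · have := ENNReal.hasSum_toReal (f := fun x => pd x * pe (P A B) x y)
        (by rw [hst]; exact htop y)
      rw [← ENNReal.tsum_toReal_eq
        (fun x => ENNReal.mul_ne_top (htop x) (pe_ne_top _ x y)), hst] at this
      convert this using 1
      ext x
      rw [ENNReal.toReal_mul, pe, ENNReal.toReal_ofReal (hP.1 x y)]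
    · simp_rw [kn_toReal hP] at hlim
      exact hlim

end GIG1
end

section
/- Consider a GI/G/1-type Markov chain whose phase matrix A is irreducible and not stochastic (Ae ≤ e, Ae ≠ e). Define column vectors X_i^{(0)} = 0 ∈ ℝ^m for all i ≥ 0, and recursively X_0^{(n)} = 0 and X_i^{(n)} = Σ_{k≥0, k≠i} P_{i,k} X_k^{(n−1)} + e for i ≥ 1, where P_{i,k} denotes the m×m block of P from level i to level k. Then for every n ≥ 0 and every i ≥ 1, X_i^{(n)} ≤ (I − A)^{−1} e entrywise; consequently the minimal nonnegative solution {X_i}_{i≥1} of the system Y_i = Σ_{k≠i} P_{i,k} Y_k + e (i ≥ 1), Y_0 = 0, obtained as X_i = lim_{n→∞} X_i^{(n)}, satisfies X_i ≤ (I − A)^{−1} e for all i ≥ 1. -/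
open Filter Topology
open scoped ENNReal NNReal BigOperators

namespace GIG1

/-- The iteration scheme for the minimal nonnegative solution of
`Y_i = ∑_{k ≠ i} P_{i,k} Y_k + e` (`i ≥ 1`), `Y_0 = 0`. -/
noncomputable def Xseq {m : ℕ} (P : S m → S m → ℝ) : ℕ → ℕ → Fin m → ℝ
  | 0, _ => 0
  | n + 1, i =>
      if i = 0 then 0
      else fun j =>
        (∑' k : ℕ, if k = i then 0 else ∑ s : Fin m, P (i, j) (k, s) * Xseq P n k s) + 1

theorem summable_A {m : ℕ} (A B : ℤ → Matrix (Fin m) (Fin m) ℝ)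
    (hA0 : ∀ k r s, 0 ≤ A k r s) (hP : Stochastic (P A B)) (r s : Fin m) :
    Summable fun k => A k r s := by
  refine summable_of_sum_le (c := 1) (fun k => hA0 k r s) ?_
  intro u
  let N : ℕ := ∑ k ∈ u, k.natAbs
  have hN : ∀ k ∈ u, 0 ≤ k + (N : ℤ) := by
    intro k hk
    have h1 : k.natAbs ≤ N :=
      Finset.single_le_sum (f := fun k : ℤ => k.natAbs) (fun _ _ => Nat.zero_le _) hk
    omega
  let φ : ℤ → S m := fun k => ((k + (N : ℤ)).toNat + 1, s)
  have hinj : Set.InjOn φ (u : Set ℤ) := by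
    intro a ha b hb hab
    have h1 := hN a ha
    have h2 := hN b hb
    have h3 : (a + (N : ℤ)).toNat + 1 = (b + (N : ℤ)).toNat + 1 := congrArg Prod.fst hab
    omega
  have h1 : ∑ k ∈ u, A k r s = ∑ x ∈ u.image φ, P A B (N + 1, r) x := by
    rw [Finset.sum_image hinj]
    refine Finset.sum_congr rfl fun k hk => ?_
    have h2 := hN k hk
    show A k r s = A ((((k + (N : ℤ)).toNat : ℕ) : ℤ) - (N : ℤ)) r s
    congr 1
    have : (((k + (N : ℤ)).toNat : ℕ) : ℤ) - (N : ℤ) = k := by omega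
    rw [this]
  rw [h1]
  exact sum_le_hasSum _ (fun x _ => hP.1 _ x) (hP.2 (N + 1, r))

theorem mulVec_mono' {m : ℕ} {M : Matrix (Fin m) (Fin m) ℝ} (hM : ∀ r s, 0 ≤ M r s)
    {v w : Fin m → ℝ} (h : ∀ s, v s ≤ w s) (r : Fin m) : M.mulVec v r ≤ M.mulVec w r := by
  simp only [Matrix.mulVec, dotProduct]
  exact Finset.sum_le_sum fun s _ => mul_le_mul_of_nonneg_left (h s) (hM r s)

theorem pow_nonneg' {m : ℕ} {M : Matrix (Fin m) (Fin m) ℝ} (hM : ∀ r s, 0 ≤ M r s) (n : ℕ) :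
    ∀ r s, 0 ≤ (M ^ n) r s := by
  induction n with
  | zero => intro r s; rw [pow_zero, Matrix.one_apply]; split_ifs <;> norm_num
  | succ n ih =>
    intro r s
    rw [pow_succ, Matrix.mul_apply]
    exact Finset.sum_nonneg fun k _ => mul_nonneg (ih _ _) (hM _ _)

theorem max_principle {m : ℕ} {M : Matrix (Fin m) (Fin m) ℝ} (hM : ∀ r s, 0 ≤ M r s)
    (hirr : MatIrreducible M) (hle : ∀ r, M.mulVec 1 r ≤ 1) (hne : M.mulVec 1 ≠ 1)
    (w : Fin m → ℝ) (hw : ∀ r, M.mulVec w r ≤ w r) : ∀ r, 0 ≤ w r := by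
  intro t
  have hpow : ∀ n r, (M ^ n).mulVec w r ≤ w r := by
    intro n
    induction n with
    | zero => intro r; simp
    | succ n ih =>
      intro r
      rw [pow_succ, ← Matrix.mulVec_mulVec]
      exact (mulVec_mono' (pow_nonneg' hM n) hw r).trans (ih r)
  have hpow1 : ∀ n r, (M ^ n).mulVec 1 r ≤ 1 := by
    intro n
    induction n with
    | zero => intro r; simp
    | succ n ih =>
      intro r
      rw [pow_succ, ← Matrix.mulVec_mulVec]
      exact (mulVec_mono' (pow_nonneg' hM n) (w := 1) (by simpa using hle) r).trans (ih r)
  have : Nonempty (Fin m) := ⟨t⟩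
  obtain ⟨r, hr⟩ := Finite.exists_min w
  by_contra! hneg
  have hwr : w r < 0 := (hr t).trans_lt hneg
  obtain ⟨r0, hr0⟩ : ∃ r0, M.mulVec 1 r0 ≠ 1 := by
    by_contra! h
    exact hne (funext h)
  have hr0 : M.mulVec 1 r0 < 1 := lt_of_le_of_ne (hle r0) hr0
  obtain ⟨n, _, hn⟩ := hirr r r0
  have hlt : (M ^ (n + 1)).mulVec 1 r < 1 := by
    refine lt_of_lt_of_le ?_ (hpow1 n r)
    rw [pow_succ, ← Matrix.mulVec_mulVec]
    simp only [Matrix.mulVec, dotProduct] at hle hr0 ⊢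
    refine Finset.sum_lt_sum (fun s _ => mul_le_mul_of_nonneg_left (hle s) (pow_nonneg' hM n r s))
      ⟨r0, Finset.mem_univ _, mul_lt_mul_of_pos_left hr0 hn⟩
  have h1 := hpow (n + 1) r
  have h2 : w r * (M ^ (n + 1)).mulVec 1 r ≤ (M ^ (n + 1)).mulVec w r := by
    have := mulVec_mono' (pow_nonneg' hM (n + 1)) (v := w r • (1 : Fin m → ℝ)) (w := w)
      (by simpa using hr) r
    rwa [Matrix.mulVec_smul] at this
  nlinarith

/-- For a `GI/G/1`-type Markov chain whose phase matrix `A` is irreducible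
and not stochastic, the iterates `X_i^{(n)}` are bounded by `(I - A)⁻¹ e`, and hence so is the
minimal nonnegative solution `X_i = limₙ X_i^{(n)}`. -/
theorem minimal_solution_bounded {m : ℕ} (hm : 0 < m)
    (A B : ℤ → Matrix (Fin m) (Fin m) ℝ)
    (hA0 : ∀ k r s, 0 ≤ A k r s) (hB0 : ∀ k r s, 0 ≤ B k r s)
    (hP : Stochastic (P A B))
    (hphaseirr : MatIrreducible (matA A))
    (hle : ∀ r, (matA A).mulVec 1 r ≤ 1)
    (hne : (matA A).mulVec 1 ≠ 1) :
    (∀ (n i : ℕ), 1 ≤ i → ∀ j : Fin m,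
        Xseq (P A B) n i j ≤ ((1 - matA A)⁻¹).mulVec 1 j) ∧
      ∀ X : ℕ → Fin m → ℝ,
        (∀ (i : ℕ) (j : Fin m), Tendsto (fun n => Xseq (P A B) n i j) atTop (nhds (X i j))) →
        ∀ i : ℕ, 1 ≤ i → ∀ j : Fin m, X i j ≤ ((1 - matA A)⁻¹).mulVec 1 j := by
  have hS := summable_A A B hA0 hP
  have hM : ∀ r s, 0 ≤ matA A r s := fun r s => tsum_nonneg fun k => hA0 k r s
  have hmax := max_principle hM hphaseirr hle hne
  have hunit : IsUnit (1 - matA A) := by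
    rw [← Matrix.mulVec_injective_iff_isUnit]
    intro x y hxy
    have h0 : (matA A).mulVec (x - y) = x - y := by
      simp only [Matrix.sub_mulVec, Matrix.one_mulVec] at hxy
      rw [Matrix.mulVec_sub]
      funext r
      have := congrFun hxy r
      simp only [Pi.sub_apply] at this ⊢
      linarith
    have h1 := hmax (x - y) (fun r => by rw [h0])
    have h2 := hmax (-(x - y)) (fun r => by rw [Matrix.mulVec_neg, h0])
    funext r
    have h1 := h1 r
    have h2 := h2 r
    simp only [Pi.sub_apply, Pi.neg_apply] at h1 h2
    linarith
  set v := ((1 - matA A)⁻¹).mulVec 1 with hv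
  have hfix : ∀ r, (matA A).mulVec v r + 1 = v r := by
    have h1 : (1 - matA A).mulVec v = 1 := by
      rw [hv, Matrix.mulVec_mulVec, Matrix.mul_nonsing_inv _ ((Matrix.isUnit_iff_isUnit_det _).1 hunit),
        Matrix.one_mulVec]
    intro r
    have := congrFun h1 r
    simp only [Matrix.sub_mulVec, Matrix.one_mulVec, Pi.sub_apply, Pi.one_apply] at this
    linarith
  have hv0 : ∀ r, 0 ≤ v r := hmax v fun r => by linarith [hfix r]
  have key : ∀ n, (∀ j, Xseq (P A B) n 0 j = 0) ∧ (∀ i j, 0 ≤ Xseq (P A B) n i j) ∧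
      ∀ i j, Xseq (P A B) n i j ≤ v j := by
    intro n
    induction n with
    | zero =>
      refine ⟨fun j => rfl, fun i j => le_rfl, fun i j => hv0 j⟩
    | succ n ih =>
      obtain ⟨ih0, ihn, ihv⟩ := ih
      refine ⟨fun j => rfl, ?_, ?_⟩
      · intro i j
        rcases i with _ | i
        · exact le_rfl
        · simp only [Xseq, Nat.add_eq_zero_iff, one_ne_zero, and_false, if_false]
          refine add_nonneg (tsum_nonneg fun k => ?_) zero_le_one
          split_ifs
          · exact le_rfl
          · exact Finset.sum_nonneg fun s _ => mul_nonneg (hP.1 _ _) (ihn _ _)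
      · intro i j
        rcases i with _ | i
        · exact hv0 j
        · simp only [Xseq, Nat.add_eq_zero_iff, one_ne_zero, and_false, if_false]
          rw [← hfix j]
          gcongr
          let G : ℤ → ℝ := fun k => ∑ s, A k j s * v s
          have hG : HasSum G ((matA A).mulVec v j) :=
            hasSum_sum fun s _ => (hS j s).hasSum.mul_right (v s)
          have hG0 : ∀ k, 0 ≤ G k := fun k =>
            Finset.sum_nonneg fun s _ => mul_nonneg (hA0 _ _ _) (hv0 _)
          let φ : ℕ → ℤ := fun k => (k : ℤ) - ((i : ℤ) + 1)
          have hφ : Function.Injective φ := by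
            intro a b hab
            simp only [φ] at hab
            omega
          have hGs : Summable (G ∘ φ) := hG.summable.comp_injective hφ
          have hfg : ∀ k : ℕ, (if k = i + 1 then 0 else
              ∑ s : Fin m, P A B (i + 1, j) (k, s) * Xseq (P A B) n k s) ≤ (G ∘ φ) k := by
            intro k
            split_ifs
            · exact hG0 _
            · rcases k with _ | k
              · simp only [ih0, mul_zero, Finset.sum_const_zero]
                exact hG0 _
              · refine Finset.sum_le_sum fun s _ => ?_
                have h1 : P A B (i + 1, j) (k + 1, s) = A (φ (k + 1)) j s := by
                  show A ((k : ℤ) - (i : ℤ)) j s = A (((k + 1 : ℕ) : ℤ) - ((i : ℤ) + 1)) j s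
                  have h2 : ((k + 1 : ℕ) : ℤ) - ((i : ℤ) + 1) = (k : ℤ) - (i : ℤ) := by
                    push_cast
                    ring
                  rw [h2]
                rw [h1]
                exact mul_le_mul_of_nonneg_left (ihv _ _) (hA0 _ _ _)
          have hf0 : ∀ k : ℕ, 0 ≤ (if k = i + 1 then 0 else
              ∑ s : Fin m, P A B (i + 1, j) (k, s) * Xseq (P A B) n k s) := by
            intro k
            split_ifs
            · exact le_rfl
            · exact Finset.sum_nonneg fun s _ => mul_nonneg (hP.1 _ _) (ihn _ _)
          calc _ ≤ ∑' k, (G ∘ φ) k :=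
                (Summable.of_nonneg_of_le hf0 hfg hGs).tsum_le_tsum hfg hGs
            _ ≤ ∑' k, G k := tsum_comp_le_tsum_of_inj hG.summable hG0 hφ
            _ = _ := hG.tsum_eq
  refine ⟨fun n i _ j => (key n).2.2 i j, fun X hX i _ j => ?_⟩
  exact le_of_tendsto' (hX i j) fun n => (key n).2.2 i j

end GIG1
end
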